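/- There exists an absolute constant c > 0 and an absolute constant C > 0 such that for all sufficiently large integers N the following holds: if A is a subset of {1, ..., N} containing no solutions to a - b = n^2 with a, b in A and n a positive integer, then |A| ≤ C · N / (log N)^{c · log log log N}. -/

import Mathlib

/-- `A` has no non-zero square differences: no `a, b ∈ A` and `n ≥ 1` with `a - b = n ^ 2`. -/
def NoSquareDiff (A : Finset ℕ) : Prop :=
  ∀ a ∈ A, ∀ b ∈ A, ∀ n : ℕ, 0 < n → a ≠ b + n ^ 2

open Finset

/-- The additive character `x ↦ exp (2 * π * i * x)` on the reals. -/
noncomputable def expi (x : ℝ) : ℂ := Complex.exp ((2 * Real.pi * x : ℝ) * Complex.I)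

theorem norm_expi (x : ℝ) : ‖expi x‖ = 1 := Complex.norm_exp_ofReal_mul_I _

theorem expi_zero : expi 0 = 1 := by simp [expi]

theorem expi_add (x y : ℝ) : expi (x + y) = expi x * expi y := by
  rw [expi, expi, expi, ← Complex.exp_add]
  push_cast
  ring_nf

theorem expi_neg (x : ℝ) : expi (-x) = (starRingEnd ℂ) (expi x) := by
  rw [expi, expi, ← Complex.exp_conj, map_mul, Complex.conj_ofReal, Complex.conj_I]
  push_cast
  ring_nf

theorem expi_int (n : ℤ) : expi n = 1 := by
  rw [expi, Complex.exp_eq_one_iff]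
  exact ⟨n, by push_cast; ring⟩

theorem expi_nat_mul (n : ℕ) (x : ℝ) : expi (n * x) = expi x ^ n := by
  rw [expi, expi, ← Complex.exp_nat_mul]
  push_cast
  ring_nf

theorem expi_sum {ι : Type*} (s : Finset ι) (f : ι → ℝ) :
    expi (∑ i ∈ s, f i) = ∏ i ∈ s, expi (f i) := by
  classical
  induction s using Finset.induction_on with
  | empty => simp [expi_zero]
  | insert a s ha ih => rw [sum_insert ha, prod_insert ha, expi_add, ih]

theorem expi_eq_one_iff (x : ℝ) : expi x = 1 ↔ ∃ n : ℤ, x = n := by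
  rw [expi, Complex.exp_eq_one_iff]
  constructor
  · rintro ⟨n, hn⟩
    refine ⟨n, ?_⟩
    have h2 : ((x : ℝ) : ℂ) = (n : ℂ) := by
      have h3 : (2 * (Real.pi : ℂ) * Complex.I) ≠ 0 := by simp [Real.pi_ne_zero]
      apply mul_right_cancel₀ h3
      push_cast at hn
      linear_combination hn
    exact_mod_cast h2
  · rintro ⟨n, rfl⟩
    exact ⟨n, by push_cast; ring⟩

/-- Orthogonality of the characters of `ℤ / M`. -/
theorem sum_expi_div {M : ℕ} (hM : 0 < M) (k : ℤ) :
    ∑ x ∈ range M, expi (k * x / M) = if (M : ℤ) ∣ k then (M : ℂ) else 0 := by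
  have hM' : (M : ℝ) ≠ 0 := by positivity
  have h1 : ∀ x : ℕ, expi (k * x / M) = expi (k / M) ^ x := by
    intro x
    rw [← expi_nat_mul]
    congr 1
    ring
  simp_rw [h1]
  split_ifs with h
  · obtain ⟨c, rfl⟩ := h
    have : expi (((M : ℤ) * c : ℤ) / M : ℝ) = 1 := by
      rw [expi_eq_one_iff]
      exact ⟨c, by push_cast; field_simp⟩
    rw [this]
    simp
  · have hne : expi (k / M : ℝ) ≠ 1 := by
      intro h2
      obtain ⟨n, hn⟩ := (expi_eq_one_iff _).1 h2
      apply h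
      refine ⟨n, ?_⟩
      field_simp at hn
      exact_mod_cast hn
    rw [geom_sum_eq hne, ← expi_nat_mul]
    have : (M : ℝ) * (k / M) = (k : ℤ) := by field_simp
    rw [this, expi_int]
    simp

/-- Parseval's identity for an orthogonal family of functions. -/
theorem sum_norm_sq_of_orthogonal {κ X : Type*} [DecidableEq κ] (K : Finset κ) (S : Finset X)
    (χ : κ → X → ℂ) (V : ℝ) (c : κ → ℂ)
    (horth : ∀ k ∈ K, ∀ l ∈ K,
      ∑ x ∈ S, χ k x * (starRingEnd ℂ) (χ l x) = if k = l then (V : ℂ) else 0) :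
    ∑ x ∈ S, ‖∑ k ∈ K, c k * χ k x‖ ^ 2 = V * ∑ k ∈ K, ‖c k‖ ^ 2 := by
  have key : ((∑ x ∈ S, ‖∑ k ∈ K, c k * χ k x‖ ^ 2 : ℝ) : ℂ)
      = ((V * ∑ k ∈ K, ‖c k‖ ^ 2 : ℝ) : ℂ) := by
    push_cast
    have h1 : ∀ x ∈ S, ((‖∑ k ∈ K, c k * χ k x‖ : ℂ)) ^ 2
        = ∑ k ∈ K, ∑ l ∈ K, c k * (starRingEnd ℂ) (c l) *
          (χ k x * (starRingEnd ℂ) (χ l x)) := by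
      intro x _
      rw [← Complex.mul_conj', map_sum, sum_mul_sum]
      refine sum_congr rfl fun k _ => sum_congr rfl fun l _ => ?_
      rw [map_mul]
      ring
    rw [sum_congr rfl h1, sum_comm, mul_sum]
    refine sum_congr rfl fun k hk => ?_
    rw [sum_comm]
    have h2 : ∀ l ∈ K, ∑ x ∈ S, c k * (starRingEnd ℂ) (c l) *
          (χ k x * (starRingEnd ℂ) (χ l x))
        = if k = l then c k * (starRingEnd ℂ) (c l) * V else 0 := by
      intro l hl
      rw [← mul_sum, horth k hk l hl]
      split_ifs <;> simp
    rw [sum_congr rfl h2, sum_ite_eq, if_pos hk, Complex.mul_conj']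
    ring
  exact_mod_cast key

theorem sum_norm_sq_fourier {κ : Type*} [DecidableEq κ] (K : Finset κ) {M : ℕ} (hM : 0 < M)
    (φ : κ → ℤ) (hφ : ∀ k ∈ K, ∀ l ∈ K, (M : ℤ) ∣ φ k - φ l → k = l) (c : κ → ℂ) :
    ∑ x ∈ range M, ‖∑ k ∈ K, c k * expi (φ k * x / M)‖ ^ 2 = M * ∑ k ∈ K, ‖c k‖ ^ 2 := by
  refine sum_norm_sq_of_orthogonal K (range M) (fun k x => expi (φ k * x / M)) M c ?_
  intro k hk l hl
  have h1 : ∀ x ∈ range M, expi (φ k * x / M) * (starRingEnd ℂ) (expi (φ l * x / M))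
      = expi ((φ k - φ l : ℤ) * x / M) := by
    intro x _
    rw [← expi_neg, ← expi_add]
    congr 1
    push_cast
    ring
  rw [sum_congr rfl h1, sum_expi_div hM]
  by_cases h : k = l
  · simp [h]
  · rw [if_neg h, if_neg]
    exact fun h2 => h (hφ k hk l hl h2)

/-- The two-dimensional Parseval identity on `ℤ / q × ℤ / T`. -/
theorem sum_norm_sq_fourier_prod {κ : Type*} [DecidableEq κ] (K : Finset κ) {q T : ℕ}
    (hq : 0 < q) (hT : 0 < T) (a j : κ → ℤ)
    (hinj : ∀ k ∈ K, ∀ l ∈ K, (q : ℤ) ∣ a k - a l → (T : ℤ) ∣ j k - j l → k = l) (c : κ → ℂ) :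
    ∑ t ∈ range T, ∑ x ∈ range q, ‖∑ k ∈ K, c k * (expi (a k * x / q) * expi (j k * t / T))‖ ^ 2
      = q * T * ∑ k ∈ K, ‖c k‖ ^ 2 := by
  rw [← sum_product']
  refine sum_norm_sq_of_orthogonal K (range T ×ˢ range q)
    (fun k x => expi (a k * x.2 / q) * expi (j k * x.1 / T)) (q * T) c ?_
  intro k hk l hl
  have h1 : ∀ x ∈ range T ×ˢ range q,
      expi (a k * x.2 / q) * expi (j k * x.1 / T) *
        (starRingEnd ℂ) (expi (a l * x.2 / q) * expi (j l * x.1 / T))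
      = expi ((j k - j l : ℤ) * x.1 / T) * expi ((a k - a l : ℤ) * x.2 / q) := by
    intro x _
    rw [map_mul, ← expi_neg, ← expi_neg, ← expi_add, ← expi_add, ← expi_add, ← expi_add]
    congr 1
    push_cast
    ring
  rw [sum_congr rfl h1, sum_product]
  simp_rw [← mul_sum]
  rw [← sum_mul, sum_expi_div hT, sum_expi_div hq]
  by_cases h : k = l
  · simp [h, mul_comm]
  · rw [if_neg h]
    by_cases h2 : (q : ℤ) ∣ a k - a l
    · rw [if_neg (fun h3 => h (hinj k hk l hl h2 h3)), zero_mul]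
    · rw [if_neg h2, mul_zero]

theorem Nat.Prime.pow_dvd_of_pow_dvd_lcm {p k a b : ℕ} (hp : p.Prime) (ha : a ≠ 0) (hb : b ≠ 0)
    (h : p ^ k ∣ Nat.lcm a b) : p ^ k ∣ a ∨ p ^ k ∣ b := by
  rw [hp.pow_dvd_iff_le_factorization (Nat.lcm_ne_zero ha hb), Nat.factorization_lcm ha hb] at h
  rw [hp.pow_dvd_iff_le_factorization ha, hp.pow_dvd_iff_le_factorization hb]
  simpa using h

theorem Nat.dvd_of_gcd_dvd_of_gcd_dvd {q a b d : ℕ} (ha : a ≠ 0) (hb : b ≠ 0)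
    (h : q ∣ Nat.lcm a b) (h1 : Nat.gcd q a ∣ d) (h2 : Nat.gcd q b ∣ d) : q ∣ d := by
  rw [Nat.dvd_iff_prime_pow_dvd_dvd]
  intro p k hp hk
  rcases hp.pow_dvd_of_pow_dvd_lcm ha hb (hk.trans h) with h3 | h3
  · exact (Nat.dvd_gcd hk h3).trans h1
  · exact (Nat.dvd_gcd hk h3).trans h2

/-- The Chinese remainder theorem as an identity between sums, for moduli which need not be
coprime. -/
theorem sum_range_lcm {l M : ℕ} (hl : 0 < l) (hM : 0 < M) (u v : ℕ → ℝ)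
    (hu : ∀ x y, x ≡ y [MOD l] → u x = u y) (hv : ∀ x y, x ≡ y [MOD M] → v x = v y) :
    ∑ z ∈ range (Nat.lcm l M), u z * v z
      = ∑ y ∈ range M, ∑ x ∈ range l with x ≡ y [MOD Nat.gcd l M], u x * v y := by
  classical
  simp_rw [sum_filter]
  rw [← sum_product', ← sum_filter]
  refine sum_bij (fun z _ => (z % M, z % l)) ?_ ?_ ?_ ?_
  · intro z _
    simp only [mem_filter, mem_product, mem_range]
    exact ⟨⟨Nat.mod_lt _ hM, Nat.mod_lt _ hl⟩,
      ((Nat.mod_modEq z l).of_dvd (Nat.gcd_dvd_left l M)).trans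
        ((Nat.mod_modEq z M).of_dvd (Nat.gcd_dvd_right l M)).symm⟩
  · intro z hz w hw h
    simp only [Prod.mk.injEq] at h
    have h1 : z ≡ w [MOD Nat.lcm l M] := Nat.mod_lcm h.2 h.1
    exact h1.eq_of_lt_of_lt (mem_range.1 hz) (mem_range.1 hw)
  · rintro ⟨y, x⟩ hyx
    simp only [mem_filter, mem_product, mem_range] at hyx
    refine ⟨Nat.chineseRemainder' hyx.2, ?_, ?_⟩
    · exact mem_range.2 (Nat.chineseRemainder'_lt_lcm hyx.2 hl.ne' hM.ne')
    · have h := (Nat.chineseRemainder' hyx.2).2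
      exact Prod.ext (Eq.trans h.2 (Nat.mod_eq_of_lt hyx.1.1))
        (Eq.trans h.1 (Nat.mod_eq_of_lt hyx.1.2))
  · intro z _
    simp only
    rw [hu _ _ (Nat.mod_modEq z l), hv _ _ (Nat.mod_modEq z M)]

theorem Nat.dvd_of_modEq_chain {d q M x x' y y' : ℕ} (hd : 0 < d) (hM : 0 < M)
    (hqd : q ∣ Nat.lcm d M) (h1 : x ≡ y [MOD d]) (h2 : x' ≡ y' [MOD q])
    (h3 : x ≡ x' [MOD Nat.gcd (Nat.lcm d q) M])
    (h4 : y ≡ y' [MOD Nat.gcd (Nat.lcm d q) M]) : x ≡ y [MOD q] := by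
  rw [Nat.modEq_iff_dvd] at *
  rw [← Int.natAbs_dvd_natAbs, Int.natAbs_natCast]
  refine Nat.dvd_of_gcd_dvd_of_gcd_dvd hd.ne' hM.ne' hqd ?_ ?_
  · rw [← Int.natCast_dvd]
    exact (Int.natCast_dvd_natCast.2 (Nat.gcd_dvd_right q d)).trans h1
  · rw [← Int.natCast_dvd]
    have h5 : Nat.gcd q M ∣ Nat.gcd (Nat.lcm d q) M :=
      Nat.gcd_dvd_gcd_of_dvd_left _ (Nat.dvd_lcm_right d q)
    have h6 := (Int.natCast_dvd_natCast.2 h5).trans h3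
    have h7 := (Int.natCast_dvd_natCast.2 h5).trans h4
    have h8 := (Int.natCast_dvd_natCast.2 (Nat.gcd_dvd_left q M)).trans h2
    have : (y : ℤ) - x = (x' - x) + (y' - x') - (y' - y) := by ring
    rw [this]
    exact _root_.dvd_sub (_root_.dvd_add h6 h8) h7

/-- Cauchy–Schwarz for the push-forward to `ℤ / gcd (lcm d q) M` of the product of a function on
`ℤ / d` and a function on `ℤ / q`. -/
theorem sum_sq_merge_le {d q M : ℕ} (hd : 0 < d) (hq : 0 < q) (hM : 0 < M)
    (hdq : d ∣ Nat.lcm q M) (hqd : q ∣ Nat.lcm d M) (h f : ℕ → ℝ)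
    (hh : ∀ x y, x ≡ y [MOD d] → h x = h y) (hf : ∀ x y, x ≡ y [MOD q] → f x = f y) :
    ∑ y ∈ range (Nat.gcd (Nat.lcm d q) M),
        (∑ x ∈ range (Nat.lcm d q) with x ≡ y [MOD Nat.gcd (Nat.lcm d q) M], h x * f x) ^ 2
      ≤ (∑ x ∈ range d, h x ^ 2) * ∑ x ∈ range q, f x ^ 2 := by
  classical
  set l := Nat.lcm d q with hl
  set e := Nat.gcd l M with he
  have hlpos : 0 < l := Nat.lcm_pos hd hq
  have hepos : 0 < e := Nat.gcd_pos_of_pos_left _ hlpos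
  have step1 : ∀ y ∈ range e,
      (∑ x ∈ range l with x ≡ y [MOD e], h x * f x) ^ 2
        ≤ ∑ x ∈ range l with x ≡ y [MOD e], ∑ x' ∈ range l with x' ≡ y [MOD e],
            h x ^ 2 * f x' ^ 2 := by
    intro y _
    rw [← sum_mul_sum]
    exact sum_mul_sq_le_sq_mul_sq _ _ _
  refine (sum_le_sum step1).trans ?_
  rw [sum_mul_sum, ← sum_product']
  have h2 : ∑ y ∈ range e, ∑ x ∈ range l with x ≡ y [MOD e], ∑ x' ∈ range l with x' ≡ y [MOD e],
        h x ^ 2 * f x' ^ 2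
      = ∑ p ∈ ((range e ×ˢ (range l ×ˢ range l)).filter
          fun p => p.2.1 ≡ p.1 [MOD e] ∧ p.2.2 ≡ p.1 [MOD e]), h p.2.1 ^ 2 * f p.2.2 ^ 2 := by
    rw [sum_filter, sum_product]
    refine sum_congr rfl fun y _ => ?_
    rw [sum_product, sum_filter]
    refine sum_congr rfl fun x _ => ?_
    rw [sum_filter]
    by_cases hx : x ≡ y [MOD e]
    · simp [hx]
    · simp [hx]
  rw [h2]
  set P := ((range e ×ˢ (range l ×ˢ range l)).filter
          fun p => p.2.1 ≡ p.1 [MOD e] ∧ p.2.2 ≡ p.1 [MOD e]) with hP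
  have hinj : Set.InjOn (fun p : ℕ × ℕ × ℕ => (p.2.1 % d, p.2.2 % q)) (P : Set (ℕ × ℕ × ℕ)) := by
    rintro ⟨y, x, x'⟩ hp ⟨z, w, w'⟩ hp' heq
    simp only [hP, coe_filter, mem_product, mem_range, Set.mem_ofPred_eq] at hp hp'
    simp only [Prod.mk.injEq] at heq
    obtain ⟨⟨hy, hx, hx'⟩, h1, h2⟩ := hp
    obtain ⟨⟨hz, hw, hw'⟩, h3, h4⟩ := hp'
    have e1 : x ≡ w [MOD d] := heq.1
    have e2 : x' ≡ w' [MOD q] := heq.2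
    have c1 : x ≡ x' [MOD e] := h1.trans h2.symm
    have c2 : w ≡ w' [MOD e] := h3.trans h4.symm
    have e3 : x ≡ w [MOD q] := Nat.dvd_of_modEq_chain hd hM hqd e1 e2 c1 c2
    have e4 : x' ≡ w' [MOD d] := by
      refine Nat.dvd_of_modEq_chain hq hM hdq e2 e1 ?_ ?_
      · rw [Nat.lcm_comm q d]; exact c1.symm
      · rw [Nat.lcm_comm q d]; exact c2.symm
    have f1 : x = w := (Nat.mod_lcm e1 e3).eq_of_lt_of_lt hx hw
    have f2 : x' = w' := (Nat.mod_lcm e4 e2).eq_of_lt_of_lt hx' hw'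
    subst f1 f2
    have f3 : y = z := (h1.symm.trans h3).eq_of_lt_of_lt hy hz
    rw [f3]
  calc ∑ p ∈ P, h p.2.1 ^ 2 * f p.2.2 ^ 2
      = ∑ r ∈ P.image (fun p : ℕ × ℕ × ℕ => (p.2.1 % d, p.2.2 % q)), h r.1 ^ 2 * f r.2 ^ 2 := by
        rw [sum_image hinj]
        refine sum_congr rfl fun p _ => ?_
        simp only
        rw [hh _ _ (Nat.mod_modEq p.2.1 d), hf _ _ (Nat.mod_modEq p.2.2 q)]
    _ ≤ ∑ r ∈ range d ×ˢ range q, h r.1 ^ 2 * f r.2 ^ 2 := by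
        refine sum_le_sum_of_subset_of_nonneg ?_ fun _ _ _ => by positivity
        intro r hr
        obtain ⟨p, _, rfl⟩ := mem_image.1 hr
        simp [Nat.mod_lt _ hd, Nat.mod_lt _ hq]

theorem Finset.lcm_pos_of_pos {ι : Type*} (s : Finset ι) (q : ι → ℕ) (hq : ∀ i ∈ s, 0 < q i) :
    0 < s.lcm q := by
  rw [Nat.pos_iff_ne_zero, Ne, Finset.lcm_eq_zero_iff]
  simp only [not_exists, not_and]
  exact fun i hi => Nat.pos_iff_ne_zero.1 (hq i hi)

/-- If each modulus divides the least common multiple of the other ones, then the sum of a product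
of periodic functions is at most the product of their `ℓ²` norms; the function `h` plays the role
of one more factor. -/
theorem sq_sum_mul_prod_le {ι : Type*} [DecidableEq ι] (s : Finset ι) (q : ι → ℕ) (f : ι → ℕ → ℝ)
    (hq : ∀ i ∈ s, 0 < q i) (hf : ∀ i ∈ s, ∀ x y, x ≡ y [MOD q i] → f i x = f i y) :
    ∀ (d : ℕ) (h : ℕ → ℝ), 0 < d → (∀ x y, x ≡ y [MOD d] → h x = h y) → d ∣ s.lcm q →
      (∀ i ∈ s, q i ∣ Nat.lcm d ((s.erase i).lcm q)) →
      (∑ x ∈ range (s.lcm q), h x * ∏ i ∈ s, f i x) ^ 2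
        ≤ (∑ x ∈ range d, h x ^ 2) * ∏ i ∈ s, ∑ x ∈ range (q i), f i x ^ 2 := by
  induction s using Finset.induction_on with
  | empty =>
    intro d h hd _ hd1 _
    have : d = 1 := by simpa using hd1
    subst this
    simp
  | insert i s hi ih =>
    intro d h hd hh hdl hadm
    have hqi : 0 < q i := hq i (mem_insert_self i s)
    have hfi := hf i (mem_insert_self i s)
    have hq' : ∀ j ∈ s, 0 < q j := fun j hj => hq j (mem_insert_of_mem hj)
    have hf' : ∀ j ∈ s, ∀ x y, x ≡ y [MOD q j] → f j x = f j y :=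
      fun j hj => hf j (mem_insert_of_mem hj)
    set M := s.lcm q with hMdef
    have hM : 0 < M := Finset.lcm_pos_of_pos s q hq'
    have hins : (insert i s).lcm q = Nat.lcm (q i) M := by
      rw [Finset.lcm_insert]; rfl
    have hqd : q i ∣ Nat.lcm d M := by
      have := hadm i (mem_insert_self i s)
      rwa [erase_insert hi] at this
    rw [hins] at hdl ⊢
    set l := Nat.lcm d (q i) with hl
    have hlpos : 0 < l := Nat.lcm_pos hd hqi
    set e := Nat.gcd l M with he
    have hepos : 0 < e := Nat.gcd_pos_of_pos_left _ hlpos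
    have hlM : Nat.lcm (q i) M = Nat.lcm l M := by
      apply Nat.dvd_antisymm
      · exact Nat.lcm_dvd ((Nat.dvd_lcm_right d (q i)).trans (Nat.dvd_lcm_left _ _))
          (Nat.dvd_lcm_right _ _)
      · exact Nat.lcm_dvd (Nat.lcm_dvd hdl (Nat.dvd_lcm_left _ _)) (Nat.dvd_lcm_right _ _)
    have hlhs : ∑ x ∈ range (Nat.lcm (q i) M), h x * ∏ j ∈ insert i s, f j x
        = ∑ y ∈ range M, (∑ x ∈ range l with x ≡ y [MOD e], h x * f i x) * ∏ j ∈ s, f j y := by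
      rw [hlM]
      calc ∑ x ∈ range (Nat.lcm l M), h x * ∏ j ∈ insert i s, f j x
          = ∑ x ∈ range (Nat.lcm l M), (h x * f i x) * ∏ j ∈ s, f j x := by
            refine sum_congr rfl fun x _ => ?_
            rw [prod_insert hi, mul_assoc]
        _ = _ := by
            rw [sum_range_lcm hlpos hM (fun x => h x * f i x) (fun x => ∏ j ∈ s, f j x)]
            · refine sum_congr rfl fun y _ => ?_
              rw [sum_mul]
            · intro x y hxy
              rw [hh x y (hxy.of_dvd (Nat.dvd_lcm_left _ _)),
                hfi x y (hxy.of_dvd (Nat.dvd_lcm_right _ _))]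
            · intro x y hxy
              exact prod_congr rfl fun j hj =>
                hf' j hj x y (hxy.of_dvd (Finset.dvd_lcm hj))
    rw [hlhs]
    have hmain := ih hq' hf' e (fun y => ∑ x ∈ range l with x ≡ y [MOD e], h x * f i x) hepos
      (by
        intro y z hyz
        refine sum_congr (filter_congr fun x _ => ?_) fun _ _ => rfl
        exact ⟨fun hx => hx.trans hyz, fun hx => hx.trans hyz.symm⟩)
      (Nat.gcd_dvd_right _ _)
      (by
        intro j hj
        have hji : j ≠ i := fun hji => hi (hji ▸ hj)
        have h1 := hadm j (mem_insert_of_mem hj)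
        rw [erase_insert_of_ne (Ne.symm hji), Finset.lcm_insert] at h1
        have hE : 0 < (s.erase j).lcm q :=
          Finset.lcm_pos_of_pos _ q fun k hk => hq' k (mem_of_mem_erase hk)
        have h2 : q j ∣ Nat.lcm l ((s.erase j).lcm q) := by
          rw [hl, Nat.lcm_assoc]
          exact h1
        refine Nat.dvd_of_gcd_dvd_of_gcd_dvd hlpos.ne' hE.ne' h2 ?_ ?_
        · refine dvd_trans ?_ (Nat.dvd_lcm_left _ _)
          exact Nat.dvd_gcd (Nat.gcd_dvd_right _ _)
            ((Nat.gcd_dvd_left _ _).trans (Finset.dvd_lcm hj))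
        · exact (Nat.gcd_dvd_right _ _).trans (Nat.dvd_lcm_right _ _))
    refine hmain.trans ?_
    rw [prod_insert hi, ← mul_assoc]
    refine mul_le_mul_of_nonneg_right ?_ (prod_nonneg fun j _ => sum_nonneg fun _ _ => sq_nonneg _)
    exact sum_sq_merge_le hd hqi hM hdl hqd h (f i) hh hfi

/-- If each modulus divides the least common multiple of the other ones, the sum of a product of
periodic functions of two variables is at most the product of their `ℓ²` norms. -/
theorem sum_sum_prod_le {ι : Type*} [DecidableEq ι] [Fintype ι] (hcard : 2 ≤ Fintype.card ι)
    (q : ι → ℕ) {T : ℕ} (hT : 0 < T) (F : ι → ℕ → ℕ → ℝ) (hq : ∀ i, 0 < q i)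
    (hF : ∀ i t x y, x ≡ y [MOD q i] → F i t x = F i t y)
    (hadm : ∀ i, q i ∣ (univ.erase i).lcm q) :
    ∑ t ∈ range T, ∑ x ∈ range (univ.lcm q), ∏ i, F i t x
      ≤ ∏ i, √(∑ t ∈ range T, ∑ x ∈ range (q i), F i t x ^ 2) := by
  classical
  have h1 : ∀ t, ∑ x ∈ range (univ.lcm q), ∏ i, F i t x
      ≤ ∏ i, √(∑ x ∈ range (q i), F i t x ^ 2) := by
    intro t
    have h2 := sq_sum_mul_prod_le univ q (fun i => F i t) (fun i _ => hq i)
      (fun i _ => hF i t) 1 (fun _ => 1) one_pos (fun _ _ _ => rfl) (one_dvd _)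
      (fun i _ => by rw [Nat.lcm_one_left]; exact hadm i)
    simp only [one_mul, range_one, sum_singleton, one_pow] at h2
    have h3 := Real.le_sqrt_of_sq_le h2
    rwa [Real.sqrt_prod _ (fun i _ => sum_nonneg fun _ _ => sq_nonneg _)] at h3
  refine (sum_le_sum fun t _ => h1 t).trans ?_
  have hlcm : (univ : Finset ι).lcm (fun _ => T) = T := by
    have : Nonempty ι := Fintype.card_pos_iff.1 (by omega)
    apply Nat.dvd_antisymm
    · exact Finset.lcm_dvd fun _ _ => dvd_rfl
    · exact Finset.dvd_lcm (f := fun _ : ι => T) (mem_univ (Classical.arbitrary ι))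
  have h2 := sq_sum_mul_prod_le (univ : Finset ι) (fun _ => T)
    (fun i t => √(∑ x ∈ range (q i), F i (t % T) x ^ 2)) (fun _ _ => hT)
    (fun i _ x y hxy => by
      have : x % T = y % T := hxy
      simp only [this]) 1 (fun _ => 1) one_pos (fun _ _ _ => rfl) (one_dvd _)
    (fun i _ => by
      rw [Nat.lcm_one_left]
      have : Nontrivial ι := Fintype.one_lt_card_iff_nontrivial.1 hcard
      obtain ⟨k, hk⟩ := exists_ne i
      exact Finset.dvd_lcm (f := fun _ : ι => T) (mem_erase.2 ⟨hk, mem_univ k⟩))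
  rw [hlcm] at h2
  simp only [one_mul, range_one, sum_singleton, one_pow] at h2
  have h3 := Real.le_sqrt_of_sq_le h2
  rw [Real.sqrt_prod _ (fun i _ => sum_nonneg fun _ _ => sq_nonneg _)] at h3
  have h4 : ∀ t ∈ range T, ∏ i, √(∑ x ∈ range (q i), F i t x ^ 2)
      = ∏ i, √(∑ x ∈ range (q i), F i (t % T) x ^ 2) := by
    intro t ht
    rw [Nat.mod_eq_of_lt (mem_range.1 ht)]
  rw [sum_congr rfl h4]
  refine h3.trans (le_of_eq ?_)
  refine prod_congr rfl fun i _ => ?_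
  congr 1
  refine sum_congr rfl fun t ht => ?_
  rw [Nat.mod_eq_of_lt (mem_range.1 ht), Real.sq_sqrt (sum_nonneg fun _ _ => sq_nonneg _)]

/-- Weighted count of the solutions of `∑ σᵢ aᵢ / qᵢ ∈ ℤ`, `∑ σᵢ jᵢ ≡ s (mod T)`. -/
theorem sum_prod_weight_le {ι κ : Type*} [DecidableEq ι] [Fintype ι] [DecidableEq κ]
    (hcard : 2 ≤ Fintype.card ι) (q : ι → ℕ) {T : ℕ} (hT : 0 < T) (hq : ∀ i, 0 < q i)
    (hadm : ∀ i, q i ∣ (univ.erase i).lcm q) (Γ : ι → Finset κ) (a j : κ → ℤ) (w : κ → ℝ)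
    (hw : ∀ k, 0 ≤ w k) (σ : ι → ℤ) (hσ : ∀ i, σ i = 1 ∨ σ i = -1) (s : ℤ)
    (hinj : ∀ i, ∀ k ∈ Γ i, ∀ l ∈ Γ i, (q i : ℤ) ∣ a k - a l → (T : ℤ) ∣ j k - j l → k = l)
    (P : Finset (ι → κ)) (hPsub : P ⊆ Fintype.piFinset Γ)
    (hP1 : ∀ p ∈ P, ∃ n : ℤ, ∑ i, (σ i : ℝ) * a (p i) / q i = n)
    (hP2 : ∀ p ∈ P, (T : ℤ) ∣ ∑ i, σ i * j (p i) - s) :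
    ((univ.lcm q : ℕ) : ℝ) * T * ∑ p ∈ P, ∏ i, w (p i)
      ≤ ∏ i, √(q i * T * ∑ k ∈ Γ i, w k ^ 2) := by
  set L := (univ : Finset ι).lcm q with hL
  have hLpos : 0 < L := Finset.lcm_pos_of_pos _ q fun i _ => hq i
  have hLq : ∀ i, q i ∣ L := fun i => Finset.dvd_lcm (mem_univ i)
  let F : ι → ℕ → ℕ → ℂ := fun i t x =>
    ∑ k ∈ Γ i, (w k : ℂ) * (expi ((σ i * a k : ℤ) * x / q i) * expi ((σ i * j k : ℤ) * t / T))
  have hFsq : ∀ i, ∑ t ∈ range T, ∑ x ∈ range (q i), ‖F i t x‖ ^ 2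
      = q i * T * ∑ k ∈ Γ i, w k ^ 2 := by
    intro i
    have h1 := sum_norm_sq_fourier_prod (Γ i) (hq i) hT (fun k => σ i * a k) (fun k => σ i * j k)
      (by
        intro k hk l hl h1 h2
        rw [← mul_sub] at h1 h2
        refine hinj i k hk l hl ?_ ?_
        · rcases hσ i with h | h <;> simpa [h, dvd_sub_comm] using h1
        · rcases hσ i with h | h <;> simpa [h, dvd_sub_comm] using h2) (fun k => (w k : ℂ))
    simpa [F] using h1
  have hperiod : ∀ i t x y, x ≡ y [MOD q i] → ‖F i t x‖ = ‖F i t y‖ := by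
    intro i t x y hxy
    congr 1
    refine sum_congr rfl fun k _ => ?_
    congr 2
    have hqi : (q i : ℝ) ≠ 0 := by exact_mod_cast (hq i).ne'
    obtain ⟨c, hc⟩ := (Nat.modEq_iff_dvd.1 hxy)
    have hc' : (y : ℝ) = x + q i * c := by
      have : (y : ℤ) = x + q i * c := by linarith
      exact_mod_cast this
    rw [hc']
    have : ((σ i * a k : ℤ) : ℝ) * (x + q i * c) / q i
        = (σ i * a k : ℤ) * x / q i + ((σ i * a k * c : ℤ) : ℝ) := by
      push_cast
      field_simp
    rw [this, expi_add, expi_int, mul_one]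
  have hmain := sum_sum_prod_le hcard q hT (fun i t x => ‖F i t x‖) hq hperiod hadm
  simp_rw [hFsq] at hmain
  refine le_trans ?_ hmain
  let A : (ι → κ) → ℤ := fun p => ∑ i, σ i * a (p i) * (L / q i : ℕ)
  let J : (ι → κ) → ℤ := fun p => ∑ i, σ i * j (p i) - s
  have hA : ∀ p, ∑ i, (σ i : ℝ) * a (p i) / q i = (A p : ℝ) / L := by
    intro p
    simp only [A]
    rw [Int.cast_sum, sum_div]
    refine sum_congr rfl fun i _ => ?_
    obtain ⟨c, hc⟩ := hLq i
    have hqi : (q i : ℝ) ≠ 0 := by exact_mod_cast (hq i).ne'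
    have hc0 : (c : ℝ) ≠ 0 := by
      rintro h
      have : c = 0 := by exact_mod_cast h
      rw [this, mul_zero] at hc
      omega
    have hdiv : L / q i = c := by rw [hc, Nat.mul_div_cancel_left _ (hq i)]
    rw [hdiv, hc]
    push_cast
    field_simp
  have hexpand : ∑ t ∈ range T, ∑ x ∈ range L, expi (-(s * t / T)) * ∏ i, F i t x
      = ((∑ p ∈ Fintype.piFinset Γ, (∏ i, w (p i)) *
          ((if (T : ℤ) ∣ J p then (T : ℝ) else 0) * (if (L : ℤ) ∣ A p then (L : ℝ) else 0)) : ℝ) :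
          ℂ) := by
    have h1 : ∀ t ∈ range T, ∀ x ∈ range L, expi (-(s * t / T)) * ∏ i, F i t x
        = ∑ p ∈ Fintype.piFinset Γ, (∏ i, (w (p i) : ℂ)) *
          (expi (J p * t / T) * expi (A p * x / L)) := by
      intro t _ x _
      simp only [F]
      rw [prod_univ_sum, mul_sum]
      refine sum_congr rfl fun p _ => ?_
      rw [prod_mul_distrib, prod_mul_distrib, ← expi_sum, ← expi_sum, mul_left_comm]
      congr 1
      rw [mul_left_comm, ← expi_add, mul_comm]
      congr 2
      · simp only [J]
        push_cast
        rw [sub_mul, sub_div, sum_mul, sum_div]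
        ring
      · have := hA p
        rw [mul_div_right_comm, ← this, sum_mul]
        refine sum_congr rfl fun i _ => ?_
        push_cast
        ring
    rw [sum_congr rfl fun t ht => sum_congr rfl fun x hx => h1 t ht x hx]
    simp_rw [sum_comm (t := Fintype.piFinset Γ)]
    push_cast
    refine sum_congr rfl fun p _ => ?_
    simp_rw [← mul_sum, ← sum_mul]
    rw [sum_expi_div hT, sum_expi_div hLpos]
    split_ifs <;> simp
  have hnonneg : ∀ p ∈ Fintype.piFinset Γ, 0 ≤ (∏ i, w (p i)) *
      ((if (T : ℤ) ∣ J p then (T : ℝ) else 0) * (if (L : ℤ) ∣ A p then (L : ℝ) else 0)) := by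
    intro p _
    refine mul_nonneg (prod_nonneg fun i _ => hw _) (mul_nonneg ?_ ?_) <;> split_ifs <;> simp
  calc (L : ℝ) * T * ∑ p ∈ P, ∏ i, w (p i)
      = ∑ p ∈ P, (∏ i, w (p i)) *
          ((if (T : ℤ) ∣ J p then (T : ℝ) else 0) * (if (L : ℤ) ∣ A p then (L : ℝ) else 0)) := by
        rw [mul_sum]
        refine sum_congr rfl fun p hp => ?_
        have hLA : (L : ℤ) ∣ A p := by
          obtain ⟨n, hn⟩ := hP1 p hp
          rw [hA p] at hn
          refine ⟨n, ?_⟩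
          have hL0 : (L : ℝ) ≠ 0 := by exact_mod_cast hLpos.ne'
          field_simp at hn
          exact_mod_cast hn
        rw [if_pos (hP2 p hp), if_pos hLA]
        ring
    _ ≤ ∑ p ∈ Fintype.piFinset Γ, (∏ i, w (p i)) *
          ((if (T : ℤ) ∣ J p then (T : ℝ) else 0) * (if (L : ℤ) ∣ A p then (L : ℝ) else 0)) :=
        sum_le_sum_of_subset_of_nonneg hPsub fun p hp _ => hnonneg p hp
    _ = ‖∑ t ∈ range T, ∑ x ∈ range L, expi (-(s * t / T)) * ∏ i, F i t x‖ := by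
        rw [hexpand, Complex.norm_real, Real.norm_of_nonneg (sum_nonneg hnonneg)]
    _ ≤ ∑ t ∈ range T, ∑ x ∈ range L, ∏ i, ‖F i t x‖ := by
        refine (norm_sum_le _ _).trans (sum_le_sum fun t _ => ?_)
        refine (norm_sum_le _ _).trans (sum_le_sum fun x _ => ?_)
        rw [norm_mul, norm_expi, one_mul, norm_prod]

theorem card_divisors_mul_le (u v : ℕ) :
    (u * v).divisors.card ≤ u.divisors.card * v.divisors.card := by
  rw [Nat.divisors_mul, ← Finset.card_product]
  exact Finset.card_mul_le.trans (le_of_eq (Finset.card_product _ _).symm)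

theorem sum_card_divisors_pow_div_le (r X : ℕ) :
    ∑ n ∈ Icc 1 X, (n.divisors.card : ℝ) ^ r / n ≤ (∑ n ∈ Icc 1 X, (1 : ℝ) / n) ^ 2 ^ r := by
  induction r with
  | zero => simp
  | succ r ih =>
    rw [pow_succ 2 r, pow_mul]
    refine le_trans ?_ (pow_le_pow_left₀ (sum_nonneg fun _ _ => by positivity) ih 2)
    rw [pow_two, sum_mul_sum, ← sum_product']
    have h1 : ∀ n ∈ Icc 1 X, (n.divisors.card : ℝ) ^ (r + 1) / n
        = ∑ p ∈ n.divisorsAntidiagonal, ((p.1 * p.2).divisors.card : ℝ) ^ r / (p.1 * p.2 : ℕ) := by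
      intro n _
      have h2 : ∀ p ∈ n.divisorsAntidiagonal,
          ((p.1 * p.2).divisors.card : ℝ) ^ r / (p.1 * p.2 : ℕ)
            = (n.divisors.card : ℝ) ^ r / n := by
        intro p hp
        rw [(Nat.mem_divisorsAntidiagonal.1 hp).1]
      rw [sum_congr rfl h2, sum_const, nsmul_eq_mul, pow_succ]
      have : n.divisorsAntidiagonal.card = n.divisors.card := by
        rw [← Nat.map_div_right_divisors, card_map]
      rw [this]
      ring
    rw [sum_congr rfl h1, sum_sigma']
    have hinj : Set.InjOn (fun z : (_ : ℕ) × (ℕ × ℕ) => z.2)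
        ((Icc 1 X).sigma fun n => n.divisorsAntidiagonal) := by
      rintro ⟨n, p⟩ hz ⟨n', p'⟩ hz' h
      simp only [coe_sigma, Set.mem_sigma_iff, mem_coe, Nat.mem_divisorsAntidiagonal] at hz hz'
      simp only at h
      subst h
      have : n = n' := hz.2.1.symm.trans hz'.2.1
      subst this
      rfl
    have h3 := sum_image (s := (Icc 1 X).sigma fun n => n.divisorsAntidiagonal)
      (g := fun z : (_ : ℕ) × (ℕ × ℕ) => z.2)
      (f := fun p : ℕ × ℕ => ((p.1 * p.2).divisors.card : ℝ) ^ r / (p.1 * p.2 : ℕ)) hinj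
    rw [← h3]
    refine le_trans (sum_le_sum_of_subset_of_nonneg (t := Icc 1 X ×ˢ Icc 1 X) ?_
      fun _ _ _ => by positivity) ?_
    · intro p hp
      obtain ⟨⟨n, p'⟩, hz, rfl⟩ := mem_image.1 hp
      simp only [mem_sigma, mem_Icc, Nat.mem_divisorsAntidiagonal] at hz
      obtain ⟨⟨h1, h2⟩, h3, h4⟩ := hz
      have ha : p'.1 ≠ 0 := by rintro h; rw [h, zero_mul] at h3; omega
      have hb : p'.2 ≠ 0 := by rintro h; rw [h, mul_zero] at h3; omega
      simp only [mem_product, mem_Icc]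
      refine ⟨⟨by omega, ?_⟩, by omega, ?_⟩
      · exact (Nat.le_mul_of_pos_right _ (by omega)).trans (h3.le.trans h2)
      · exact (Nat.le_mul_of_pos_left _ (by omega)).trans (h3.le.trans h2)
    · refine sum_le_sum fun p _ => ?_
      rw [div_mul_div_comm, ← mul_pow]
      push_cast
      gcongr
      exact_mod_cast card_divisors_mul_le p.1 p.2

/-- The reciprocals of the least common multiples of tuples have a small sum. -/
theorem sum_one_div_lcm_le {ι : Type*} [DecidableEq ι] [Fintype ι] (Q : ℕ) :
    ∑ q ∈ Fintype.piFinset (fun _ : ι => Icc 1 Q), (1 : ℝ) / (univ.lcm q : ℕ)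
      ≤ (1 + Fintype.card ι * Real.log Q) ^ 2 ^ Fintype.card ι := by
  set r := Fintype.card ι with hr
  have hharm : ∑ n ∈ Icc 1 (Q ^ r), (1 : ℝ) / n ≤ 1 + r * Real.log Q := by
    have h1 := harmonic_le_one_add_log (Q ^ r)
    rw [harmonic_eq_sum_Icc] at h1
    push_cast at h1
    rw [Real.log_pow] at h1
    simpa using h1
  refine le_trans ?_ (pow_le_pow_left₀ (sum_nonneg fun _ _ => by positivity) hharm _)
  refine le_trans ?_ (sum_card_divisors_pow_div_le r (Q ^ r))
  have hmaps : ∀ q ∈ Fintype.piFinset (fun _ : ι => Icc 1 Q), univ.lcm q ∈ Icc 1 (Q ^ r) := by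
    intro q hq
    rw [Fintype.mem_piFinset] at hq
    have hpos : ∀ i, 0 < q i := fun i => (mem_Icc.1 (hq i)).1
    rw [mem_Icc]
    refine ⟨Finset.lcm_pos_of_pos _ q fun i _ => hpos i, ?_⟩
    have h1 : univ.lcm q ∣ ∏ i, q i := Finset.lcm_dvd fun i hi => dvd_prod_of_mem q hi
    refine (Nat.le_of_dvd (prod_pos fun i _ => hpos i) h1).trans ?_
    calc ∏ i, q i ≤ ∏ _i : ι, Q := prod_le_prod' fun i _ => (mem_Icc.1 (hq i)).2
      _ = Q ^ r := by simp [hr]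
  rw [← sum_fiberwise_of_maps_to hmaps]
  refine sum_le_sum fun n hn => ?_
  have h1 : ∀ q ∈ (Fintype.piFinset fun _ : ι => Icc 1 Q).filter (fun q => univ.lcm q = n),
      (1 : ℝ) / (univ.lcm q : ℕ) = 1 / n := by
    intro q hq
    rw [(mem_filter.1 hq).2]
  rw [sum_congr rfl h1, sum_const, nsmul_eq_mul, mul_one_div]
  gcongr
  have h2 : (Fintype.piFinset fun _ : ι => Icc 1 Q).filter (fun q => univ.lcm q = n)
      ⊆ Fintype.piFinset fun _ : ι => n.divisors := by
    intro q hq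
    rw [Fintype.mem_piFinset]
    intro i
    rw [Nat.mem_divisors]
    refine ⟨?_, by have := (mem_Icc.1 hn).1; omega⟩
    rw [← (mem_filter.1 hq).2]
    exact Finset.dvd_lcm (mem_univ i)
  have h3 := card_le_card h2
  rw [Fintype.card_piFinset, prod_const, card_univ, ← hr] at h3
  exact_mod_cast h3

theorem exists_int_eq_sum_of_approx {ι : Type*} [DecidableEq ι] [Fintype ι] {M K Q : ℕ}
    (hM : Fintype.card ι * K * Q ^ Fintype.card ι < M) (σ : ι → ℤ)
    (hσ : ∀ i, σ i = 1 ∨ σ i = -1) (p : ι → ℕ) (ρ : ι → ℚ) (hden : ∀ i, (ρ i).den ≤ Q)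
    (hρ : ∀ i, |(p i : ℝ) - M * ρ i| ≤ K) (hp : (M : ℤ) ∣ ∑ i, σ i * p i) :
    (∃ n : ℤ, ∑ i, (σ i : ℚ) * ρ i = n) ∧ ∑ i, (σ i : ℝ) * (p i - M * ρ i) = 0 := by
  obtain ⟨n, hn⟩ := hp
  set r := Fintype.card ι with hr
  have hMpos : (0 : ℝ) < M := by exact_mod_cast (Nat.zero_le _).trans_lt hM
  set L := ∏ i, (ρ i).den with hL
  have hinteger : ∃ z : ℤ, (∑ i, (σ i : ℚ) * ρ i) * L = z := by
    refine ⟨∑ i, σ i * ((ρ i).num * ∏ j ∈ univ.erase i, ((ρ j).den : ℤ)), ?_⟩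
    push_cast
    rw [sum_mul]
    refine sum_congr rfl fun i _ => ?_
    have h1 : (L : ℚ) = (ρ i).den * ∏ j ∈ univ.erase i, ((ρ j).den : ℚ) := by
      rw [hL]
      push_cast
      rw [mul_prod_erase univ (fun j => ((ρ j).den : ℚ)) (mem_univ i)]
    rw [h1]
    have h2 := Rat.mul_den_eq_num (ρ i)
    rw [← h2]
    ring
  have hLQ : L ≤ Q ^ r := by
    calc L ≤ ∏ _i : ι, Q := prod_le_prod' fun i _ => hden i
      _ = Q ^ r := by simp [hr]
  have hnR : ∑ i, (σ i : ℝ) * p i = M * n := by exact_mod_cast hn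
  have hdiff : ∑ i, (σ i : ℝ) * (p i - M * ρ i) = M * (n - ((∑ i, (σ i : ℚ) * ρ i : ℚ) : ℝ)) := by
    push_cast
    simp_rw [mul_sub, sum_sub_distrib]
    rw [hnR, mul_sum]
    congr 1
    exact sum_congr rfl fun i _ => by ring
  have hbound : |∑ i, (σ i : ℝ) * (p i - M * ρ i)| ≤ r * K := by
    refine (abs_sum_le_sum_abs _ _).trans ?_
    calc ∑ i, |(σ i : ℝ) * (p i - M * ρ i)| ≤ ∑ _i : ι, (K : ℝ) := by
          refine sum_le_sum fun i _ => ?_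
          rw [abs_mul]
          have : |(σ i : ℝ)| = 1 := by rcases hσ i with h | h <;> simp [h]
          rw [this, one_mul]
          exact hρ i
      _ = r * K := by simp [hr]
  obtain ⟨z, hz⟩ := hinteger
  have hzR : ((∑ i, (σ i : ℚ) * ρ i : ℚ) : ℝ) * L = z := by exact_mod_cast hz
  have hLpos : 0 < L := prod_pos fun i _ => (ρ i).den_pos
  have hzero : n * L - z = 0 := by
    rw [← Int.abs_lt_one_iff]
    have h1 : (M : ℝ) * |((n * L - z : ℤ) : ℝ)| < M * 1 := by
      have h2 : ((n * L - z : ℤ) : ℝ) = (n - ((∑ i, (σ i : ℚ) * ρ i : ℚ) : ℝ)) * L := by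
        push_cast [← hzR]
        ring
      have hcast : ((r * K * Q ^ r : ℕ) : ℝ) < M := by exact_mod_cast hM
      have hLR : (L : ℝ) ≤ (Q : ℝ) ^ r := by exact_mod_cast hLQ
      rw [h2, abs_mul, ← mul_assoc, mul_one, ← abs_of_pos hMpos, ← abs_mul, ← hdiff,
        abs_of_pos hMpos, Nat.abs_cast]
      calc |∑ i, (σ i : ℝ) * (p i - M * ρ i)| * L ≤ (r * K) * (Q : ℝ) ^ r := by gcongr
        _ < M := by exact_mod_cast hM
    have h3 := lt_of_mul_lt_mul_left h1 hMpos.le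
    exact_mod_cast h3
  have hD : (∑ i, (σ i : ℚ) * ρ i) = n := by
    have h1 : (L : ℚ) ≠ 0 := by exact_mod_cast hLpos.ne'
    apply mul_right_cancel₀ h1
    rw [hz]
    have : z = n * L := by linarith
    rw [this]
    push_cast
    rfl
  refine ⟨⟨n, hD⟩, ?_⟩
  rw [hdiff, hD]
  simp

theorem den_dvd_lcm_of_sum_int {ι : Type*} [DecidableEq ι] [Fintype ι] (σ : ι → ℤ)
    (hσ : ∀ i, σ i = 1 ∨ σ i = -1) (ρ : ι → ℚ) (n : ℤ) (hn : ∑ i, (σ i : ℚ) * ρ i = n) (i : ι) :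
    (ρ i).den ∣ (univ.erase i).lcm fun j => (ρ j).den := by
  set E := (univ.erase i).lcm fun j => (ρ j).den with hE
  have hEpos : 0 < E := Finset.lcm_pos_of_pos _ _ fun j _ => (ρ j).den_pos
  have hE0 : (E : ℚ) ≠ 0 := by exact_mod_cast hEpos.ne'
  have hz : ∃ z : ℤ, ρ i = z / (E : ℤ) := by
    refine ⟨σ i * (n * E - ∑ j ∈ univ.erase i, σ j * ((ρ j).num * (E / (ρ j).den : ℕ))), ?_⟩
    have h1 : ∀ j ∈ univ.erase i, (σ j : ℚ) * ((ρ j).num * (E / (ρ j).den : ℕ))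
        = (σ j * ρ j) * E := by
      intro j hj
      obtain ⟨c, hc⟩ : (ρ j).den ∣ E := Finset.dvd_lcm (f := fun j => (ρ j).den) hj
      have hdiv : E / (ρ j).den = c := by rw [hc, Nat.mul_div_cancel_left _ (ρ j).den_pos]
      rw [hdiv, hc]
      push_cast
      rw [← Rat.mul_den_eq_num (ρ j)]
      ring
    rw [← add_sum_erase univ _ (mem_univ i)] at hn
    have h2 : (σ i : ℚ) * σ i = 1 := by rcases hσ i with h | h <;> simp [h]
    rw [eq_div_iff (by exact_mod_cast hE0)]
    rw [Int.cast_mul, Int.cast_sub, Int.cast_sum]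
    have h3 : ∑ j ∈ univ.erase i, ((σ j * ((ρ j).num * (E / (ρ j).den : ℕ)) : ℤ) : ℚ)
        = (∑ j ∈ univ.erase i, (σ j : ℚ) * ρ j) * E := by
      rw [sum_mul, ← sum_congr rfl h1]
      refine sum_congr rfl fun j _ => ?_
      rw [Int.cast_mul, Int.cast_mul, Int.cast_natCast]
    rw [h3]
    push_cast
    linear_combination (E : ℚ) * σ i * hn - (E : ℚ) * ρ i * h2
  obtain ⟨z, hz⟩ := hz
  have := Rat.den_dvd z (E : ℤ)
  rw [Rat.divInt_eq_div, ← hz] at this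
  exact_mod_cast this

theorem approx_injective {M K T : ℕ} (hT : 2 * K + 2 < T) {k l : ℕ} (hk : k < M)
    (hl : l < M) (ρ ρ' : ℚ) (hden : ρ.den = ρ'.den) (hρ : |(k : ℝ) - M * ρ| ≤ K)
    (hρ' : |(l : ℝ) - M * ρ'| ≤ K) (ha : (ρ.den : ℤ) ∣ ρ.num - ρ'.num)
    (hj : (T : ℤ) ∣ ⌊(k : ℝ) - M * ρ⌋ - ⌊(l : ℝ) - M * ρ'⌋) : k = l := by
  set b := (k : ℝ) - M * ρ with hb
  set b' := (l : ℝ) - M * ρ' with hb'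
  rw [abs_le] at hρ hρ'
  have hfl : ⌊b⌋ = ⌊b'⌋ := by
    have h1 := Int.floor_le b
    have h2 := Int.lt_floor_add_one b
    have h3 := Int.floor_le b'
    have h4 := Int.lt_floor_add_one b'
    have h5 : |⌊b⌋ - ⌊b'⌋| < (T : ℤ) := by
      have hTR : (2 * K + 2 : ℝ) < T := by exact_mod_cast hT
      have : |(⌊b⌋ : ℝ) - ⌊b'⌋| < T := by
        rw [abs_lt]
        constructor <;> linarith
      exact_mod_cast this
    have := Int.eq_zero_of_abs_lt_dvd hj h5
    linarith
  obtain ⟨c, hc⟩ := ha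
  have hdiff : (ρ : ℝ) - ρ' = c := by
    have hd : (ρ.den : ℝ) ≠ 0 := by exact_mod_cast ρ.den_nz
    rw [Rat.cast_def ρ, Rat.cast_def ρ', ← hden, ← sub_div, div_eq_iff hd]
    have : ((ρ.num - ρ'.num : ℤ) : ℝ) = (ρ.den * c : ℤ) := by rw [hc]
    push_cast at this
    linarith
  have hbb : b - b' = ((k : ℤ) - l - M * c : ℤ) := by
    rw [hb, hb']
    push_cast
    rw [← hdiff]
    ring
  have habs : |b - b'| < 1 := Int.abs_sub_lt_one_of_floor_eq_floor hfl
  rw [hbb] at habs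
  have h0 : (k : ℤ) - l - M * c = 0 := by
    rw [← Int.abs_lt_one_iff]
    exact_mod_cast habs
  have h1 : (M : ℤ) ∣ (k : ℤ) - l := ⟨c, by linarith⟩
  have h2 : |(k : ℤ) - l| < M := by
    rw [abs_lt]
    constructor <;> omega
  have := Int.eq_zero_of_abs_lt_dvd h1 h2
  omega

/-- The sign pattern `+1` on the left summand and `-1` on the right one. -/
def sumSign (m : ℕ) : Fin m ⊕ Fin m → ℤ := Sum.elim (fun _ => 1) (fun _ => -1)

theorem sumSign_eq (m : ℕ) (i : Fin m ⊕ Fin m) : sumSign m i = 1 ∨ sumSign m i = -1 := by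
  rcases i with i | i <;> simp [sumSign]

theorem sum_norm_pow_le_sum_solutions (Γ : Finset ℕ) {M : ℕ} (hM : 0 < M) (c : ℕ → ℂ) (m : ℕ) :
    ∑ x ∈ range M, ‖∑ k ∈ Γ, c k * expi (k * x / M)‖ ^ (2 * m)
      ≤ M * ∑ p ∈ (Fintype.piFinset fun _ : Fin m ⊕ Fin m => Γ) with
          (M : ℤ) ∣ ∑ i, sumSign m i * p i, ∏ i, ‖c (p i)‖ := by
  set σ := sumSign m with hσ
  let d : Fin m ⊕ Fin m → ℕ → ℂ :=
    Sum.elim (fun _ k => c k) (fun _ k => (starRingEnd ℂ) (c k))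
  have hd : ∀ i k, ‖d i k‖ = ‖c k‖ := by
    rintro (i | i) k <;> simp [d]
  have hexp : ∀ x : ℕ, ((‖∑ k ∈ Γ, c k * expi (k * x / M)‖ ^ (2 * m) : ℝ) : ℂ)
      = ∑ p ∈ Fintype.piFinset fun _ : Fin m ⊕ Fin m => Γ,
          (∏ i, d i (p i)) * expi ((∑ i, σ i * p i : ℤ) * x / M) := by
    intro x
    have h1 : ((‖∑ k ∈ Γ, c k * expi (k * x / M)‖ ^ (2 * m) : ℝ) : ℂ)
        = ∏ i : Fin m ⊕ Fin m, ∑ k ∈ Γ, d i k * expi (σ i * (k * x / M)) := by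
      rw [Fintype.prod_sum_type]
      simp only [d, σ, sumSign, Sum.elim_inl, Sum.elim_inr, Int.cast_one, one_mul, Int.cast_neg,
        neg_mul, expi_neg, prod_const, card_univ, Fintype.card_fin]
      rw [← mul_pow]
      have : ∑ k ∈ Γ, (starRingEnd ℂ) (c k) * (starRingEnd ℂ) (expi (k * x / M))
          = (starRingEnd ℂ) (∑ k ∈ Γ, c k * expi (k * x / M)) := by
        simp [map_sum]
      rw [this, Complex.mul_conj, Complex.normSq_eq_norm_sq]
      push_cast
      rw [pow_mul]
    rw [h1, prod_univ_sum]
    refine sum_congr rfl fun p _ => ?_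
    rw [prod_mul_distrib, ← expi_sum]
    congr 2
    push_cast
    rw [sum_mul, sum_div]
    exact sum_congr rfl fun i _ => by ring
  have hsum : ((∑ x ∈ range M, ‖∑ k ∈ Γ, c k * expi (k * x / M)‖ ^ (2 * m) : ℝ) : ℂ)
      = ∑ p ∈ (Fintype.piFinset fun _ : Fin m ⊕ Fin m => Γ) with
          (M : ℤ) ∣ ∑ i, sumSign m i * p i, (∏ i, d i (p i)) * M := by
    rw [Complex.ofReal_sum, sum_congr rfl fun x _ => hexp x, sum_comm, sum_filter]
    refine sum_congr rfl fun p _ => ?_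
    rw [← mul_sum, sum_expi_div hM]
    split_ifs <;> simp_all
  have hnn : 0 ≤ ∑ x ∈ range M, ‖∑ k ∈ Γ, c k * expi (k * x / M)‖ ^ (2 * m) :=
    sum_nonneg fun _ _ => by positivity
  rw [← abs_of_nonneg hnn, ← Real.norm_eq_abs, ← Complex.norm_real, hsum]
  refine (norm_sum_le _ _).trans ?_
  rw [mul_sum]
  refine sum_le_sum fun p _ => ?_
  rw [norm_mul, norm_prod, Complex.norm_natCast, mul_comm, prod_congr rfl fun i _ => hd i (p i)]

theorem sum_norm_pow_le_of_approx (Γ : Finset ℕ) {M K Q T m : ℕ} (hm : 1 ≤ m) (hQ : 1 ≤ Q)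
    (hΓ : Γ ⊆ range M)
    (hM : 2 * m * K * Q ^ (2 * m) < M) (hT : 2 * K + 2 < T) (c : ℕ → ℂ) (ρ : ℕ → ℚ)
    (hden : ∀ k ∈ Γ, (ρ k).den ≤ Q) (hρ : ∀ k ∈ Γ, |(k : ℝ) - M * ρ k| ≤ K) {B : ℝ}
    (hB : ∀ q ∈ Icc 1 Q, q * T * ∑ k ∈ Γ with (ρ k).den = q, ‖c k‖ ^ 2 ≤ B) :
    ∑ x ∈ range M, ‖∑ k ∈ Γ, c k * expi (k * x / M)‖ ^ (2 * m)
      ≤ M * ((4 * m + 1) * B ^ m * (1 + 2 * m * Real.log Q) ^ 2 ^ (2 * m)) := by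
  have hMpos : 0 < M := (Nat.zero_le _).trans_lt hM
  have hcard : Fintype.card (Fin m ⊕ Fin m) = 2 * m := by simp [two_mul]
  refine (sum_norm_pow_le_sum_solutions Γ hMpos c m).trans ?_
  refine mul_le_mul_of_nonneg_left ?_ (Nat.cast_nonneg M)
  set P := {p ∈ (Fintype.piFinset fun _ : Fin m ⊕ Fin m => Γ) |
          (M : ℤ) ∣ ∑ i, sumSign m i * (p i : ℤ)} with hP
  set j : ℕ → ℤ := fun k => ⌊(k : ℝ) - M * ρ k⌋ with hj
  have hPmem : ∀ p ∈ P, ∀ i, p i ∈ Γ := fun p hp i =>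
    Fintype.mem_piFinset.1 (mem_filter.1 hp).1 i
  have hkey : ∀ p ∈ P, (∃ n : ℤ, ∑ i, (sumSign m i : ℚ) * ρ (p i) = n) ∧
      ∑ i, (sumSign m i : ℝ) * (p i - M * ρ (p i)) = 0 := fun p hp =>
    exists_int_eq_sum_of_approx (by rw [hcard]; exact hM) _ (sumSign_eq m) p (fun i => ρ (p i))
      (fun i => hden _ (hPmem p hp i)) (fun i => hρ _ (hPmem p hp i)) (mem_filter.1 hp).2
  have hs : ∀ p ∈ P, ∑ i, sumSign m i * j (p i) ∈ Icc (-(2 * m : ℤ)) (2 * m) := by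
    intro p hp
    have h1 : |((∑ i, sumSign m i * j (p i) : ℤ) : ℝ)| ≤ 2 * m := by
      push_cast
      have h2 : ∑ i, (sumSign m i : ℝ) * j (p i)
          = - ∑ i, (sumSign m i : ℝ) * (p i - M * ρ (p i) - j (p i)) := by
        simp_rw [mul_sub (sumSign m _ : ℝ) (_ - _)]
        rw [sum_sub_distrib, (hkey p hp).2]
        ring
      rw [h2, abs_neg]
      refine (abs_sum_le_sum_abs _ _).trans ?_
      calc ∑ i, |(sumSign m i : ℝ) * (p i - M * ρ (p i) - j (p i))|
          ≤ ∑ _i : Fin m ⊕ Fin m, (1 : ℝ) := by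
            refine sum_le_sum fun i _ => ?_
            rw [abs_mul]
            have : |(sumSign m i : ℝ)| = 1 := by rcases sumSign_eq m i with h | h <;> simp [h]
            rw [this, one_mul, abs_le]
            have h3 := Int.floor_le ((p i : ℝ) - M * ρ (p i))
            have h4 := Int.lt_floor_add_one ((p i : ℝ) - M * ρ (p i))
            simp only [hj]
            constructor <;> linarith
        _ = 2 * m := by simp [two_mul]
    have h5 : |∑ i, sumSign m i * j (p i)| ≤ 2 * m := by exact_mod_cast h1
    exact mem_Icc.2 (abs_le.1 h5)
  have hq : ∀ p ∈ P, (fun i => (ρ (p i)).den) ∈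
      Fintype.piFinset fun _ : Fin m ⊕ Fin m => Icc 1 Q := by
    intro p hp
    refine Fintype.mem_piFinset.2 fun i => mem_Icc.2 ⟨(ρ (p i)).den_pos, hden _ (hPmem p hp i)⟩
  have hBnn : 0 ≤ B := by
    refine le_trans ?_ (hB 1 (mem_Icc.2 ⟨le_rfl, hQ⟩))
    exact mul_nonneg (by positivity) (sum_nonneg fun _ _ => by positivity)
  have hfib : ∀ q ∈ Fintype.piFinset fun _ : Fin m ⊕ Fin m => Icc 1 Q,
      ∀ s : ℤ, ∑ p ∈ P with (fun i => (ρ (p i)).den) = q ∧ ∑ i, sumSign m i * j (p i) = s,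
        ∏ i, ‖c (p i)‖ ≤ B ^ m * (1 / (univ.lcm q : ℕ)) := by
    intro q hqm s
    have hqi := Fintype.mem_piFinset.1 hqm
    have hqpos : ∀ i, 0 < q i := fun i => (mem_Icc.1 (hqi i)).1
    have hlcm : 0 < univ.lcm q := Finset.lcm_pos_of_pos _ _ fun i _ => hqpos i
    rcases eq_empty_or_nonempty {p ∈ P | (fun i => (ρ (p i)).den) = q ∧
        ∑ i, sumSign m i * j (p i) = s} with he | ⟨p₀, hp₀⟩
    · rw [he, sum_empty]
      positivity
    have hadm : ∀ i, q i ∣ (univ.erase i).lcm q := by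
      intro i
      obtain ⟨hp, hpq, -⟩ := mem_filter.1 hp₀
      obtain ⟨⟨n, hn⟩, -⟩ := hkey p₀ hp
      have := den_dvd_lcm_of_sum_int _ (sumSign_eq m) (fun i => ρ (p₀ i)) n hn i
      rw [← hpq]
      exact this
    have hTpos : 0 < T := by omega
    have main := sum_prod_weight_le (by rw [hcard]; omega) q hTpos hqpos hadm
      (fun i => {k ∈ Γ | (ρ k).den = q i}) (fun k => (ρ k).num) j (fun k => ‖c k‖)
      (fun k => norm_nonneg _) (sumSign m) (sumSign_eq m) s
      (by
        intro i k hk l hl ha hjj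
        obtain ⟨hk, hkq⟩ := mem_filter.1 hk
        obtain ⟨hl, hlq⟩ := mem_filter.1 hl
        exact approx_injective hT (mem_range.1 (hΓ hk)) (mem_range.1 (hΓ hl)) (ρ k) (ρ l)
          (hkq.trans hlq.symm) (hρ k hk) (hρ l hl) (by rw [hkq]; exact ha) hjj)
      {p ∈ P | (fun i => (ρ (p i)).den) = q ∧ ∑ i, sumSign m i * j (p i) = s}
      (by
        intro p hp
        obtain ⟨hp, hpq, -⟩ := mem_filter.1 hp
        refine Fintype.mem_piFinset.2 fun i => mem_filter.2 ⟨hPmem p hp i, ?_⟩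
        rw [← hpq])
      (by
        intro p hp
        obtain ⟨hp, hpq, -⟩ := mem_filter.1 hp
        obtain ⟨⟨n, hn⟩, -⟩ := hkey p hp
        refine ⟨n, ?_⟩
        have hnR : ∑ i, (sumSign m i : ℝ) * (ρ (p i) : ℝ) = n := by exact_mod_cast hn
        rw [← hnR]
        refine sum_congr rfl fun i _ => ?_
        rw [← hpq, Rat.cast_def (ρ (p i)), mul_div_assoc])
      (by
        intro p hp
        rw [(mem_filter.1 hp).2.2, sub_self]
        exact dvd_zero _)
    have hprod : ∏ i, √(q i * T * ∑ k ∈ Γ with (ρ k).den = q i, ‖c k‖ ^ 2) ≤ B ^ m := by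
      calc ∏ i, √(q i * T * ∑ k ∈ Γ with (ρ k).den = q i, ‖c k‖ ^ 2)
          ≤ ∏ _i : Fin m ⊕ Fin m, √B :=
            prod_le_prod (fun i _ => Real.sqrt_nonneg _) fun i _ => Real.sqrt_le_sqrt (hB _ (hqi i))
        _ = B ^ m := by
            rw [prod_const, card_univ, hcard, pow_mul, Real.sq_sqrt hBnn]
    rw [mul_one_div, le_div_iff₀ (by exact_mod_cast hlcm)]
    refine le_trans ?_ (main.trans hprod)
    have hTR : (1 : ℝ) ≤ T := by exact_mod_cast hTpos
    have hS : 0 ≤ ∑ p ∈ P with (fun i => (ρ (p i)).den) = q ∧ ∑ i, sumSign m i * j (p i) = s,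
        ∏ i, ‖c (p i)‖ := sum_nonneg fun _ _ => by positivity
    rw [mul_comm]
    refine mul_le_mul_of_nonneg_right ?_ hS
    exact le_mul_of_one_le_right (by positivity) hTR
  have hsplit : ∑ p ∈ P, ∏ i, ‖c (p i)‖
      = ∑ q ∈ Fintype.piFinset fun _ : Fin m ⊕ Fin m => Icc 1 Q,
          ∑ s ∈ Icc (-(2 * m : ℤ)) (2 * m),
            ∑ p ∈ P with (fun i => (ρ (p i)).den) = q ∧ ∑ i, sumSign m i * j (p i) = s,
              ∏ i, ‖c (p i)‖ := by
    rw [← sum_fiberwise_of_maps_to hq]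
    refine sum_congr rfl fun q _ => ?_
    rw [← sum_fiberwise_of_maps_to
      (s := {p ∈ P | (fun i => (ρ (p i)).den) = q}) (g := fun p => ∑ i, sumSign m i * j (p i))
      (fun p hp => hs p (mem_filter.1 hp).1)]
    refine sum_congr rfl fun s _ => ?_
    rw [filter_filter]
  rw [hsplit]
  calc ∑ q ∈ Fintype.piFinset fun _ : Fin m ⊕ Fin m => Icc 1 Q,
          ∑ s ∈ Icc (-(2 * m : ℤ)) (2 * m),
            ∑ p ∈ P with (fun i => (ρ (p i)).den) = q ∧ ∑ i, sumSign m i * j (p i) = s,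
              ∏ i, ‖c (p i)‖
      ≤ ∑ q ∈ Fintype.piFinset fun _ : Fin m ⊕ Fin m => Icc 1 Q,
          ∑ s ∈ Icc (-(2 * m : ℤ)) (2 * m), B ^ m * (1 / (univ.lcm q : ℕ)) :=
        sum_le_sum fun q hqm => sum_le_sum fun s _ => hfib q hqm s
    _ = (4 * m + 1) * B ^ m *
          ∑ q ∈ Fintype.piFinset fun _ : Fin m ⊕ Fin m => Icc 1 Q, (1 : ℝ) / (univ.lcm q : ℕ) := by
        rw [mul_sum]
        refine sum_congr rfl fun q _ => ?_
        rw [sum_const, Int.card_Icc]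
        have : (2 * (m : ℤ) + 1 - -(2 * m)).toNat = 4 * m + 1 := by omega
        rw [this, nsmul_eq_mul]
        push_cast
        ring
    _ ≤ (4 * m + 1) * B ^ m * (1 + 2 * m * Real.log Q) ^ 2 ^ (2 * m) := by
        refine mul_le_mul_of_nonneg_left ?_ (by positivity)
        have := sum_one_div_lcm_le (ι := Fin m ⊕ Fin m) Q
        rw [hcard] at this
        exact_mod_cast this

theorem four_mul_abs_sub_round_le (x : ℝ) : 4 * |x - round x| ≤ ‖expi x - 1‖ := by
  set t := x - round x with ht
  have hx : expi x = expi t := by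
    have : x = t + (round x : ℤ) := by rw [ht]; ring
    rw [this, expi_add, expi_int, mul_one]
  have h1 : ‖expi t - 1‖ = 2 * |Real.sin (Real.pi * t)| := by
    rw [expi, mul_comm _ Complex.I, Complex.norm_exp_I_mul_ofReal_sub_one, Real.norm_eq_abs,
      abs_mul, abs_two]
    congr 3
    ring
  have h2 : |t| ≤ 1 / 2 := abs_sub_round x
  have h3 : |Real.sin (Real.pi * t)| = Real.sin (Real.pi * |t|) := by
    rcases abs_cases t with ⟨h, h0⟩ | ⟨h, h0⟩
    · rw [h, abs_of_nonneg]
      refine Real.sin_nonneg_of_nonneg_of_le_pi (by positivity) ?_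
      nlinarith [Real.pi_pos]
    · rw [h, mul_neg, Real.sin_neg, abs_of_nonpos]
      refine Real.sin_nonpos_of_nonpos_of_neg_pi_le ?_ ?_
      · nlinarith [Real.pi_pos]
      · nlinarith [Real.pi_pos]
  have h4 := Real.mul_le_sin (x := Real.pi * |t|) (by positivity) (by nlinarith [Real.pi_pos])
  have h5 : 2 / Real.pi * (Real.pi * |t|) = 2 * |t| := by
    field_simp
  rw [hx, h1, h3]
  linarith

theorem norm_sum_expi_le (L : ℕ) (x : ℝ) : ‖∑ n ∈ range L, expi (n * x)‖ ≤ L := by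
  refine (norm_sum_le _ _).trans ?_
  simp [norm_expi]

theorem norm_sum_expi_mul_le (L : ℕ) (x : ℝ) :
    ‖∑ n ∈ range L, expi (n * x)‖ * |x - round x| ≤ 1 / 2 := by
  have h1 : ‖∑ n ∈ range L, expi (n * x)‖ * ‖expi x - 1‖ ≤ 2 := by
    simp_rw [expi_nat_mul]
    rw [← norm_mul, geom_sum_mul]
    refine (norm_sub_le _ _).trans ?_
    rw [norm_pow, norm_expi]
    norm_num
  have h2 := four_mul_abs_sub_round_le x
  nlinarith [norm_nonneg (∑ n ∈ range L, expi (n * x))]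

theorem norm_sum_sq_le_differences (e : ℕ → ℂ) (H : ℕ) :
    ‖∑ n ∈ range H, e n‖ ^ 2
      ≤ 2 * ∑ h ∈ range H, ‖∑ n ∈ range (H - h), (starRingEnd ℂ) (e n) * e (n + h)‖ := by
  have key : ‖∑ n ∈ range H, e n‖ ^ 2
      ≤ 2 * (∑ m ∈ range H, ∑ n ∈ range (m + 1), (starRingEnd ℂ) (e n) * e m).re := by
    induction H with
    | zero => simp
    | succ H ih =>
      rw [sum_range_succ (fun n => e n), sum_range_succ (fun m => ∑ n ∈ range (m + 1), _),
        sum_range_succ (fun n => (starRingEnd ℂ) (e n) * e H)]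
      set S := ∑ n ∈ range H, e n with hS
      have h1 : ∑ n ∈ range H, (starRingEnd ℂ) (e n) * e H = (starRingEnd ℂ) S * e H := by
        rw [hS, map_sum, sum_mul]
      rw [h1]
      rw [← Complex.normSq_eq_norm_sq] at ih ⊢
      rw [Complex.normSq_add]
      have h2 : (S * (starRingEnd ℂ) (e H)).re = ((starRingEnd ℂ) S * e H).re := by
        simp [Complex.mul_re]
      have h3 : ((starRingEnd ℂ) (e H) * e H).re = Complex.normSq (e H) := by
        simp [Complex.mul_re, Complex.normSq_apply]
      rw [Complex.add_re, Complex.add_re, h2, h3]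
      nlinarith [Complex.normSq_nonneg (e H)]
  refine key.trans ?_
  have hflip : ∑ m ∈ range H, ∑ n ∈ range (m + 1), (starRingEnd ℂ) (e n) * e m
      = ∑ h ∈ range H, ∑ n ∈ range (H - h), (starRingEnd ℂ) (e n) * e (n + h) := by
    rw [← sum_range_diag_flip H fun h n => (starRingEnd ℂ) (e n) * e (n + h)]
    refine sum_congr rfl fun m _ => ?_
    rw [← sum_range_reflect]
    refine sum_congr rfl fun k hk => ?_
    have := mem_range.1 hk
    rw [show m + 1 - 1 - k = m - k by omega, show m - k + k = m by omega]
  rw [hflip]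
  refine mul_le_mul_of_nonneg_left ?_ zero_le_two
  exact (Complex.re_le_norm _).trans (norm_sum_le _ _)

theorem sum_range_inv_add_inv_le (q : ℕ) :
    ∑ r ∈ range q, (if r = 0 then 0 else (q : ℝ) / r + q / (q - r : ℕ))
      ≤ 2 * q * (1 + Real.log q) := by
  rcases Nat.eq_zero_or_pos q with rfl | hq
  · simp
  obtain ⟨p, rfl⟩ : ∃ p, q = p + 1 := ⟨q - 1, by omega⟩
  rw [sum_range_succ']
  simp only [Nat.add_eq_zero_iff, one_ne_zero, and_false, if_false, if_true, add_zero]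
  rw [sum_add_distrib]
  have h1 : ∑ r ∈ range p, (((p + 1 : ℕ) : ℝ) / ((r + 1 : ℕ) : ℝ))
      = (p + 1 : ℕ) * ∑ r ∈ range p, ((r + 1 : ℕ) : ℝ)⁻¹ := by
    rw [mul_sum]
    rfl
  have h2 : ∑ r ∈ range p, (((p + 1 : ℕ) : ℝ) / ((p + 1 - (r + 1) : ℕ) : ℝ))
      = ∑ r ∈ range p, (((p + 1 : ℕ) : ℝ) / ((r + 1 : ℕ) : ℝ)) := by
    rw [← sum_range_reflect]
    refine sum_congr rfl fun r hr => ?_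
    have := mem_range.1 hr
    rw [show p + 1 - (p - 1 - r + 1) = r + 1 by omega]
  rw [h2, h1]
  have h3 : ∑ r ∈ range p, ((r + 1 : ℕ) : ℝ)⁻¹ ≤ 1 + Real.log p := by
    have := harmonic_le_one_add_log p
    rw [harmonic] at this
    push_cast at this ⊢
    exact this
  have h4 : Real.log p ≤ Real.log (p + 1 : ℕ) := by
    rcases Nat.eq_zero_or_pos p with rfl | hp
    · simp
    · exact Real.log_le_log (by exact_mod_cast hp) (by push_cast; linarith)
  have h5 : ((p + 1 : ℕ) : ℝ) * ∑ r ∈ range p, ((r + 1 : ℕ) : ℝ)⁻¹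
      ≤ (p + 1 : ℕ) * (1 + Real.log (p + 1 : ℕ)) :=
    mul_le_mul_of_nonneg_left (h3.trans (by linarith)) (by positivity)
  linarith

theorem sum_range_mul_mod_le {F : ℕ → ℝ} (hF : ∀ r, 0 ≤ F r) {q a : ℕ} (hq : 0 < q)
    (ha : a.Coprime q) (W : ℕ) :
    ∑ l ∈ range (q * W), F (l * a % q) ≤ W * ∑ r ∈ range q, F r := by
  induction W with
  | zero => simp
  | succ W ih =>
    rw [Nat.mul_succ, sum_range_add]
    have h1 : ∑ l ∈ range q, F ((q * W + l) * a % q) ≤ ∑ r ∈ range q, F r := by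
      have h2 : ∀ l, (q * W + l) * a % q = l * a % q := by
        intro l
        rw [add_mul, mul_assoc, Nat.mul_add_mod]
      simp_rw [h2]
      have hinj : Set.InjOn (fun l => l * a % q) (range q : Set ℕ) := by
        intro l hl l' hl' h
        have h3 : l ≡ l' [MOD q] := Nat.ModEq.cancel_right_of_coprime ha.symm h
        exact Nat.ModEq.eq_of_lt_of_lt h3 (mem_range.1 hl) (mem_range.1 hl')
      rw [← sum_image (f := F) hinj]
      refine sum_le_sum_of_subset_of_nonneg ?_ fun _ _ _ => hF _
      intro r hr
      obtain ⟨l, -, rfl⟩ := mem_image.1 hr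
      exact mem_range.2 (Nat.mod_lt _ hq)
    push_cast
    linarith

theorem le_of_mul_abs_sub_round_le {g θ : ℝ} (hg : 0 ≤ g) {l q a : ℕ} (hq : 0 < q) (ρ : ℝ)
    (hρ : ∃ k : ℤ, ρ = a / q + k) (hl : l * a % q ≠ 0) (hβ : |l * (θ - ρ)| ≤ 1 / (4 * q))
    (h : g * |l * θ - round (l * θ)| ≤ 1 / 2) :
    g ≤ 2 / 3 * ((q : ℝ) / (l * a % q : ℕ) + q / (q - l * a % q : ℕ)) := by
  obtain ⟨k, hk⟩ := hρ
  set r := l * a % q with hr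
  have hrq : r < q := Nat.mod_lt _ hq
  have hqR : (0 : ℝ) < q := by exact_mod_cast hq
  obtain ⟨j, hj⟩ : ∃ j : ℤ, (q : ℝ) * (l * ρ - round (l * θ)) = r + j * q := by
    obtain ⟨d, hd⟩ : ∃ d, l * a = r + q * d := ⟨_, (Nat.mod_add_div (l * a) q).symm⟩
    refine ⟨d + l * k - round (l * θ), ?_⟩
    have h1 : (l * a : ℝ) = r + q * d := by exact_mod_cast hd
    rw [hk]
    push_cast
    field_simp
    linear_combination h1
  set n := round (l * θ) with hn
  have hβ' : |(q : ℝ) * (l * (θ - ρ))| ≤ 1 / 4 := by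
    rw [abs_mul, abs_of_pos hqR]
    calc (q : ℝ) * |l * (θ - ρ)| ≤ q * (1 / (4 * q)) := mul_le_mul_of_nonneg_left hβ hqR.le
      _ = 1 / 4 := by field_simp
  have hsum : (q : ℝ) * (l * θ - n) = (r + j * q) + q * (l * (θ - ρ)) := by
    rw [← hj]
    ring
  have hqh : g * |(q : ℝ) * (l * θ - n)| ≤ q / 2 := by
    rw [abs_mul, abs_of_pos hqR]
    nlinarith
  have hr1 : (1 : ℝ) ≤ r := by exact_mod_cast Nat.one_le_iff_ne_zero.2 hl
  have hr2 : (1 : ℝ) ≤ (q - r : ℕ) := by exact_mod_cast (by omega : 1 ≤ q - r)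
  have hr3 : ((q - r : ℕ) : ℝ) = q - r := by
    push_cast [hrq.le]
    ring
  rw [hsum] at hqh
  rw [abs_le] at hβ'
  have hfin : ∀ μ : ℝ, 1 ≤ μ → μ - 1 / 4 ≤ |(r + j * q) + q * (l * (θ - ρ))| →
      g ≤ 2 / 3 * (q / μ) := by
    intro μ hμ hμ'
    rw [← mul_div_assoc, le_div_iff₀ (by linarith)]
    have h1 : g * (μ - 1 / 4) ≤ q / 2 := (mul_le_mul_of_nonneg_left hμ' hg).trans hqh
    nlinarith
  have hpos1 : 0 ≤ (q : ℝ) / r := by positivity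
  have hpos2 : 0 ≤ (q : ℝ) / (q - r : ℕ) := by positivity
  rcases le_or_gt 0 j with hj0 | hj0
  · have hjR : (0 : ℝ) ≤ j := by exact_mod_cast hj0
    have := hfin r hr1 (le_trans (by nlinarith) (le_abs_self _))
    linarith
  · have hjR : (j : ℝ) ≤ -1 := by exact_mod_cast (by omega : j ≤ -1)
    have := hfin (q - r : ℕ) hr2 (le_trans (by rw [hr3]; nlinarith) (neg_le_abs _))
    linarith

theorem sum_one_div_one_add_mul_le {z W : ℝ} (hz : 0 ≤ z) (V : ℕ) (hVW : (V : ℝ) ≤ W) :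
    ∑ i ∈ range V, 1 / (1 + (i + 1) * z) ≤ W * (1 + Real.log (1 + W * z)) / (1 + W * z) := by
  have hW : 0 ≤ W := (Nat.cast_nonneg V).trans hVW
  have htel : ∀ V : ℕ, ∑ i ∈ range V, z / (1 + (i + 1) * z) ≤ Real.log (1 + V * z) := by
    intro V
    induction V with
    | zero => simp
    | succ V ih =>
      rw [sum_range_succ]
      have h1 : 0 < 1 + (V : ℝ) * z := by positivity
      have h2 : 0 < 1 + ((V : ℝ) + 1) * z := by positivity
      have h3 : z / (1 + (V + 1) * z) ≤ Real.log (1 + (V + 1) * z) - Real.log (1 + V * z) := by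
        rw [← Real.log_div h2.ne' h1.ne']
        have := Real.one_sub_inv_le_log_of_pos (div_pos h2 h1)
        refine le_trans (le_of_eq ?_) this
        field_simp
        ring
      push_cast
      linarith
  have hWz : 0 < 1 + W * z := by positivity
  rw [le_div_iff₀ hWz, sum_mul]
  calc ∑ i ∈ range V, 1 / (1 + ((i : ℝ) + 1) * z) * (1 + W * z)
      ≤ ∑ i ∈ range V, (1 + W * (z / (1 + ((i : ℝ) + 1) * z))) := by
        refine sum_le_sum fun i _ => ?_
        have h1 : 0 < 1 + ((i : ℝ) + 1) * z := by positivity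
        have h2 : 1 / (1 + ((i : ℝ) + 1) * z) ≤ 1 := by
          rw [div_le_one h1]
          nlinarith [mul_nonneg (by positivity : (0 : ℝ) ≤ (i : ℝ) + 1) hz]
        have h3 : 1 / (1 + ((i : ℝ) + 1) * z) * (1 + W * z)
            = 1 / (1 + ((i : ℝ) + 1) * z) + W * (z / (1 + ((i : ℝ) + 1) * z)) := by
          field_simp
        linarith
    _ = V + W * ∑ i ∈ range V, z / (1 + ((i : ℝ) + 1) * z) := by
        rw [sum_add_distrib, mul_sum]
        simp
    _ ≤ W + W * Real.log (1 + W * z) := by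
        have h1 := htel V
        have h2 : Real.log (1 + V * z) ≤ Real.log (1 + W * z) := by
          refine Real.log_le_log (by positivity) ?_
          nlinarith
        nlinarith
    _ = W * (1 + Real.log (1 + W * z)) := by ring

theorem exists_rat_norm_sum_expi_sq_le (θ : ℝ) {H : ℕ} (hH : 1 ≤ H) :
    ∃ ρ : ℚ, ‖∑ n ∈ range H, expi (θ * (n + 1) ^ 2)‖ ^ 2
      ≤ 128 * H * (1 + Real.log H)
        + 8 * (H ^ 2 / ρ.den) * (1 + Real.log (1 + 4 * H ^ 2 * |θ - ρ|))
          / (1 + 4 * H ^ 2 * |θ - ρ|) := by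
  obtain ⟨ρ, hρ, hden⟩ := Real.exists_rat_abs_sub_le_and_den_le θ (n := 8 * H) (by omega)
  refine ⟨ρ, ?_⟩
  set q := ρ.den with hq
  have hqpos : 0 < q := ρ.den_pos
  have hqR : (0 : ℝ) < q := by exact_mod_cast hqpos
  have hHR : (1 : ℝ) ≤ H := by exact_mod_cast hH
  have hlogH : 0 ≤ Real.log H := Real.log_nonneg hHR
  set β := |θ - ρ| with hβ
  have hβ0 : 0 ≤ β := abs_nonneg _
  have hβ8 : 8 * H * q * β ≤ 1 := by
    rw [le_div_iff₀ (by positivity)] at hρ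
    push_cast at hρ
    nlinarith [mul_nonneg hβ0 hqR.le]
  set a := (ρ.num % q).toNat with ha
  have haZ : (a : ℤ) = ρ.num % q :=
    Int.toNat_of_nonneg (Int.emod_nonneg _ (by exact_mod_cast hqpos.ne'))
  have hρa : ∃ k : ℤ, (ρ : ℝ) = a / q + k := by
    refine ⟨ρ.num / q, ?_⟩
    have h1 : (ρ.num : ℝ) = a + q * (ρ.num / q : ℤ) := by
      have := Int.emod_add_mul_ediv ρ.num q
      rw [← haZ] at this
      exact_mod_cast this.symm
    rw [Rat.cast_def, h1, ← hq]
    field_simp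
  have hcop : a.Coprime q := by
    have h1 : IsCoprime (a : ℤ) q := by
      have h2 : IsCoprime ρ.num (q : ℤ) := by
        rw [Int.isCoprime_iff_gcd_eq_one]
        exact ρ.reduced
      rw [haZ]
      have h3 : ρ.num = ρ.num % q + q * (ρ.num / q) := (Int.emod_add_mul_ediv ρ.num q).symm
      rw [h3] at h2
      exact IsCoprime.of_add_mul_left_left h2
    exact Nat.isCoprime_iff_coprime.1 h1
  set g : ℕ → ℝ := fun h => ‖∑ n ∈ range (H - h), expi (n * ((2 * h : ℕ) * θ))‖ with hg
  have hg0 : ∀ h, 0 ≤ g h := fun h => norm_nonneg _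
  have hgH : ∀ h, g h ≤ H := fun h =>
    (norm_sum_expi_le _ _).trans (by exact_mod_cast Nat.sub_le _ _)
  have hgr : ∀ h, g h * |(2 * h : ℕ) * θ - round ((2 * h : ℕ) * θ)| ≤ 1 / 2 := fun h =>
    norm_sum_expi_mul_le _ _
  have hdiff : ‖∑ n ∈ range H, expi (θ * (n + 1) ^ 2)‖ ^ 2 ≤ 2 * ∑ h ∈ range H, g h := by
    refine (norm_sum_sq_le_differences (fun n => expi (θ * (n + 1) ^ 2)) H).trans (le_of_eq ?_)
    congr 1
    refine sum_congr rfl fun h _ => ?_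
    have h1 : ∀ n : ℕ, (starRingEnd ℂ) (expi (θ * ((n : ℝ) + 1) ^ 2))
        * expi (θ * (((n + h : ℕ) : ℝ) + 1) ^ 2)
        = expi (θ * (2 * h + h ^ 2)) * expi (n * ((2 * h : ℕ) * θ)) := by
      intro n
      rw [← expi_neg, ← expi_add, ← expi_add]
      congr 1
      push_cast
      ring
    rw [sum_congr rfl fun n _ => h1 n, ← mul_sum, norm_mul, norm_expi, one_mul]
  set F : ℕ → ℝ := fun r => if r = 0 then 0 else (q : ℝ) / r + q / (q - r : ℕ) with hF
  have hF0 : ∀ r, 0 ≤ F r := by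
    intro r
    simp only [hF]
    split_ifs <;> positivity
  have hlβ : ∀ h ∈ range H, ((2 * h : ℕ) : ℝ) * β ≤ 1 / (4 * q) := by
    intro h hh
    have h1 : (h : ℝ) ≤ H := by exact_mod_cast (mem_range.1 hh).le
    rw [le_div_iff₀ (by positivity)]
    push_cast
    nlinarith [mul_le_mul_of_nonneg_right h1 (mul_nonneg hβ0 hqR.le)]
  have hminor : ∑ h ∈ range H with 2 * h * a % q ≠ 0, g h ≤ 54 * H * (1 + Real.log H) := by
    have h1 : ∑ h ∈ range H with 2 * h * a % q ≠ 0, g h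
        ≤ ∑ h ∈ range H with 2 * h * a % q ≠ 0, 2 / 3 * F (2 * h * a % q) := by
      refine sum_le_sum fun h hh => ?_
      obtain ⟨hh, hne⟩ := mem_filter.1 hh
      simp only [hF, if_neg hne]
      refine le_of_mul_abs_sub_round_le (hg0 h) hqpos ρ hρa hne ?_ (hgr h)
      rw [abs_mul, Nat.abs_cast]
      exact hlβ h hh
    have h2 : ∑ h ∈ range H with 2 * h * a % q ≠ 0, F (2 * h * a % q)
        ≤ ∑ l ∈ range (q * (2 * H / q + 1)), F (l * a % q) := by
      rw [← sum_image (s := {h ∈ range H | 2 * h * a % q ≠ 0}) (g := fun h => 2 * h)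
        (f := fun l => F (l * a % q)) (fun x _ y _ h => by simpa using h)]
      refine sum_le_sum_of_subset_of_nonneg ?_ fun _ _ _ => hF0 _
      intro l hl
      obtain ⟨h, hh, rfl⟩ := mem_image.1 hl
      have h3 := mem_range.1 (mem_filter.1 hh).1
      have h4 := Nat.lt_mul_div_succ (2 * H) hqpos
      exact mem_range.2 (by omega)
    have h3 := h2.trans ((sum_range_mul_mod_le hF0 hqpos hcop _).trans
      (mul_le_mul_of_nonneg_left (sum_range_inv_add_inv_le q) (Nat.cast_nonneg _)))
    have hq8 : (q : ℝ) ≤ 8 * H := by exact_mod_cast hden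
    have h4 : ((2 * H / q + 1 : ℕ) : ℝ) * q ≤ 10 * H := by
      have h5 : (2 * H / q + 1) * q ≤ 10 * H := by
        have := Nat.div_mul_le_self (2 * H) q
        rw [add_mul, one_mul]
        omega
      exact_mod_cast h5
    have h5 : Real.log q ≤ 3 + Real.log H := by
      have h6 : Real.log q ≤ Real.log (8 * H) := Real.log_le_log hqR hq8
      rw [Real.log_mul (by norm_num) (by positivity), show (8 : ℝ) = 2 ^ 3 by norm_num,
        Real.log_pow] at h6
      have := Real.log_two_lt_d9
      push_cast at h6
      linarith
    have hlogq : 0 ≤ Real.log q := Real.log_natCast_nonneg q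
    rw [← mul_sum] at h1
    have h6 : ((2 * H / q + 1 : ℕ) : ℝ) * (2 * q * (1 + Real.log q))
        ≤ 80 * (H * (1 + Real.log H)) := by
      calc ((2 * H / q + 1 : ℕ) : ℝ) * (2 * q * (1 + Real.log q))
          = (((2 * H / q + 1 : ℕ) : ℝ) * q) * (2 * (1 + Real.log q)) := by ring
        _ ≤ (10 * H) * (2 * (4 * (1 + Real.log H))) := by
            refine mul_le_mul h4 (by linarith) (by linarith) (by positivity)
        _ = 80 * (H * (1 + Real.log H)) := by ring
    have h7 : 0 ≤ (H : ℝ) * (1 + Real.log H) := by positivity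
    linarith
  set z := 2 * q * H * β with hz
  have hz0 : 0 ≤ z := by positivity
  have hmajor : ∑ h ∈ range H with ¬ (2 * h * a % q ≠ 0), g h
      ≤ 2 * H + 4 * (H ^ 2 / q) * (1 + Real.log (1 + 4 * H ^ 2 * β)) / (1 + 4 * H ^ 2 * β) := by
    have hdvd : ∀ h, ¬ (2 * h * a % q ≠ 0) → q ∣ 2 * h := fun h hh =>
      hcop.symm.dvd_of_dvd_mul_right (Nat.dvd_of_mod_eq_zero (not_not.1 hh))
    have h1 : ∑ h ∈ range H with ¬ (2 * h * a % q ≠ 0), g h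
        ≤ ∑ h ∈ range H with ¬ (2 * h * a % q ≠ 0), 2 * H * (1 / (1 + (2 * h / q : ℕ) * z)) := by
      refine sum_le_sum fun h hh => ?_
      obtain ⟨hh, hne⟩ := mem_filter.1 hh
      obtain ⟨i, hi⟩ := hdvd h hne
      rw [hi, Nat.mul_div_cancel_left _ hqpos, mul_one_div, le_div_iff₀ (by positivity)]
      have h2 : ((2 * h : ℕ) : ℝ) * θ = ((i * ρ.num : ℤ) : ℝ) + (2 * h : ℕ) * (θ - ρ) := by
        have h3 : ((q : ℕ) : ℝ) * (ρ : ℝ) = ρ.num := by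
          rw [mul_comm]
          exact_mod_cast Rat.mul_den_eq_num ρ
        rw [hi]
        push_cast
        rw [← h3]
        ring
      have h4 : |((2 * h : ℕ) : ℝ) * (θ - ρ)| ≤ 1 / 4 := by
        rw [abs_mul, Nat.abs_cast]
        refine (hlβ h hh).trans ?_
        have : (1 : ℝ) ≤ q := by exact_mod_cast hqpos
        exact one_div_le_one_div_of_le (by norm_num) (by linarith)
      have h5 : round (((2 * h : ℕ) : ℝ) * θ) = i * ρ.num := by
        rw [h2, round_intCast_add, add_eq_left, round_eq_zero_iff]
        rw [abs_le] at h4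
        constructor <;> [linarith; linarith]
      have h6 := hgr h
      rw [h5] at h6
      have h7 : ((2 * h : ℕ) : ℝ) * θ - ((i * ρ.num : ℤ) : ℝ) = (2 * h : ℕ) * (θ - ρ) := by
        rw [h2]
        ring
      rw [h7, abs_mul, Nat.abs_cast, hi] at h6
      push_cast at h6
      have h8 : g h * (1 + i * z) = g h + 2 * H * (g h * (q * i * β)) := by
        rw [hz]
        ring
      rw [h8]
      have := hgH h
      nlinarith
    set V := 2 * H / q with hV
    have h2 : ∑ h ∈ range H with ¬ (2 * h * a % q ≠ 0), 1 / (1 + ((2 * h / q : ℕ) : ℝ) * z)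
        ≤ ∑ i ∈ range (V + 1), 1 / (1 + (i : ℝ) * z) := by
      rw [← sum_image (s := {h ∈ range H | ¬ (2 * h * a % q ≠ 0)}) (g := fun h => 2 * h / q)
        (f := fun i : ℕ => 1 / (1 + (i : ℝ) * z))]
      · refine sum_le_sum_of_subset_of_nonneg ?_ fun _ _ _ => by positivity
        intro l hl
        obtain ⟨h, hh, rfl⟩ := mem_image.1 hl
        have h3 := mem_range.1 (mem_filter.1 hh).1
        exact mem_range.2 (Nat.lt_succ_of_le (Nat.div_le_div_right (by omega)))
      · intro x hx y hy hxy
        have hx' := Nat.mul_div_cancel' (hdvd x (mem_filter.1 hx).2)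
        have hy' := Nat.mul_div_cancel' (hdvd y (mem_filter.1 hy).2)
        simp only at hxy
        rw [hxy] at hx'
        omega
    rw [sum_range_succ'] at h2
    have h3 := sum_one_div_one_add_mul_le (W := 2 * H / q) hz0 V (by
      rw [hV]
      exact_mod_cast Nat.cast_div_le (α := ℝ) (m := 2 * H) (n := q))
    have hWz : 2 * (H : ℝ) / q * z = 4 * H ^ 2 * β := by
      rw [hz]
      field_simp
      ring
    rw [hWz] at h3
    rw [← mul_sum] at h1
    push_cast at h2
    refine h1.trans ?_
    have h4 := mul_le_mul_of_nonneg_left h2 (by positivity : 0 ≤ 2 * (H : ℝ))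
    refine h4.trans ?_
    have h5 := mul_le_mul_of_nonneg_left h3 (by positivity : 0 ≤ 2 * (H : ℝ))
    rw [mul_add]
    have h6 : 2 * (H : ℝ) * (2 * H / q * (1 + Real.log (1 + 4 * H ^ 2 * β)) / (1 + 4 * H ^ 2 * β))
        = 4 * (H ^ 2 / q) * (1 + Real.log (1 + 4 * H ^ 2 * β)) / (1 + 4 * H ^ 2 * β) := by
      ring
    rw [← h6]
    simp only [zero_mul, add_zero, div_one, mul_one]
    linarith
  have hsplit := sum_filter_add_sum_filter_not (range H) (fun h => 2 * h * a % q ≠ 0) g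
  rw [← hsplit] at hdiff
  have hfin : 8 * ((H : ℝ) ^ 2 / q) * (1 + Real.log (1 + 4 * H ^ 2 * β)) / (1 + 4 * H ^ 2 * β)
      = 2 * (4 * (H ^ 2 / q) * (1 + Real.log (1 + 4 * H ^ 2 * β)) / (1 + 4 * H ^ 2 * β)) := by
    ring
  rw [hfin]
  nlinarith [mul_nonneg (by linarith : (0 : ℝ) ≤ H) hlogH]

/-- The balanced function of `A ⊆ [0, N)`. -/
noncomputable def balanced (A : Finset ℤ) (N : ℕ) (x : ℤ) : ℝ :=
  (if x ∈ A then 1 else 0) - (#A / N : ℝ) * (if x ∈ Ico (0 : ℤ) N then 1 else 0)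

/-- The discrete Fourier transform of the balanced function modulo `2 * N`. -/
noncomputable def balancedFourier (A : Finset ℤ) (N : ℕ) (k : ℕ) : ℂ :=
  ∑ x ∈ Ico (0 : ℤ) N, (balanced A N x : ℂ) * expi (x * k / (2 * N : ℕ))

theorem sum_translate_eq {E : Type*} [AddCommMonoid E] {N : ℕ} (F : ℤ → E)
    (hF : ∀ x ∉ Ico (0 : ℤ) N, F x = 0) {s : ℤ} (hs : 0 ≤ s) (hsN : s ≤ N) :
    ∑ y ∈ Ico (-(N : ℤ)) N, F (y + s) = ∑ x ∈ Ico (0 : ℤ) N, F x := by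
  have h1 : ∑ y ∈ Ico (-(N : ℤ)) N, F (y + s) = ∑ x ∈ Ico (-(N : ℤ) + s) (N + s), F x := by
    rw [← Finset.image_add_right_Ico, sum_image]
    intro x _ y _ h
    simpa using h
  rw [h1]
  symm
  refine sum_subset ?_ fun x _ hx => hF x hx
  intro x hx
  rw [mem_Ico] at hx ⊢
  omega

theorem balanced_eq_zero {A : Finset ℤ} {N : ℕ} (hA : A ⊆ Ico (0 : ℤ) N) {x : ℤ}
    (hx : x ∉ Ico (0 : ℤ) N) : balanced A N x = 0 := by
  rw [balanced, if_neg hx, if_neg fun h => hx (hA h)]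
  simp

theorem sum_progression_fourier {A : Finset ℤ} {N : ℕ} (hA : A ⊆ Ico (0 : ℤ) N) {d ℓ : ℕ}
    (hd : d * ℓ ≤ N) (k : ℕ) :
    ∑ y ∈ Ico (-(N : ℤ)) N, (∑ t ∈ range ℓ, balanced A N (y + d * t) : ℝ) *
        expi (y * k / (2 * N : ℕ))
      = (∑ t ∈ range ℓ, expi (-(k * d * t / (2 * N : ℕ)))) * balancedFourier A N k := by
  rw [sum_mul]
  simp_rw [Complex.ofReal_sum, sum_mul]
  rw [sum_comm]
  refine sum_congr rfl fun t ht => ?_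
  have htd : d * t ≤ N := (Nat.mul_le_mul_left d (mem_range.1 ht).le).trans hd
  rw [balancedFourier, mul_sum]
  rw [← sum_translate_eq
    (fun x : ℤ => expi (-(k * d * t / (2 * N : ℕ))) * ((balanced A N x : ℂ) *
      expi (x * k / (2 * N : ℕ)))) (fun x hx => by rw [balanced_eq_zero hA hx]; simp)
    (s := (d * t : ℤ)) (by positivity) (by exact_mod_cast htd)]
  refine sum_congr rfl fun y _ => ?_
  rw [mul_left_comm, ← expi_add]
  congr 2
  push_cast
  ring

theorem sum_progression_sq_le {A : Finset ℤ} {N : ℕ} (hN : 0 < N) (hA : A ⊆ Ico (0 : ℤ) N) {ν : ℝ}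
    {d ℓ : ℕ} (hd : d * ℓ ≤ N) (hdν : 4 * (d * ℓ : ℝ) ≤ ν * #A)
    (hinc : ∀ y : ℤ, (#{t ∈ range ℓ | y + d * (t : ℕ) ∈ A} : ℝ) ≤ (1 + ν) * (#A / N) * ℓ) :
    ∑ y ∈ Ico (-(N : ℤ)) N, (∑ t ∈ range ℓ, balanced A N (y + d * t)) ^ 2
      ≤ 2 * ν * (#A / N) * #A * ℓ ^ 2 := by
  set α : ℝ := #A / N with hα
  have hNR : (0 : ℝ) < N := by exact_mod_cast hN
  have hα0 : 0 ≤ α := by positivity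
  set a : ℤ → ℝ := fun y => ∑ t ∈ range ℓ, if y + d * (t : ℕ) ∈ A then 1 else 0 with ha
  set p : ℤ → ℝ := fun y => ∑ t ∈ range ℓ, if y + d * (t : ℕ) ∈ Ico (0 : ℤ) N then 1 else 0 with hp
  have hg : ∀ y, ∑ t ∈ range ℓ, balanced A N (y + d * t) = a y - α * p y := by
    intro y
    simp only [balanced, ha, hp, mul_sum, ← sum_sub_distrib, hα]
  have ha0 : ∀ y, 0 ≤ a y := fun y => sum_nonneg fun _ _ => by split_ifs <;> norm_num
  have hp0 : ∀ y, 0 ≤ p y := fun y => sum_nonneg fun _ _ => by split_ifs <;> norm_num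
  have hpℓ : ∀ y, p y ≤ ℓ := by
    intro y
    calc p y ≤ ∑ _t ∈ range ℓ, (1 : ℝ) := sum_le_sum fun _ _ => by split_ifs <;> norm_num
      _ = ℓ := by simp
  have hap : ∀ y, a y ≤ p y := fun y => sum_le_sum fun t _ => by
    by_cases h : y + d * (t : ℕ) ∈ A
    · rw [if_pos h, if_pos (hA h)]
    · rw [if_neg h]
      split_ifs <;> norm_num
  have hainc : ∀ y, a y ≤ (1 + ν) * α * ℓ := by
    intro y
    refine le_trans (le_of_eq ?_) (hinc y)
    simp [ha]
  have hsuma : ∑ y ∈ Ico (-(N : ℤ)) N, a y = ℓ * #A := by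
    simp only [ha]
    rw [sum_comm]
    have h1 : ∀ t ∈ range ℓ, ∑ y ∈ Ico (-(N : ℤ)) N, (if y + d * (t : ℕ) ∈ A then (1 : ℝ) else 0)
        = #A := by
      intro t ht
      have htd : d * t ≤ N := (Nat.mul_le_mul_left d (mem_range.1 ht).le).trans hd
      rw [sum_translate_eq (fun x : ℤ => if x ∈ A then (1 : ℝ) else 0)
        (fun x hx => if_neg fun h => hx (hA h)) (by positivity) (by exact_mod_cast htd),
        ← sum_filter, filter_mem_eq_inter, inter_eq_right.2 hA]
      simp
    rw [sum_congr rfl h1]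
    simp
  have hsump : ∑ y ∈ Ico (-(N : ℤ)) N, p y = ℓ * N := by
    simp only [hp]
    rw [sum_comm]
    have h1 : ∀ t ∈ range ℓ, ∑ y ∈ Ico (-(N : ℤ)) N,
        (if y + d * (t : ℕ) ∈ Ico (0 : ℤ) N then (1 : ℝ) else 0) = N := by
      intro t ht
      have htd : d * t ≤ N := (Nat.mul_le_mul_left d (mem_range.1 ht).le).trans hd
      rw [sum_translate_eq (fun x : ℤ => if x ∈ Ico (0 : ℤ) N then (1 : ℝ) else 0)
        (fun x hx => if_neg hx) (by positivity) (by exact_mod_cast htd),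
        ← sum_filter, filter_mem_eq_inter, inter_self]
      simp
    rw [sum_congr rfl h1]
    simp
  have hbad : ∑ y ∈ Ico (-(N : ℤ)) N, a y * (ℓ - p y) ≤ 2 * (d * ℓ) * ℓ ^ 2 := by
    calc ∑ y ∈ Ico (-(N : ℤ)) N, a y * (ℓ - p y)
        ≤ ∑ y ∈ Ico (-(N : ℤ)) N, if y ∈ Ico (-(d * ℓ : ℤ)) 0 ∪ Ico (N - d * ℓ : ℤ) N
            then (ℓ ^ 2 : ℝ) else 0 := by
          refine sum_le_sum fun y hy => ?_
          split_ifs with h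
          · nlinarith [ha0 y, hp0 y, hpℓ y, hap y]
          · refine le_of_eq ?_
            rw [mem_union, mem_Ico, mem_Ico, not_or] at h
            rw [mem_Ico] at hy
            rcases lt_or_ge y 0 with hy0 | hy0
            · have : a y = 0 := by
                refine sum_eq_zero fun t ht => if_neg fun hyA => ?_
                have h1 := (mem_Ico.1 (hA hyA)).1
                have h2 : d * t ≤ d * ℓ := Nat.mul_le_mul_left d (mem_range.1 ht).le
                have h3 : (d * t : ℤ) ≤ d * ℓ := by exact_mod_cast h2
                omega
              rw [this, zero_mul]
            · have : p y = ℓ := by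
                have h1 : ∀ t ∈ range ℓ, (if y + d * (t : ℕ) ∈ Ico (0 : ℤ) N then (1 : ℝ) else 0)
                    = 1 := by
                  intro t ht
                  have h2 : d * t ≤ d * ℓ := Nat.mul_le_mul_left d (mem_range.1 ht).le
                  have h3 : (d * t : ℤ) ≤ d * ℓ := by exact_mod_cast h2
                  have h4 : (0 : ℤ) ≤ d * t := by positivity
                  refine if_pos (mem_Ico.2 ?_)
                  omega
                simp only [hp]
                rw [sum_congr rfl h1]
                simp
              rw [this, sub_self, mul_zero]
      _ ≤ ∑ y ∈ Ico (-(d * ℓ : ℤ)) 0 ∪ Ico (N - d * ℓ : ℤ) N, (ℓ ^ 2 : ℝ) := by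
          rw [← sum_filter, filter_mem_eq_inter]
          exact sum_le_sum_of_subset_of_nonneg inter_subset_right fun _ _ _ => by positivity
      _ ≤ 2 * (d * ℓ) * ℓ ^ 2 := by
          rw [sum_const, nsmul_eq_mul]
          refine mul_le_mul_of_nonneg_right ?_ (by positivity)
          have h1 : #(Ico (-(d * ℓ : ℤ)) 0 ∪ Ico (N - d * ℓ : ℤ) N) ≤ 2 * (d * ℓ) := by
            refine (card_union_le _ _).trans ?_
            rw [Int.card_Ico, Int.card_Ico]
            have : ((d * ℓ : ℕ) : ℤ) = d * ℓ := by push_cast; ring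
            omega
          exact_mod_cast h1
  have hpt : ∀ y, (∑ t ∈ range ℓ, balanced A N (y + d * t)) ^ 2
      ≤ (1 + ν) * α * ℓ * a y - 2 * α * ℓ * a y + 2 * α * (a y * (ℓ - p y)) + α ^ 2 * ℓ * p y := by
    intro y
    rw [hg]
    have h1 := mul_le_mul_of_nonneg_right (hainc y) (ha0 y)
    have h2 := mul_le_mul_of_nonneg_right (hpℓ y) (hp0 y)
    nlinarith [mul_le_mul_of_nonneg_left h2 (sq_nonneg α)]
  have hαN : α * N = #A := by
    rw [hα]
    field_simp
  calc ∑ y ∈ Ico (-(N : ℤ)) N, (∑ t ∈ range ℓ, balanced A N (y + d * t)) ^ 2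
      ≤ ∑ y ∈ Ico (-(N : ℤ)) N, ((1 + ν) * α * ℓ * a y - 2 * α * ℓ * a y
          + 2 * α * (a y * (ℓ - p y)) + α ^ 2 * ℓ * p y) := sum_le_sum fun y _ => hpt y
    _ = (1 + ν) * α * ℓ * (ℓ * #A) - 2 * α * ℓ * (ℓ * #A)
          + 2 * α * (∑ y ∈ Ico (-(N : ℤ)) N, a y * (ℓ - p y)) + α ^ 2 * ℓ * (ℓ * N) := by
        rw [sum_add_distrib, sum_add_distrib, sum_sub_distrib, ← mul_sum, ← mul_sum, ← mul_sum,
          ← mul_sum, hsuma, hsump]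
    _ ≤ (1 + ν) * α * ℓ * (ℓ * #A) - 2 * α * ℓ * (ℓ * #A)
          + 2 * α * (2 * (d * ℓ) * ℓ ^ 2) + α ^ 2 * ℓ * (ℓ * N) := by gcongr
    _ = ν * α * #A * ℓ ^ 2 + α * ℓ ^ 2 * (4 * (d * ℓ)) := by
        rw [← hαN]
        ring
    _ ≤ ν * α * #A * ℓ ^ 2 + α * ℓ ^ 2 * (ν * #A) := by gcongr
    _ = 2 * ν * α * #A * ℓ ^ 2 := by ring

theorem sum_balancedFourier_sq_le {A : Finset ℤ} {N : ℕ} (hN : 0 < N) (hA : A ⊆ Ico (0 : ℤ) N)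
    {ν : ℝ} {d ℓ : ℕ} (hℓ : 0 < ℓ) (hd : d * ℓ ≤ N) (hdν : 4 * (d * ℓ : ℝ) ≤ ν * #A)
    (hinc : ∀ y : ℤ, (#{t ∈ range ℓ | y + d * (t : ℕ) ∈ A} : ℝ) ≤ (1 + ν) * (#A / N) * ℓ)
    (Γ : Finset ℕ) (hΓ : Γ ⊆ range (2 * N))
    (hgeo : ∀ k ∈ Γ, (ℓ : ℝ) / 2 ≤ ‖∑ t ∈ range ℓ, expi (k * d * t / (2 * N : ℕ))‖) :
    ∑ k ∈ Γ, ‖balancedFourier A N k‖ ^ 2 ≤ 8 * (2 * N) * ν * (#A / N) * #A := by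
  have hℓR : (0 : ℝ) < ℓ := by exact_mod_cast hℓ
  have hpars := sum_norm_sq_fourier (Ico (-(N : ℤ)) N) (M := 2 * N) (by omega) (fun y => y)
    (by
      intro x hx y hy hxy
      rw [mem_Ico] at hx hy
      have h1 : |x - y| < ((2 * N : ℕ) : ℤ) := by
        rw [abs_lt]
        push_cast
        omega
      have := Int.eq_zero_of_abs_lt_dvd hxy h1
      omega)
    (fun y => ((∑ t ∈ range ℓ, balanced A N (y + d * t) : ℝ) : ℂ))
  have h1 : ∀ k ∈ Γ, (ℓ : ℝ) ^ 2 / 4 * ‖balancedFourier A N k‖ ^ 2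
      ≤ ‖∑ y ∈ Ico (-(N : ℤ)) N, ((∑ t ∈ range ℓ, balanced A N (y + d * t) : ℝ) : ℂ) *
        expi (y * k / (2 * N : ℕ))‖ ^ 2 := by
    intro k hk
    rw [sum_progression_fourier hA hd, norm_mul, mul_pow]
    refine mul_le_mul_of_nonneg_right ?_ (by positivity)
    have h2 : ‖∑ t ∈ range ℓ, expi (-(k * d * t / (2 * N : ℕ)))‖
        = ‖∑ t ∈ range ℓ, expi (k * d * t / (2 * N : ℕ))‖ := by
      simp_rw [expi_neg]
      rw [← map_sum, RCLike.norm_conj]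
    rw [h2]
    have := pow_le_pow_left₀ (by positivity) (hgeo k hk) 2
    linarith
  have h2 : (ℓ : ℝ) ^ 2 / 4 * ∑ k ∈ Γ, ‖balancedFourier A N k‖ ^ 2
      ≤ (2 * N : ℕ) * (2 * ν * (#A / N) * #A * ℓ ^ 2) := by
    rw [mul_sum]
    refine (sum_le_sum h1).trans ((sum_le_sum_of_subset_of_nonneg hΓ
      fun _ _ _ => by positivity).trans ?_)
    rw [hpars]
    refine mul_le_mul_of_nonneg_left ?_ (by positivity)
    simp_rw [Complex.norm_real, Real.norm_eq_abs, sq_abs]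
    exact sum_progression_sq_le hN hA hd hdν hinc
  have h3 : (0 : ℝ) < ℓ ^ 2 / 4 := by positivity
  refine le_of_mul_le_mul_left (h2.trans (le_of_eq ?_)) h3
  push_cast
  ring

theorem half_le_norm_sum_expi {x : ℝ} {ℓ : ℕ} (hx : |x| * ℓ ≤ 1 / 8) :
    (ℓ : ℝ) / 2 ≤ ‖∑ t ∈ range ℓ, expi (x * t)‖ := by
  refine le_trans ?_ (Complex.re_le_norm _)
  rw [Complex.re_sum]
  calc (ℓ : ℝ) / 2 = ∑ _t ∈ range ℓ, (1 / 2 : ℝ) := by simp; ring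
    _ ≤ ∑ t ∈ range ℓ, (expi (x * t)).re := by
      refine sum_le_sum fun t ht => ?_
      rw [expi, Complex.exp_ofReal_mul_I_re]
      have h1 := Real.one_sub_sq_div_two_le_cos (x := 2 * Real.pi * (x * t))
      have h2 : |2 * Real.pi * (x * t)| ≤ 1 := by
        have h3 : (t : ℝ) ≤ ℓ := by exact_mod_cast (mem_range.1 ht).le
        have h4 : |x| * t ≤ 1 / 8 := (mul_le_mul_of_nonneg_left h3 (abs_nonneg x)).trans hx
        rw [abs_mul, abs_of_pos (by positivity : 0 < 2 * Real.pi), abs_mul x, Nat.abs_cast]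
        have h5 : 0 ≤ |x| * t := by positivity
        nlinarith [Real.pi_le_four, Real.pi_pos]
      have h3 : (2 * Real.pi * (x * t)) ^ 2 ≤ 1 := by
        rw [← sq_abs]
        exact pow_le_one₀ (abs_nonneg _) h2
      linarith

theorem half_le_norm_sum_expi_of_approx {k M ℓ : ℕ} (ρ : ℚ)
    (h : |(k : ℝ) / M - ρ| * ρ.den ^ 2 * ℓ ≤ 1 / 8) :
    (ℓ : ℝ) / 2 ≤ ‖∑ t ∈ range ℓ, expi (k * (ρ.den ^ 2 : ℕ) * t / M)‖ := by
  have h1 : ∀ t : ℕ, expi (k * (ρ.den ^ 2 : ℕ) * t / M)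
      = expi ((((k : ℝ) / M - ρ) * ρ.den ^ 2) * t) := by
    intro t
    have h2 : (ρ : ℝ) * ρ.den = ρ.num := by exact_mod_cast Rat.mul_den_eq_num ρ
    have h3 : (k : ℝ) * (ρ.den ^ 2 : ℕ) * t / M
        = (((k : ℝ) / M - ρ) * ρ.den ^ 2) * t + ((ρ.num * ρ.den * t : ℤ) : ℝ) := by
      push_cast
      rw [← h2]
      ring
    rw [h3, expi_add, expi_int, mul_one]
  simp_rw [h1]
  refine half_le_norm_sum_expi ?_
  rw [abs_mul, abs_of_nonneg (by positivity : (0 : ℝ) ≤ (ρ.den : ℝ) ^ 2)]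
  exact h

theorem card_inter_Ico_le {A : Finset ℤ} {ℓ : ℕ} {b : ℝ}
    (hinc : ∀ y : ℤ, (#{t ∈ range ℓ | y + (t : ℕ) ∈ A} : ℝ) ≤ b) (u : ℤ) (w : ℕ) :
    (#(A ∩ Ico u (u + w * ℓ)) : ℝ) ≤ w * b := by
  induction w with
  | zero => simp
  | succ w ih =>
    have h1 : A ∩ Ico u (u + (w + 1 : ℕ) * ℓ)
        ⊆ (A ∩ Ico u (u + w * ℓ)) ∪
          ({t ∈ range ℓ | u + w * ℓ + (t : ℕ) ∈ A}).image fun t : ℕ => u + w * ℓ + (t : ℤ) := by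
      intro x hx
      rw [mem_inter, mem_Ico] at hx
      obtain ⟨hxA, hux, hxu⟩ := hx
      push_cast at hxu
      rw [add_mul, one_mul] at hxu
      rw [mem_union, mem_inter, mem_Ico, mem_image]
      rcases lt_or_ge x (u + w * ℓ) with h | h
      · exact Or.inl ⟨hxA, hux, h⟩
      · have h2 : u + w * ℓ + ((x - (u + w * ℓ)).toNat : ℤ) = x := by
          rw [Int.toNat_of_nonneg (by omega)]
          ring
        refine Or.inr ⟨(x - (u + w * ℓ)).toNat, mem_filter.2 ⟨mem_range.2 (by omega), ?_⟩, h2⟩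
        rw [h2]
        exact hxA
    have h2 : (#(A ∩ Ico u (u + (w + 1 : ℕ) * ℓ)) : ℝ)
        ≤ #(A ∩ Ico u (u + w * ℓ)) + #{t ∈ range ℓ | u + w * ℓ + (t : ℕ) ∈ A} := by
      exact_mod_cast (card_le_card h1).trans ((card_union_le _ _).trans
        (Nat.add_le_add_left card_image_le _))
    have h3 := hinc (u + w * ℓ)
    push_cast at h2 ⊢
    linarith

theorem card_inter_Ico_le_quarter {A : Finset ℤ} {N ℓ : ℕ} (hN : 0 < N) {ν : ℝ}
    (hν : ν ≤ 1 / 2)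
    (hℓ : 0 < ℓ) (hℓN : 100 * ℓ ≤ N)
    (hinc : ∀ y : ℤ, (#{t ∈ range ℓ | y + (t : ℕ) ∈ A} : ℝ) ≤ (1 + ν) * (#A / N) * ℓ)
    (u : ℤ) {L : ℕ} (hL : 8 * L ≤ N) : (#(A ∩ Ico u (u + L)) : ℝ) ≤ #A / 4 := by
  have h1 := card_inter_Ico_le hinc u (L / ℓ + 1)
  have h2 : L ≤ (L / ℓ + 1) * ℓ := by
    rw [mul_comm]
    exact (Nat.lt_mul_div_succ L hℓ).le
  have h3 : (#(A ∩ Ico u (u + L)) : ℝ) ≤ #(A ∩ Ico u (u + (L / ℓ + 1 : ℕ) * ℓ)) := by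
    have : (L : ℤ) ≤ (L / ℓ + 1 : ℕ) * ℓ := by exact_mod_cast h2
    exact_mod_cast card_le_card (inter_subset_inter_left
      (Ico_subset_Ico_right (by push_cast at this ⊢; linarith)))
  refine h3.trans (h1.trans ?_)
  have hNR : (0 : ℝ) < N := by exact_mod_cast hN
  have h4 : ((L / ℓ + 1 : ℕ) : ℝ) * ℓ ≤ N * (27 / 200) := by
    have h5 : 200 * ((L / ℓ + 1) * ℓ) ≤ 27 * N := by
      have := Nat.div_mul_le_self L ℓ
      rw [add_mul, one_mul]
      omega
    have h6 : (200 : ℝ) * (((L / ℓ + 1 : ℕ) : ℝ) * ℓ) ≤ 27 * N := by exact_mod_cast h5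
    linarith
  calc ((L / ℓ + 1 : ℕ) : ℝ) * ((1 + ν) * (#A / N) * ℓ)
      = (1 + ν) * (#A / N) * (((L / ℓ + 1 : ℕ) : ℝ) * ℓ) := by ring
    _ ≤ (1 + 1 / 2) * (#A / N) * (N * (27 / 200)) := by gcongr
    _ = #A * (81 / 400) := by field_simp; ring
    _ ≤ #A / 4 := by linarith [Nat.cast_nonneg (α := ℝ) #A]

theorem sum_balanced_mul_le {A : Finset ℤ} {N : ℕ} (hN : 0 < N) (hA : A ⊆ Ico (0 : ℤ) N) {s : ℕ}
    (hdiff : ∀ x ∈ A, x + s ∉ A) (hs : 8 * s ≤ N)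
    (hedge : ∀ u : ℤ, ∀ L : ℕ, 8 * L ≤ N → (#(A ∩ Ico u (u + L)) : ℝ) ≤ #A / 4) :
    ∑ x ∈ Ico (0 : ℤ) N, balanced A N x * balanced A N (x + s) ≤ -(#A / N * #A / 2) := by
  set α : ℝ := #A / N with hα
  have hNR : (0 : ℝ) < N := by exact_mod_cast hN
  have hα0 : 0 ≤ α := by positivity
  have hαN : α * N = #A := by
    rw [hα]
    field_simp
  have hpt : ∀ x ∈ Ico (0 : ℤ) N, balanced A N x * balanced A N (x + s)
      ≤ -α * (if x ∈ A then 1 else 0) + α * (if x ∈ A ∩ Ico (N - s : ℤ) (N - s + s) then 1 else 0)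
        - α * (if x + s ∈ A then 1 else 0) + α ^ 2 := by
    intro x hx
    have hx' := mem_Ico.1 hx
    simp only [balanced, if_pos hx, ← hα]
    by_cases hxA : x ∈ A
    · have h1 := hdiff x hxA
      rw [if_pos hxA, if_neg h1]
      by_cases h2 : x + s ∈ Ico (0 : ℤ) N
      · have h3 : x ∉ A ∩ Ico (N - s : ℤ) (N - s + s) := by
          intro h
          have := mem_Ico.1 (mem_inter.1 h).2
          have := mem_Ico.1 h2
          omega
        rw [if_pos h2, if_neg h3]
        nlinarith
      · have h3 : x ∈ A ∩ Ico (N - s : ℤ) (N - s + s) := by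
          refine mem_inter.2 ⟨hxA, mem_Ico.2 ?_⟩
          rw [mem_Ico] at h2
          omega
        rw [if_neg h2, if_pos h3]
        nlinarith
    · have h3 : x ∉ A ∩ Ico (N - s : ℤ) (N - s + s) := fun h => hxA (mem_inter.1 h).1
      rw [if_neg hxA, if_neg h3]
      by_cases h2 : x + s ∈ Ico (0 : ℤ) N
      · rw [if_pos h2]
        split_ifs <;> nlinarith
      · rw [if_neg h2, if_neg fun h => h2 (hA h)]
        nlinarith
  refine (sum_le_sum hpt).trans ?_
  rw [sum_add_distrib, sum_sub_distrib, sum_add_distrib, ← mul_sum, ← mul_sum, ← mul_sum]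
  have h1 : ∑ x ∈ Ico (0 : ℤ) N, (if x ∈ A then (1 : ℝ) else 0) = #A := by
    rw [← sum_filter, filter_mem_eq_inter, inter_eq_right.2 hA]
    simp
  have h2 : ∑ x ∈ Ico (0 : ℤ) N, (if x ∈ A ∩ Ico (N - s : ℤ) (N - s + s) then (1 : ℝ) else 0)
      ≤ #A / 4 := by
    refine le_trans ?_ (hedge (N - s) s hs)
    rw [← sum_filter, filter_mem_eq_inter]
    simp only [sum_const, nsmul_eq_mul, mul_one]
    exact_mod_cast card_le_card inter_subset_right
  have h3 : (#A : ℝ) - #A / 4 ≤ ∑ x ∈ Ico (0 : ℤ) N, (if x + s ∈ A then (1 : ℝ) else 0) := by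
    have h4 : ∑ x ∈ Ico (0 : ℤ) N, (if x + s ∈ A then (1 : ℝ) else 0)
        = #{x ∈ Ico (0 : ℤ) N | x + (s : ℤ) ∈ A} := by
      rw [← sum_filter]
      simp
    have h5 : A ⊆ (A ∩ Ico (0 : ℤ) (0 + s)) ∪
        ({x ∈ Ico (0 : ℤ) N | x + (s : ℤ) ∈ A}).image (· + (s : ℤ)) := by
      intro x hx
      have hx' := mem_Ico.1 (hA hx)
      rw [mem_union, mem_inter, mem_Ico, mem_image]
      rcases lt_or_ge x s with h | h
      · exact Or.inl ⟨hx, by omega⟩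
      · refine Or.inr ⟨x - s, mem_filter.2 ⟨mem_Ico.2 (by omega), ?_⟩, by ring⟩
        rw [sub_add_cancel]
        exact hx
    have h6 : (#A : ℝ) ≤ #(A ∩ Ico (0 : ℤ) (0 + s)) + #{x ∈ Ico (0 : ℤ) N | x + (s : ℤ) ∈ A} := by
      exact_mod_cast (card_le_card h5).trans ((card_union_le _ _).trans
        (Nat.add_le_add_left card_image_le _))
    have h7 := hedge 0 s hs
    rw [h4]
    linarith
  have h4 : ∑ _x ∈ Ico (0 : ℤ) N, α ^ 2 = α * #A := by
    rw [sum_const, Int.card_Ico, nsmul_eq_mul, ← hαN]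
    simp
    ring
  rw [h1, h4]
  nlinarith [mul_le_mul_of_nonneg_left h2 hα0, mul_le_mul_of_nonneg_left h3 hα0]

theorem sum_balancedFourier_sq_mul_expi {A : Finset ℤ} {N : ℕ} (hN : 0 < N)
    (hA : A ⊆ Ico (0 : ℤ) N) {s : ℕ} (hs : s ≤ N) :
    ∑ k ∈ range (2 * N), (‖balancedFourier A N k‖ ^ 2 : ℂ) * expi (k * s / (2 * N : ℕ))
      = ((2 * N * ∑ x ∈ Ico (0 : ℤ) N, balanced A N x * balanced A N (x + s) : ℝ) : ℂ) := by
  have h1 : ∀ k : ℕ, (‖balancedFourier A N k‖ ^ 2 : ℂ) * expi (k * s / (2 * N : ℕ))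
      = ∑ x ∈ Ico (0 : ℤ) N, ∑ y ∈ Ico (0 : ℤ) N, ((balanced A N x * balanced A N y : ℝ) : ℂ) *
          expi ((x - y + s : ℤ) * k / (2 * N : ℕ)) := by
    intro k
    have h2 : (‖balancedFourier A N k‖ ^ 2 : ℂ)
        = balancedFourier A N k * (starRingEnd ℂ) (balancedFourier A N k) := by
      rw [Complex.mul_conj, Complex.normSq_eq_norm_sq]
      push_cast
      rfl
    rw [h2, balancedFourier, map_sum, sum_mul_sum, sum_mul]
    refine sum_congr rfl fun x _ => ?_
    rw [sum_mul]
    refine sum_congr rfl fun y _ => ?_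
    rw [map_mul, ← expi_neg, Complex.conj_ofReal]
    have h3 : expi ((x - y + s : ℤ) * k / (2 * N : ℕ))
        = expi (x * k / (2 * N : ℕ)) * expi (-(y * k / (2 * N : ℕ))) *
          expi (k * s / (2 * N : ℕ)) := by
      rw [← expi_add, ← expi_add]
      congr 1
      push_cast
      ring
    rw [h3]
    push_cast
    ring
  simp_rw [h1]
  rw [sum_comm, mul_sum, Complex.ofReal_sum]
  refine sum_congr rfl fun x hx => ?_
  rw [sum_comm]
  have h4 : ∀ y ∈ Ico (0 : ℤ) N, ∑ k ∈ range (2 * N),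
      ((balanced A N x * balanced A N y : ℝ) : ℂ) * expi ((x - y + s : ℤ) * k / (2 * N : ℕ))
      = if y = x + s then ((2 * N * (balanced A N x * balanced A N (x + s)) : ℝ) : ℂ) else 0 := by
    intro y hy
    rw [mem_Ico] at hx hy
    rw [← mul_sum, sum_expi_div (by omega)]
    have h5 : ((2 * N : ℕ) : ℤ) ∣ x - y + s ↔ y = x + s := by
      constructor
      · intro h
        have := Int.eq_zero_of_abs_lt_dvd h (by rw [abs_lt]; push_cast; omega)
        omega
      · intro h
        rw [h]
        simp
    by_cases h6 : y = x + s
    · rw [if_pos (h5.2 h6), if_pos h6, h6]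
      push_cast
      ring
    · rw [if_neg (mt h5.1 h6), if_neg h6, mul_zero]
  rw [sum_congr rfl h4, sum_ite_eq']
  split_ifs with h5
  · rfl
  · rw [balanced_eq_zero hA h5]
    simp

theorem sum_balancedFourier_sq {A : Finset ℤ} {N : ℕ} (hN : 0 < N) (hA : A ⊆ Ico (0 : ℤ) N) :
    ∑ k ∈ range (2 * N), ‖balancedFourier A N k‖ ^ 2 ≤ 2 * N * #A := by
  have h1 := sum_balancedFourier_sq_mul_expi hN hA (s := 0) (Nat.zero_le _)
  simp only [Nat.cast_zero, mul_zero, zero_div, expi_zero, mul_one, add_zero] at h1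
  have h2 : ∑ k ∈ range (2 * N), ‖balancedFourier A N k‖ ^ 2
      = 2 * N * ∑ x ∈ Ico (0 : ℤ) N, balanced A N x * balanced A N x := by exact_mod_cast h1
  rw [h2]
  refine mul_le_mul_of_nonneg_left ?_ (by positivity)
  set α : ℝ := #A / N with hα
  have hNR : (0 : ℝ) < N := by exact_mod_cast hN
  have hα0 : 0 ≤ α := by positivity
  have hαN : α * N = #A := by
    rw [hα]
    field_simp
  have h3 : ∀ x ∈ Ico (0 : ℤ) N, balanced A N x * balanced A N x
      = (1 - 2 * α) * (if x ∈ A then 1 else 0) + α ^ 2 := by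
    intro x hx
    simp only [balanced, if_pos hx, ← hα]
    split_ifs <;> ring
  have h4 : ∑ x ∈ Ico (0 : ℤ) N, (if x ∈ A then (1 : ℝ) else 0) = #A := by
    rw [← sum_filter, filter_mem_eq_inter, inter_eq_right.2 hA]
    simp
  rw [sum_congr rfl h3, sum_add_distrib, ← mul_sum, h4, sum_const, Int.card_Ico, nsmul_eq_mul]
  have h5 : (((N : ℤ) - 0).toNat : ℝ) * α ^ 2 = α * #A := by
    rw [← hαN]
    simp
    ring
  rw [h5]
  nlinarith [mul_nonneg hα0 (Nat.cast_nonneg (α := ℝ) #A)]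

/-- The exponential sum over the squares `1, 4, …, H ^ 2` at the frequency `θ`. -/
noncomputable def squareSum (H : ℕ) (θ : ℝ) : ℂ := ∑ n ∈ range H, expi (θ * (n + 1) ^ 2)

theorem le_sum_balancedFourier_sq_mul_squareSum {A : Finset ℤ} {N H : ℕ} (hN : 0 < N)
    (hA : A ⊆ Ico (0 : ℤ) N) (hdiff : ∀ x ∈ A, ∀ n : ℕ, 0 < n → x + n ^ 2 ∉ A)
    (hH : 8 * H ^ 2 ≤ N)
    (hedge : ∀ u : ℤ, ∀ L : ℕ, 8 * L ≤ N → (#(A ∩ Ico u (u + L)) : ℝ) ≤ #A / 4) :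
    2 * N * H * (#A / N) * #A / 4
      ≤ ∑ k ∈ range (2 * N) with
          ¬ ‖squareSum H ((k : ℕ) / (2 * N : ℕ))‖ ≤ #A / N / 4 * H,
          ‖balancedFourier A N k‖ ^ 2 * ‖squareSum H ((k : ℕ) / (2 * N : ℕ))‖ := by
  have hsum : ∑ k ∈ range (2 * N), (‖balancedFourier A N k‖ ^ 2 : ℂ) *
      squareSum H ((k : ℕ) / (2 * N : ℕ))
      = ((∑ n ∈ range H, 2 * N * ∑ x ∈ Ico (0 : ℤ) N,
          balanced A N x * balanced A N (x + ((n + 1) ^ 2 : ℕ)) : ℝ) : ℂ) := by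
    simp_rw [squareSum, mul_sum (range H)]
    rw [sum_comm, Complex.ofReal_sum]
    refine sum_congr rfl fun n hn => ?_
    have h1 : (n + 1) ^ 2 ≤ N := by
      have := Nat.pow_le_pow_left (mem_range.1 hn) 2
      have h2 : (n + 1) ^ 2 ≤ H ^ 2 := this
      omega
    rw [← sum_balancedFourier_sq_mul_expi hN hA h1]
    refine sum_congr rfl fun k _ => ?_
    congr 2
    push_cast
    ring
  have hle : ∑ n ∈ range H, 2 * N * ∑ x ∈ Ico (0 : ℤ) N,
          balanced A N x * balanced A N (x + ((n + 1) ^ 2 : ℕ))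
      ≤ -(2 * N * H * (#A / N) * #A / 2) := by
    calc ∑ n ∈ range H, 2 * N * ∑ x ∈ Ico (0 : ℤ) N,
          balanced A N x * balanced A N (x + ((n + 1) ^ 2 : ℕ))
        ≤ ∑ n ∈ range H, 2 * (N : ℝ) * -((#A : ℝ) / N * #A / 2) := by
          refine sum_le_sum fun n hn => mul_le_mul_of_nonneg_left ?_ (by positivity)
          refine sum_balanced_mul_le hN hA (fun x hx => ?_) ?_ hedge
          · exact_mod_cast hdiff x hx (n + 1) (Nat.succ_pos n)
          · have h2 : (n + 1) ^ 2 ≤ H ^ 2 := Nat.pow_le_pow_left (mem_range.1 hn) 2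
            omega
      _ = -(2 * N * H * (#A / N) * #A / 2) := by
          rw [sum_const, card_range, nsmul_eq_mul]
          ring
  have hall : 2 * N * H * (#A / N) * #A / 2
      ≤ ∑ k ∈ range (2 * N),
        ‖balancedFourier A N k‖ ^ 2 * ‖squareSum H ((k : ℕ) / (2 * N : ℕ))‖ := by
    have h1 : ‖∑ k ∈ range (2 * N), (‖balancedFourier A N k‖ ^ 2 : ℂ) *
        squareSum H ((k : ℕ) / (2 * N : ℕ))‖
        ≤ ∑ k ∈ range (2 * N),
          ‖balancedFourier A N k‖ ^ 2 * ‖squareSum H ((k : ℕ) / (2 * N : ℕ))‖ := by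
      refine (norm_sum_le _ _).trans (le_of_eq (sum_congr rfl fun k _ => ?_))
      rw [norm_mul, norm_pow, Complex.norm_real, norm_norm]
    refine le_trans ?_ h1
    rw [hsum, Complex.norm_real, Real.norm_eq_abs]
    exact le_trans (by linarith) (neg_le_abs _)
  have hminor : ∑ k ∈ range (2 * N) with ‖squareSum H ((k : ℕ) / (2 * N : ℕ))‖ ≤ #A / N / 4 * H,
        ‖balancedFourier A N k‖ ^ 2 * ‖squareSum H ((k : ℕ) / (2 * N : ℕ))‖
      ≤ #A / N / 4 * H * (2 * N * #A) := by
    calc ∑ k ∈ range (2 * N) with ‖squareSum H ((k : ℕ) / (2 * N : ℕ))‖ ≤ #A / N / 4 * H,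
        ‖balancedFourier A N k‖ ^ 2 * ‖squareSum H ((k : ℕ) / (2 * N : ℕ))‖
        ≤ ∑ k ∈ range (2 * N) with ‖squareSum H ((k : ℕ) / (2 * N : ℕ))‖ ≤ #A / N / 4 * H,
          ‖balancedFourier A N k‖ ^ 2 * (#A / N / 4 * H) :=
          sum_le_sum fun k hk => mul_le_mul_of_nonneg_left (mem_filter.1 hk).2 (by positivity)
      _ ≤ ∑ k ∈ range (2 * N), ‖balancedFourier A N k‖ ^ 2 * (#A / N / 4 * H) :=
          sum_le_sum_of_subset_of_nonneg (filter_subset _ _) fun _ _ _ => by positivity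
      _ ≤ #A / N / 4 * H * (2 * N * #A) := by
          rw [← sum_mul, mul_comm]
          exact mul_le_mul_of_nonneg_left (sum_balancedFourier_sq hN hA) (by positivity)
  have hsplit := sum_filter_add_sum_filter_not (range (2 * N))
    (fun k : ℕ => ‖squareSum H ((k : ℕ) / (2 * N : ℕ))‖ ≤ #A / N / 4 * H)
    (fun k => ‖balancedFourier A N k‖ ^ 2 * ‖squareSum H ((k : ℕ) / (2 * N : ℕ))‖)
  rw [← hsplit] at hall
  have h9 : (#A : ℝ) / N / 4 * H * (2 * N * #A) = 2 * N * H * (#A / N) * #A / 4 := by ring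
  rw [h9] at hminor
  linarith

theorem one_add_log_le_two_mul_sqrt {y : ℝ} (hy : 1 ≤ y) : 1 + Real.log y ≤ 2 * √y := by
  have h1 := Real.log_le_sub_one_of_pos (Real.sqrt_pos.2 (by linarith : 0 < y))
  rw [Real.log_sqrt (by linarith)] at h1
  linarith

theorem exists_major_arc {H : ℕ} (hH : 1 ≤ H) {δ θ : ℝ} (hδ : 0 < δ)
    (hδH : 256 * (1 + Real.log H) ≤ δ ^ 2 * H) (hθ : δ * H < ‖squareSum H θ‖) :
    ∃ ρ : ℚ, ‖squareSum H θ‖ ^ 2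
        ≤ 16 * (H ^ 2 / ρ.den) * (1 + Real.log (1 + 4 * H ^ 2 * |θ - ρ|))
          / (1 + 4 * H ^ 2 * |θ - ρ|) ∧
      (ρ.den : ℝ) ≤ 16 / δ ^ 2 ∧ 1 + 4 * H ^ 2 * |θ - ρ| ≤ 1024 / δ ^ 4 := by
  obtain ⟨ρ, hρ⟩ := exists_rat_norm_sum_expi_sq_le θ hH
  refine ⟨ρ, ?_⟩
  rw [← squareSum] at hρ
  set y := 1 + 4 * H ^ 2 * |θ - ρ| with hy
  have hy1 : 1 ≤ y := by
    rw [hy]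
    have : 0 ≤ 4 * (H : ℝ) ^ 2 * |θ - ρ| := by positivity
    linarith
  have hHR : (1 : ℝ) ≤ H := by exact_mod_cast hH
  have hd : (1 : ℝ) ≤ ρ.den := by exact_mod_cast ρ.den_pos
  have hS : δ ^ 2 * H ^ 2 < ‖squareSum H θ‖ ^ 2 := by
    rw [← mul_pow]
    exact pow_lt_pow_left₀ hθ (by positivity) two_ne_zero
  have h1 : 128 * H * (1 + Real.log H) ≤ δ ^ 2 * H ^ 2 / 2 := by nlinarith
  have h2 : ‖squareSum H θ‖ ^ 2 ≤ 16 * (H ^ 2 / ρ.den) * (1 + Real.log y) / y := by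
    have h3 : 16 * ((H : ℝ) ^ 2 / ρ.den) * (1 + Real.log y) / y
        = 2 * (8 * ((H : ℝ) ^ 2 / ρ.den) * (1 + Real.log y) / y) := by ring
    rw [h3]
    linarith
  have hlog : 0 ≤ Real.log y := Real.log_nonneg hy1
  have h4 : δ ^ 2 * (ρ.den * y) ≤ 16 * (1 + Real.log y) := by
    have h5 := hS.le.trans h2
    rw [le_div_iff₀ (by linarith)] at h5
    have h6 : 16 * ((H : ℝ) ^ 2 / ρ.den) * (1 + Real.log y)
        = 16 * (1 + Real.log y) * H ^ 2 / ρ.den := by ring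
    rw [h6, le_div_iff₀ (by linarith)] at h5
    have h7 : (0 : ℝ) < H ^ 2 := by positivity
    refine le_of_mul_le_mul_right ?_ h7
    linarith
  refine ⟨h2, ?_, ?_⟩
  · rw [le_div_iff₀ (by positivity)]
    have h5 : 1 + Real.log y ≤ y := by
      have := Real.log_le_sub_one_of_pos (by linarith : 0 < y)
      linarith
    refine le_of_mul_le_mul_right ?_ (by linarith : 0 < y)
    nlinarith
  · have h5 := one_add_log_le_two_mul_sqrt hy1
    have hsy : √y * √y = y := Real.mul_self_sqrt (by linarith)
    have hsy0 : 0 < √y := Real.sqrt_pos.2 (by linarith)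
    have h6 : δ ^ 2 * √y ≤ 32 := by
      refine le_of_mul_le_mul_right ?_ hsy0
      have h7 : δ ^ 2 * y ≤ δ ^ 2 * (ρ.den * y) := by
        refine mul_le_mul_of_nonneg_left ?_ (by positivity)
        nlinarith
      nlinarith
    rw [le_div_iff₀ (by positivity)]
    have h7 : (δ ^ 2 * √y) ^ 2 ≤ 32 ^ 2 := pow_le_pow_left₀ (by positivity) h6 2
    nlinarith

theorem sum_mul_pow_le {κ : Type*} (s : Finset κ) (w z : κ → ℝ) (hw : ∀ i ∈ s, 0 ≤ w i)
    (hz : ∀ i ∈ s, 0 ≤ z i) (n : ℕ) :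
    (∑ i ∈ s, w i * z i) ^ (n + 1) ≤ (∑ i ∈ s, w i) ^ n * ∑ i ∈ s, w i * z i ^ (n + 1) := by
  rcases (sum_nonneg hw).eq_or_lt with h0 | h0
  · have h1 : ∀ i ∈ s, w i = 0 := (sum_eq_zero_iff_of_nonneg hw).1 h0.symm
    have h2 : ∀ f : κ → ℝ, ∑ i ∈ s, w i * f i = 0 := fun f =>
      sum_eq_zero fun i hi => by rw [h1 i hi, zero_mul]
    rw [h2, h2 fun i => z i ^ (n + 1)]
    simp
  · set W := ∑ i ∈ s, w i with hW
    have h1 := Real.pow_arith_mean_le_arith_mean_pow s (fun i => w i / W) z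
      (fun i hi => div_nonneg (hw i hi) h0.le) (by rw [← sum_div, div_self h0.ne']) hz (n + 1)
    simp_rw [div_mul_eq_mul_div] at h1
    rw [← sum_div, ← sum_div, div_pow, div_le_div_iff₀ (by positivity) h0] at h1
    refine le_of_mul_le_mul_right ?_ h0
    refine h1.trans (le_of_eq ?_)
    ring

theorem sum_abs_balanced_le {A : Finset ℤ} {N : ℕ} (hN : 0 < N) (hA : A ⊆ Ico (0 : ℤ) N) :
    ∑ x ∈ Ico (0 : ℤ) N, |balanced A N x| ≤ 2 * #A := by
  have hNR : (0 : ℝ) < N := by exact_mod_cast hN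
  calc ∑ x ∈ Ico (0 : ℤ) N, |balanced A N x|
      ≤ ∑ x ∈ Ico (0 : ℤ) N, ((if x ∈ A then 1 else 0) + (#A / N : ℝ)) := by
        refine sum_le_sum fun x hx => ?_
        rw [balanced, if_pos hx, mul_one]
        refine (abs_sub _ _).trans (le_of_eq ?_)
        rw [abs_of_nonneg (by positivity : (0 : ℝ) ≤ #A / N)]
        split_ifs <;> simp
    _ = 2 * #A := by
        rw [sum_add_distrib, ← sum_filter, filter_mem_eq_inter, inter_eq_right.2 hA]
        simp only [sum_const, Int.card_Ico, nsmul_eq_mul, mul_one, sub_zero, Int.toNat_natCast]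
        field_simp
        ring

theorem abs_balanced_le_one {A : Finset ℤ} {N : ℕ} (hA : A ⊆ Ico (0 : ℤ) N) (x : ℤ) :
    |balanced A N x| ≤ 1 := by
  have h1 : (#A / N : ℝ) ≤ 1 := by
    refine div_le_one_of_le₀ ?_ (Nat.cast_nonneg N)
    have := card_le_card hA
    rw [Int.card_Ico] at this
    simp only [sub_zero, Int.toNat_natCast] at this
    exact_mod_cast this
  have h2 : (0 : ℝ) ≤ #A / N := by positivity
  rw [balanced, abs_le]
  split_ifs <;> constructor <;> linarith

theorem sum_balancedFourier_pow_le {A : Finset ℤ} {N : ℕ} (hN : 0 < N) (hA : A ⊆ Ico (0 : ℤ) N)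
    (Γ : Finset ℕ) (S : ℕ → ℝ) (hS : ∀ k, 0 ≤ S k) (n : ℕ) :
    (∑ k ∈ Γ, ‖balancedFourier A N k‖ ^ 2 * S k) ^ (n + 1)
      ≤ (2 * #A) ^ n * ∑ x ∈ range (2 * N),
        ‖∑ k ∈ Γ, (S k * (starRingEnd ℂ) (balancedFourier A N k)) *
          expi (k * x / (2 * N : ℕ))‖ ^ (n + 1) := by
  set G : ℤ → ℂ := fun x => ∑ k ∈ Γ, (S k * (starRingEnd ℂ) (balancedFourier A N k)) *
          expi (k * x / (2 * N : ℕ)) with hG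
  have h1 : ((∑ k ∈ Γ, ‖balancedFourier A N k‖ ^ 2 * S k : ℝ) : ℂ)
      = ∑ x ∈ Ico (0 : ℤ) N, (balanced A N x : ℂ) * G x := by
    simp only [hG, mul_sum]
    rw [sum_comm, Complex.ofReal_sum]
    refine sum_congr rfl fun k _ => ?_
    have h2 : ((‖balancedFourier A N k‖ ^ 2 : ℝ) : ℂ)
        = balancedFourier A N k * (starRingEnd ℂ) (balancedFourier A N k) := by
      rw [Complex.mul_conj, Complex.normSq_eq_norm_sq]
    rw [Complex.ofReal_mul, h2]
    conv_lhs => rw [balancedFourier]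
    rw [sum_mul, sum_mul]
    refine sum_congr rfl fun x _ => ?_
    rw [← balancedFourier, mul_comm (x : ℝ) (k : ℝ)]
    ring
  have hX0 : 0 ≤ ∑ k ∈ Γ, ‖balancedFourier A N k‖ ^ 2 * S k :=
    sum_nonneg fun k _ => mul_nonneg (by positivity) (hS k)
  have h2 : ∑ k ∈ Γ, ‖balancedFourier A N k‖ ^ 2 * S k
      ≤ ∑ x ∈ Ico (0 : ℤ) N, |balanced A N x| * ‖G x‖ := by
    rw [← abs_of_nonneg hX0, ← Real.norm_eq_abs, ← Complex.norm_real, h1]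
    refine (norm_sum_le _ _).trans (le_of_eq (sum_congr rfl fun x _ => ?_))
    rw [norm_mul, Complex.norm_real, Real.norm_eq_abs]
  have h3 : ∑ x ∈ Ico (0 : ℤ) N, ‖G x‖ ^ (n + 1) ≤ ∑ x ∈ range (2 * N), ‖G (x : ℤ)‖ ^ (n + 1) := by
    have h4 : Ico (0 : ℤ) N = (Ico 0 N).image fun x : ℕ => (x : ℤ) := by
      ext x
      simp only [mem_Ico, mem_image]
      constructor
      · intro hx
        exact ⟨x.toNat, by omega, by omega⟩
      · rintro ⟨y, hy, rfl⟩
        omega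
    rw [h4, sum_image fun x _ y _ h => by exact_mod_cast h]
    refine sum_le_sum_of_subset_of_nonneg ?_ fun _ _ _ => by positivity
    intro x hx
    have := mem_Ico.1 hx
    exact mem_range.2 (by omega)
  calc (∑ k ∈ Γ, ‖balancedFourier A N k‖ ^ 2 * S k) ^ (n + 1)
      ≤ (∑ x ∈ Ico (0 : ℤ) N, |balanced A N x| * ‖G x‖) ^ (n + 1) := pow_le_pow_left₀ hX0 h2 _
    _ ≤ (∑ x ∈ Ico (0 : ℤ) N, |balanced A N x|) ^ n *
          ∑ x ∈ Ico (0 : ℤ) N, |balanced A N x| * ‖G x‖ ^ (n + 1) :=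
        sum_mul_pow_le _ _ _ (fun _ _ => abs_nonneg _) (fun _ _ => norm_nonneg _) n
    _ ≤ (2 * #A) ^ n * ∑ x ∈ Ico (0 : ℤ) N, ‖G x‖ ^ (n + 1) := by
        refine mul_le_mul (pow_le_pow_left₀ (sum_nonneg fun _ _ => abs_nonneg _)
          (sum_abs_balanced_le hN hA) n) ?_ (sum_nonneg fun _ _ => by positivity) (by positivity)
        exact sum_le_sum fun x _ =>
          mul_le_of_le_one_left (by positivity) (abs_balanced_le_one hA x)
    _ ≤ (2 * #A) ^ n * ∑ x ∈ range (2 * N), ‖G (x : ℤ)‖ ^ (n + 1) :=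
        mul_le_mul_of_nonneg_left h3 (by positivity)
    _ = _ := by simp [hG]

theorem density_le_of_moment_le {N H J a Λ ν E : ℝ} {m : ℕ} (hm : 1 ≤ m) (hN : 0 < N) (hH : 0 < H)
    (hJ : 0 < J) (ha : 0 < a)
    (h : (2 * N * H * (a / N) * a / 4 / J) ^ (2 * m) ≤ (2 * a) ^ (2 * m - 1) *
      (2 * N * ((4 * m + 1) * (2 ^ 13 * Λ * H ^ 2 * (2 * N) * ν * (a / N) * a) ^ m * E))) :
    a / N ≤ (4 * m + 1) * (2 ^ 19 * J ^ 2 * Λ * ν) ^ m * E := by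
  set Z : ℝ := (2 * H ^ 2 * a ^ 4) ^ m with hZ
  have hZ0 : 0 < Z := by positivity
  have h1 : (2 * N * H * (a / N) * a / 4 / J) ^ (2 * m) * (4 * J) ^ (2 * m) = 2 ^ m * Z := by
    rw [← mul_pow, hZ, ← mul_pow, pow_mul]
    congr 1
    field_simp
  have h2 : (2 * a) ^ (2 * m - 1) * (2 * a) = (2 * a) ^ (2 * m) := by
    rw [← pow_succ]
    congr 1
    omega
  have h3 : (2 * a) ^ (2 * m) * (4 * J) ^ (2 * m) *
      (2 ^ 13 * Λ * H ^ 2 * (2 * N) * ν * (a / N) * a) ^ m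
      = (2 ^ 19 * J ^ 2 * Λ * ν) ^ m * Z := by
    rw [← mul_pow, hZ, pow_mul, ← mul_pow, ← mul_pow]
    congr 1
    field_simp
    ring
  have h4 := mul_le_mul_of_nonneg_right h (by positivity : 0 ≤ (4 * J) ^ (2 * m) * (2 * a))
  have h5 : 2 ^ m * Z * (2 * a)
      ≤ 2 * N * ((4 * m + 1) * ((2 ^ 19 * J ^ 2 * Λ * ν) ^ m * Z) * E) := by
    calc 2 ^ m * Z * (2 * a)
        = (2 * N * H * (a / N) * a / 4 / J) ^ (2 * m) * ((4 * J) ^ (2 * m) * (2 * a)) := by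
          rw [← h1]
          ring
      _ ≤ _ := h4
      _ = 2 * N * ((4 * m + 1) * (((2 * a) ^ (2 * m - 1) * (2 * a)) * (4 * J) ^ (2 * m) *
            (2 ^ 13 * Λ * H ^ 2 * (2 * N) * ν * (a / N) * a) ^ m) * E) := by ring
      _ = _ := by rw [h2, h3]
  have h6 : 2 ^ m * a ≤ N * ((4 * m + 1) * (2 ^ 19 * J ^ 2 * Λ * ν) ^ m * E) := by
    refine le_of_mul_le_mul_right ?_ (by positivity : 0 < 2 * Z)
    linarith
  have h7 : (1 : ℝ) ≤ 2 ^ m := one_le_pow₀ (by norm_num)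
  rw [div_le_iff₀ hN, mul_comm]
  nlinarith

theorem sum_dyadic_arc_pow_le {A : Finset ℤ} {N H Q m j : ℕ} (hN : 0 < N) (hm : 1 ≤ m)
    (hQ : 1 ≤ Q) (hH : N ≤ 16 * H ^ 2) {Γ : Finset ℕ} (hΓ : Γ ⊆ range (2 * N)) (ρ : ℕ → ℚ)
    {Λ ν : ℝ} (hM : 2 * m * 2 ^ (j + 4) * Q ^ (2 * m) < 2 * N)
    (hS : ∀ k ∈ Γ, ‖squareSum H ((k : ℕ) / (2 * N : ℕ))‖ ^ 2
      ≤ 16 * (H ^ 2 / (ρ k).den) *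
          (1 + Real.log (1 + 4 * H ^ 2 * |(k : ℝ) / (2 * N : ℕ) - ρ k|))
          / (1 + 4 * H ^ 2 * |(k : ℝ) / (2 * N : ℕ) - ρ k|))
    (hden : ∀ k ∈ Γ, (ρ k).den ≤ Q)
    (hlow : ∀ k ∈ Γ, (2 : ℝ) ^ j ≤ 1 + 4 * H ^ 2 * |(k : ℝ) / (2 * N : ℕ) - ρ k|)
    (hupp : ∀ k ∈ Γ, 1 + 4 * H ^ 2 * |(k : ℝ) / (2 * N : ℕ) - ρ k| ≤ 2 ^ (j + 1))
    (hΛ : ∀ k ∈ Γ, 1 + Real.log (1 + 4 * H ^ 2 * |(k : ℝ) / (2 * N : ℕ) - ρ k|) ≤ Λ)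
    (hL2 : ∀ q ∈ Icc 1 Q, ∑ k ∈ Γ with (ρ k).den = q, ‖balancedFourier A N k‖ ^ 2
      ≤ 8 * (2 * N) * ν * (#A / N) * #A) (hΛ0 : 0 ≤ Λ) :
    ∑ x ∈ range (2 * N),
        ‖∑ k ∈ Γ, (‖squareSum H ((k : ℕ) / (2 * N : ℕ))‖ *
          (starRingEnd ℂ) (balancedFourier A N k)) * expi (k * x / (2 * N : ℕ))‖ ^ (2 * m)
      ≤ (2 * N : ℕ) * ((4 * m + 1) * (2 ^ 13 * Λ * H ^ 2 * (2 * N) * ν * (#A / N) * #A) ^ m *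
        (1 + 2 * m * Real.log Q) ^ 2 ^ (2 * m)) := by
  have hNR : (0 : ℝ) < N := by exact_mod_cast hN
  have hHR : (N : ℝ) ≤ 16 * H ^ 2 := by exact_mod_cast hH
  refine sum_norm_pow_le_of_approx Γ (K := 2 ^ (j + 4)) (T := 2 ^ (j + 6)) hm hQ hΓ hM ?_
    (fun k => ‖squareSum H ((k : ℕ) / (2 * N : ℕ))‖ * (starRingEnd ℂ) (balancedFourier A N k))
    ρ hden ?_ ?_
  · have : 1 ≤ 2 ^ j := Nat.one_le_two_pow
    rw [pow_add, pow_add]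
    omega
  · intro k hk
    have h1 := hupp k hk
    have h2 : (k : ℝ) - (2 * N : ℕ) * ρ k = (2 * N : ℕ) * ((k : ℝ) / (2 * N : ℕ) - ρ k) := by
      rw [mul_sub, mul_div_cancel₀]
      positivity
    rw [h2, abs_mul, abs_of_nonneg (Nat.cast_nonneg _)]
    set t := |(k : ℝ) / (2 * N : ℕ) - ρ k|
    have ht : 0 ≤ t := abs_nonneg _
    have h3 : (N : ℝ) * t ≤ 16 * H ^ 2 * t := mul_le_mul_of_nonneg_right hHR ht
    push_cast
    rw [pow_succ (2 : ℝ)] at h1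
    rw [pow_add]
    linarith
  · intro q hq
    have hq0 : (0 : ℝ) < q := by
      have := (mem_Icc.1 hq).1
      exact_mod_cast this
    have h1 : ∀ k ∈ Γ.filter (fun k => (ρ k).den = q),
        (q : ℝ) * (2 ^ (j + 6) : ℕ) * ‖(‖squareSum H ((k : ℕ) / (2 * N : ℕ))‖ : ℂ) *
          (starRingEnd ℂ) (balancedFourier A N k)‖ ^ 2
        ≤ 2 ^ 10 * H ^ 2 * Λ * ‖balancedFourier A N k‖ ^ 2 := by
      intro k hk
      obtain ⟨hk, hkq⟩ := mem_filter.1 hk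
      rw [norm_mul, Complex.norm_real, norm_norm, RCLike.norm_conj, mul_pow, ← mul_assoc]
      refine mul_le_mul_of_nonneg_right ?_ (by positivity)
      have h2 := hS k hk
      have h3 := hlow k hk
      have h4 := hΛ k hk
      rw [hkq] at h2
      set y := 1 + 4 * (H : ℝ) ^ 2 * |(k : ℝ) / (2 * N : ℕ) - ρ k|
      have hj : (0 : ℝ) < 2 ^ j := by positivity
      have h5 : 16 * ((H : ℝ) ^ 2 / q) * (1 + Real.log y) / y ≤ 16 * (H ^ 2 / q) * Λ / 2 ^ j := by
        refine div_le_div₀ (by positivity) ?_ hj h3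
        exact mul_le_mul_of_nonneg_left h4 (by positivity)
      calc (q : ℝ) * (2 ^ (j + 6) : ℕ) * ‖squareSum H ((k : ℕ) / (2 * N : ℕ))‖ ^ 2
          ≤ (q : ℝ) * (2 ^ (j + 6) : ℕ) * (16 * (H ^ 2 / q) * Λ / 2 ^ j) :=
            mul_le_mul_of_nonneg_left (h2.trans h5) (by positivity)
        _ = 2 ^ 10 * H ^ 2 * Λ := by
            push_cast
            rw [pow_add]
            field_simp
            norm_num
    rw [mul_sum]
    calc _ ≤ ∑ k ∈ Γ with (ρ k).den = q, 2 ^ 10 * H ^ 2 * Λ * ‖balancedFourier A N k‖ ^ 2 :=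
          sum_le_sum h1
      _ = 2 ^ 10 * H ^ 2 * Λ * ∑ k ∈ Γ with (ρ k).den = q, ‖balancedFourier A N k‖ ^ 2 := by
          rw [mul_sum]
      _ ≤ 2 ^ 10 * H ^ 2 * Λ * (8 * (2 * N) * ν * (#A / N) * #A) :=
          mul_le_mul_of_nonneg_left (hL2 q hq) (by positivity)
      _ = _ := by ring

theorem exists_dyadic_class {κ : Type*} (s : Finset κ) (w : κ → ℝ) (y : κ → ℝ) {Y : ℕ}
    (hy1 : ∀ k ∈ s, 1 ≤ y k) (hy : ∀ k ∈ s, y k ≤ Y) {X : ℝ}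
    (hX : X ≤ ∑ k ∈ s, w k) :
    ∃ j, j ≤ Nat.log 2 Y ∧ ∃ u ⊆ s, X / (Nat.log 2 Y + 1 : ℕ) ≤ ∑ k ∈ u, w k ∧
      ∀ k ∈ u, (2 : ℝ) ^ j ≤ y k ∧ y k ≤ 2 ^ (j + 1) := by
  classical
  set J := Nat.log 2 Y + 1 with hJ
  have hJ0 : (0 : ℝ) < J := by positivity
  have hmaps : ∀ k ∈ s, Nat.log 2 ⌊y k⌋₊ ∈ range J := by
    intro k hk
    refine mem_range.2 (lt_of_le_of_lt (Nat.log_mono_right ?_) (Nat.lt_succ_self _))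
    exact_mod_cast Nat.floor_le_of_le (hy k hk)
  have h1 := sum_fiberwise_of_maps_to hmaps w
  have h2 : ∑ _j ∈ range J, X / J ≤ ∑ j ∈ range J, ∑ k ∈ s with Nat.log 2 ⌊y k⌋₊ = j, w k := by
    rw [h1, sum_const, card_range, nsmul_eq_mul, mul_div_cancel₀ _ hJ0.ne']
    exact hX
  obtain ⟨j, hj, hj2⟩ := exists_le_of_sum_le (nonempty_range_iff.2 (by omega)) h2
  refine ⟨j, Nat.lt_succ_iff.1 (mem_range.1 hj), _, filter_subset _ s, hj2, ?_⟩
  intro k hk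
  obtain ⟨hk, hkj⟩ := mem_filter.1 hk
  have h3 : ⌊y k⌋₊ ≠ 0 := by
    have := Nat.floor_pos.2 (hy1 k hk)
    omega
  have h4 := Nat.pow_log_le_self 2 h3
  have h5 := Nat.lt_pow_succ_log_self (b := 2) (by norm_num) ⌊y k⌋₊
  rw [hkj] at h4 h5
  constructor
  · have h6 : ((2 ^ j : ℕ) : ℝ) ≤ ⌊y k⌋₊ := by exact_mod_cast h4
    push_cast at h6
    exact h6.trans (Nat.floor_le (by linarith [hy1 k hk]))
  · have h6 := Nat.lt_floor_add_one (y k)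
    have h7 : ((⌊y k⌋₊ + 1 : ℕ) : ℝ) ≤ ((2 ^ j.succ : ℕ) : ℝ) := by exact_mod_cast h5
    rw [Nat.succ_eq_add_one] at h7
    push_cast at h7
    linarith

theorem sum_arc_balancedFourier_sq_le {A : Finset ℤ} {N R H ℓ q : ℕ} {ν : ℝ} (hN : 0 < N)
    (hA : A ⊆ Ico (0 : ℤ) N) (hR : 2 ^ 41 ≤ R) (hνR : 1 ≤ ν * R)
    (hAN : N ≤ R * #A) (hℓ : 0 < ℓ) (hℓN : ℓ * R ^ 9 ≤ N) (hH : N ≤ 16 * H ^ 2)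
    (hq : q ≤ 2 ^ 8 * R ^ 2)
    (hinc : ∀ y : ℤ, (#{t ∈ range ℓ | y + ((q ^ 2 : ℕ) : ℤ) * (t : ℕ) ∈ A} : ℝ)
      ≤ (1 + ν) * (#A / N) * ℓ)
    (Γ : Finset ℕ) (hΓ : Γ ⊆ range (2 * N)) (ρ : ℕ → ℚ) (hden : ∀ k ∈ Γ, (ρ k).den = q)
    (hupp : ∀ k ∈ Γ, 1 + 4 * H ^ 2 * |(k : ℝ) / (2 * N : ℕ) - ρ k| ≤ 2 ^ 18 * R ^ 4) :
    ∑ k ∈ Γ, ‖balancedFourier A N k‖ ^ 2 ≤ 8 * (2 * N) * ν * (#A / N) * #A := by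
  have hRR : (2 : ℝ) ^ 41 ≤ R := by exact_mod_cast hR
  have hR0 : (0 : ℝ) < R := lt_of_lt_of_le (by positivity) hRR
  have hNR : (0 : ℝ) < N := by exact_mod_cast hN
  have hℓR : (0 : ℝ) < ℓ := by exact_mod_cast hℓ
  have hℓN' : (ℓ : ℝ) * R ^ 9 ≤ N := by exact_mod_cast hℓN
  have hAN' : (N : ℝ) ≤ R * #A := by exact_mod_cast hAN
  have hHR : (N : ℝ) ≤ 16 * H ^ 2 := by exact_mod_cast hH
  have hqR : (q : ℝ) ≤ 2 ^ 8 * R ^ 2 := by exact_mod_cast hq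
  have hq2 : (q : ℝ) ^ 2 ≤ 2 ^ 16 * R ^ 4 := by
    refine (pow_le_pow_left₀ (Nat.cast_nonneg q) hqR 2).trans (le_of_eq ?_)
    ring
  have h1R : (1 : ℝ) ≤ R := le_trans (by norm_num) hRR
  have hd4 : 4 * ((q ^ 2 : ℕ) * ℓ : ℝ) * R ^ 2 ≤ N := by
    push_cast
    calc 4 * ((q : ℝ) ^ 2 * ℓ) * R ^ 2 ≤ 4 * ((2 ^ 16 * R ^ 4) * ℓ) * R ^ 2 := by gcongr
      _ = (ℓ : ℝ) * ((R : ℝ) ^ 6 * 2 ^ 18) := by ring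
      _ ≤ (ℓ : ℝ) * ((R : ℝ) ^ 6 * (R : ℝ) ^ 3) := by
          gcongr
          calc (2 : ℝ) ^ 18 ≤ 2 ^ 41 := by norm_num
            _ ≤ (R : ℝ) := hRR
            _ ≤ (R : ℝ) ^ 3 := le_self_pow₀ h1R (by norm_num)
      _ = (ℓ : ℝ) * (R : ℝ) ^ 9 := by ring
      _ ≤ (N : ℝ) := hℓN'
  refine sum_balancedFourier_sq_le hN hA (d := q ^ 2) hℓ ?_ ?_ hinc Γ hΓ ?_
  · have h2 : ((q ^ 2 : ℕ) * ℓ : ℝ) ≤ N := by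
      have h3 : (0 : ℝ) ≤ (q ^ 2 : ℕ) * ℓ := by positivity
      have h4 : (1 : ℝ) ≤ R ^ 2 := one_le_pow₀ h1R
      nlinarith
    exact_mod_cast h2
  · have h2 : (N : ℝ) ≤ ν * #A * R ^ 2 := by
      calc (N : ℝ) ≤ R * #A := hAN'
        _ ≤ R * #A * (ν * R) := le_mul_of_one_le_right (by positivity) hνR
        _ = _ := by ring
    exact le_of_mul_le_mul_right (hd4.trans h2) (by positivity)
  · intro k hk
    have h2 := hupp k hk
    rw [← hden k hk]
    refine half_le_norm_sum_expi_of_approx (ρ k) ?_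
    rw [hden k hk]
    set t := |(k : ℝ) / (2 * N : ℕ) - ρ k|
    have ht : 0 ≤ t := abs_nonneg _
    have h3 : t * N ≤ 2 ^ 20 * R ^ 4 := by
      have : (N : ℝ) * t ≤ 16 * H ^ 2 * t := mul_le_mul_of_nonneg_right hHR ht
      nlinarith
    refine le_of_mul_le_mul_right ?_ hNR
    calc t * (q : ℝ) ^ 2 * ℓ * (N : ℝ) = (t * (N : ℝ)) * (q : ℝ) ^ 2 * ℓ := by ring
      _ ≤ (2 ^ 20 * (R : ℝ) ^ 4) * (2 ^ 16 * (R : ℝ) ^ 4) * ℓ := by gcongr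
      _ = 1 / 8 * ((ℓ : ℝ) * ((R : ℝ) ^ 8 * 2 ^ 39)) := by ring
      _ ≤ 1 / 8 * ((ℓ : ℝ) * ((R : ℝ) ^ 8 * R)) := by
          gcongr
          exact le_trans (by norm_num) hRR
      _ = 1 / 8 * ((ℓ : ℝ) * (R : ℝ) ^ 9) := by ring
      _ ≤ 1 / 8 * (N : ℝ) := by gcongr

theorem log_two_pow_mul_pow_le {R : ℕ} (hR : 2 ^ 41 ≤ R) :
    Real.log ((2 ^ 18 * R ^ 4 : ℕ) : ℝ) ≤ 9 / 2 * Real.log R ∧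
    Real.log ((2 ^ 8 * R ^ 2 : ℕ) : ℝ) ≤ 3 * Real.log R ∧ 28 ≤ Real.log R := by
  have hRR : (2 : ℝ) ^ 41 ≤ R := by exact_mod_cast hR
  have hR0 : (0 : ℝ) < R := lt_of_lt_of_le (by positivity) hRR
  have h1 : 41 * Real.log 2 ≤ Real.log R := by
    have := Real.log_le_log (by positivity) hRR
    rwa [Real.log_pow, Nat.cast_ofNat] at this
  have h2 := Real.log_two_gt_d9
  push_cast
  rw [Real.log_mul (by positivity) (by positivity), Real.log_mul (by positivity) (by positivity),
    show (262144 : ℝ) = 2 ^ 18 by norm_num, show (256 : ℝ) = 2 ^ 8 by norm_num,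
    Real.log_pow, Real.log_pow, Real.log_pow, Real.log_pow]
  push_cast
  refine ⟨?_, ?_, ?_⟩ <;> linarith

theorem natLog_two_pow_mul_pow_add_one_le {R : ℕ} (hR : 2 ^ 41 ≤ R) :
    ((Nat.log 2 (2 ^ 18 * R ^ 4) + 1 : ℕ) : ℝ) ≤ 8 * Real.log R := by
  obtain ⟨h1, -, h2⟩ := log_two_pow_mul_pow_le hR
  have h3 := Nat.pow_log_le_self 2 (x := 2 ^ 18 * R ^ 4) (by positivity)
  set J := Nat.log 2 (2 ^ 18 * R ^ 4)
  have h4 : ((2 ^ J : ℕ) : ℝ) ≤ ((2 ^ 18 * R ^ 4 : ℕ) : ℝ) := by exact_mod_cast h3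
  have h5 := Real.log_le_log (by positivity) h4
  rw [Nat.cast_pow, Real.log_pow, Nat.cast_ofNat] at h5
  have h6 := Real.log_two_gt_d9
  have h7 := mul_le_mul_of_nonneg_left h6.le (Nat.cast_nonneg (α := ℝ) J)
  have h8 := h5.trans h1
  rw [Nat.cast_succ]
  linarith

theorem le_sixteen_mul_sqrt_sq {N : ℕ} (hN : 3 ≤ Nat.sqrt (N / 8)) :
    N ≤ 16 * Nat.sqrt (N / 8) ^ 2 := by
  have h1 := Nat.lt_succ_sqrt' (N / 8)
  set s := Nat.sqrt (N / 8)
  have h2 : N < 8 * (s + 1) ^ 2 := by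
    have : N / 8 < (s + 1) ^ 2 := h1
    omega
  nlinarith

theorem exists_density_increment {A : Finset ℤ} {N R m ℓ : ℕ} {ν : ℝ} (hA : A ⊆ Ico (0 : ℤ) N)
    (hdiff : ∀ x ∈ A, ∀ n : ℕ, 0 < n → x + n ^ 2 ∉ A) (hR : 2 ^ 41 ≤ R) (hν0 : 0 < ν)
    (hν : ν ≤ 1 / 2) (hνR : 1 ≤ ν * R) (hm : 1 ≤ m) (hmR : m ≤ R) (hN : R ^ (6 * m + 10) ≤ N)
    (hAN : N ≤ R * #A) (hℓ : 0 < ℓ) (hℓN : ℓ * R ^ 9 ≤ N)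
    (hsmall : R * ((4 * m + 1) * (2 ^ 28 * Real.log R ^ 3 * ν) ^ m *
      (1 + 6 * m * Real.log R) ^ 2 ^ (2 * m)) < 1) :
    ∃ q : ℕ, 0 < q ∧ ∃ y : ℤ, (1 + ν) * (#A / N) * ℓ
      < #{t ∈ range ℓ | y + ((q ^ 2 : ℕ) : ℤ) * (t : ℕ) ∈ A} := by
  by_contra! hinc
  have hRpos : 0 < R := lt_of_lt_of_le (by positivity) hR
  have hR0 : (0 : ℝ) < R := by exact_mod_cast hRpos
  have hN16 : R ^ 16 ≤ N := (Nat.pow_le_pow_right hRpos (by omega)).trans hN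
  have hN0 : 0 < N := lt_of_lt_of_le (by positivity) hN16
  have hNR : (0 : ℝ) < N := by exact_mod_cast hN0
  have hA0 : 0 < #A := by
    by_contra! h
    have : #A = 0 := by omega
    rw [this] at hAN
    omega
  have hAR : (0 : ℝ) < #A := by exact_mod_cast hA0
  have hα : 1 / (R : ℝ) ≤ #A / N := by
    rw [div_le_div_iff₀ hR0 hNR, one_mul, mul_comm]
    exact_mod_cast hAN
  obtain ⟨hlogY, hlogQ, hlogR⟩ := log_two_pow_mul_pow_le hR
  have hlogJ := natLog_two_pow_mul_pow_add_one_le hR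
  set H := Nat.sqrt (N / 8) with hHdef
  have hHlow : 2 ^ 26 * R ^ 4 ≤ H := by
    refine Nat.le_sqrt'.2 ((Nat.le_div_iff_mul_le (by norm_num)).2 (le_trans ?_ hN16))
    calc (2 ^ 26 * R ^ 4) ^ 2 * 8 = 2 ^ 55 * R ^ 8 := by ring
      _ ≤ (2 ^ 41) ^ 8 * R ^ 8 := Nat.mul_le_mul_right _ (by norm_num)
      _ ≤ R ^ 8 * R ^ 8 := Nat.mul_le_mul_right _ (Nat.pow_le_pow_left hR 8)
      _ = R ^ 16 := by ring
  have hH26 : 2 ^ 26 ≤ H := le_trans (Nat.le_mul_of_pos_right _ (by positivity)) hHlow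
  have hH8 : 8 * H ^ 2 ≤ N := by
    have h1 : H ^ 2 ≤ N / 8 := Nat.sqrt_le' (N / 8)
    omega
  have hH16 : N ≤ 16 * H ^ 2 := le_sixteen_mul_sqrt_sq (le_trans (by norm_num) hH26)
  have hHpos : (0 : ℝ) < H := by
    have : 0 < H := lt_of_lt_of_le (by norm_num) hH26
    exact_mod_cast this
  have hedge : ∀ u : ℤ, ∀ L : ℕ, 8 * L ≤ N → (#(A ∩ Ico u (u + L)) : ℝ) ≤ #A / 4 := by
    intro u L hL
    refine card_inter_Ico_le_quarter hN0 hν hℓ (le_trans ?_ hℓN) (fun y => ?_) u hL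
    · rw [mul_comm]
      refine Nat.mul_le_mul_left ℓ (le_trans (by norm_num) (hR.trans ?_))
      exact Nat.le_self_pow (by norm_num) R
    · simpa using hinc 1 one_pos y
  have hlower := le_sum_balancedFourier_sq_mul_squareSum hN0 hA hdiff hH8 hedge
  set Γ := (range (2 * N)).filter
    fun k : ℕ => ¬‖squareSum H ((k : ℕ) / (2 * N : ℕ))‖ ≤ #A / N / 4 * H with hΓ
  set δ : ℝ := #A / N / 4 with hδ
  have hδ0 : 0 < δ := by positivity
  have hδR : 1 / (4 * R : ℝ) ≤ δ := by
    rw [hδ, one_div, mul_inv, mul_comm, ← one_div, ← div_eq_mul_inv]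
    exact div_le_div_of_nonneg_right hα (by norm_num)
  have hδinv : 1 / δ ≤ 4 * R := by
    rw [div_le_iff₀ hδ0]
    rw [div_le_iff₀ (by positivity)] at hδR
    linarith
  have hδH : 256 * (1 + Real.log H) ≤ δ ^ 2 * H := by
    have h1 := one_add_log_le_two_mul_sqrt (y := H)
      (by exact_mod_cast (le_trans (by norm_num) hH26))
    have h2 : (2 : ℝ) ^ 13 * R ^ 2 ≤ √H := by
      refine Real.le_sqrt_of_sq_le ?_
      have h3 : ((2 ^ 26 * R ^ 4 : ℕ) : ℝ) ≤ H := by exact_mod_cast hHlow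
      push_cast at h3
      refine le_trans (le_of_eq ?_) h3
      ring
    have h4 : 512 ≤ δ ^ 2 * √H := by
      calc (512 : ℝ) = (1 / (4 * R)) ^ 2 * (2 ^ 13 * R ^ 2) := by
            field_simp
            norm_num
        _ ≤ δ ^ 2 * √H := by gcongr
    have h5 : √(H : ℝ) * √H = H := Real.mul_self_sqrt hHpos.le
    have h6 : 0 ≤ √(H : ℝ) := Real.sqrt_nonneg _
    calc 256 * (1 + Real.log H) ≤ 512 * √H := by linarith
      _ ≤ δ ^ 2 * √H * √H := mul_le_mul_of_nonneg_right h4 h6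
      _ = δ ^ 2 * H := by rw [mul_assoc, h5]
  have hmajor : ∀ k : ℕ, ∃ ρ : ℚ, k ∈ Γ → ‖squareSum H ((k : ℕ) / (2 * N : ℕ))‖ ^ 2
        ≤ 16 * (H ^ 2 / ρ.den) *
          (1 + Real.log (1 + 4 * H ^ 2 * |(k : ℝ) / (2 * N : ℕ) - ρ|))
          / (1 + 4 * H ^ 2 * |(k : ℝ) / (2 * N : ℕ) - ρ|) ∧
      ρ.den ≤ 2 ^ 8 * R ^ 2 ∧
      1 + 4 * H ^ 2 * |(k : ℝ) / (2 * N : ℕ) - ρ| ≤ (2 ^ 18 * R ^ 4 : ℕ) := by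
    intro k
    by_cases hk : k ∈ Γ
    · obtain ⟨ρ, h1, h2, h3⟩ := exists_major_arc (le_trans (by norm_num) hH26) hδ0 hδH
        (not_le.1 (mem_filter.1 hk).2)
      refine ⟨ρ, fun _ => ⟨h1, ?_, h3.trans ?_⟩⟩
      · have h4 : (ρ.den : ℝ) ≤ (2 ^ 8 * R ^ 2 : ℕ) := by
          refine h2.trans ?_
          push_cast
          calc 16 / δ ^ 2 = 16 * (1 / δ) ^ 2 := by rw [one_div, inv_pow, div_eq_mul_inv]
            _ ≤ 16 * (4 * (R : ℝ)) ^ 2 := by gcongr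
            _ = 256 * (R : ℝ) ^ 2 := by ring
        exact_mod_cast h4
      · push_cast
        calc 1024 / δ ^ 4 = 1024 * (1 / δ) ^ 4 := by rw [one_div, inv_pow, div_eq_mul_inv]
          _ ≤ 1024 * (4 * (R : ℝ)) ^ 4 := by gcongr
          _ = 262144 * (R : ℝ) ^ 4 := by ring
    · exact ⟨0, fun h => absurd h hk⟩
  choose ρ hρ using hmajor
  have hy1 : ∀ k ∈ Γ, 1 ≤ 1 + 4 * (H : ℝ) ^ 2 * |(k : ℝ) / (2 * N : ℕ) - ρ k| := fun k _ =>
    le_add_of_nonneg_right (by positivity)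
  obtain ⟨j, hj, u, hu, hsum, hyu⟩ := exists_dyadic_class Γ
    (fun k => ‖balancedFourier A N k‖ ^ 2 * ‖squareSum H ((k : ℕ) / (2 * N : ℕ))‖)
    (fun k => 1 + 4 * (H : ℝ) ^ 2 * |(k : ℝ) / (2 * N : ℕ) - ρ k|) hy1
    (fun k hk => (hρ k hk).2.2) hlower
  have huN : u ⊆ range (2 * N) := hu.trans (filter_subset _ _)
  have hj2 : 2 ^ j ≤ 2 ^ 18 * R ^ 4 :=
    (Nat.pow_le_pow_right (by norm_num) hj).trans (Nat.pow_log_le_self 2 (by positivity))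
  have hM : 2 * m * 2 ^ (j + 4) * (2 ^ 8 * R ^ 2) ^ (2 * m) < 2 * N := by
    have h1 : (2 ^ 8 * R ^ 2) ^ (2 * m) ≤ R ^ (5 * m) := by
      rw [pow_mul, pow_mul]
      refine Nat.pow_le_pow_left ?_ m
      calc (2 ^ 8 * R ^ 2) ^ 2 = 2 ^ 16 * R ^ 4 := by ring
        _ ≤ R * R ^ 4 := Nat.mul_le_mul_right _ (le_trans (by norm_num) hR)
        _ = R ^ 5 := by ring
    have h2 : 2 ^ (j + 4) ≤ R ^ 5 := by
      calc 2 ^ (j + 4) = 2 ^ j * 16 := by rw [pow_add]; norm_num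
        _ ≤ 2 ^ 18 * R ^ 4 * 16 := Nat.mul_le_mul_right _ hj2
        _ = 2 ^ 22 * R ^ 4 := by ring
        _ ≤ R * R ^ 4 := Nat.mul_le_mul_right _ (le_trans (by norm_num) hR)
        _ = R ^ 5 := by ring
    calc 2 * m * 2 ^ (j + 4) * (2 ^ 8 * R ^ 2) ^ (2 * m)
        ≤ 2 * R * R ^ 5 * R ^ (5 * m) := by gcongr
      _ = 2 * R ^ (5 * m + 6) := by ring
      _ < 2 * R ^ (6 * m + 10) := by
          refine Nat.mul_lt_mul_of_pos_left ?_ (by norm_num)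
          exact Nat.pow_lt_pow_right (lt_of_lt_of_le (by norm_num) hR) (by omega)
      _ ≤ 2 * N := Nat.mul_le_mul_left 2 hN
  have hmoment := sum_dyadic_arc_pow_le (A := A) (Λ := 6 * Real.log R) (ν := ν) hN0 hm
    (by positivity : 0 < 2 ^ 8 * R ^ 2) hH16 huN ρ hM (fun k hk => (hρ k (hu hk)).1)
    (fun k hk => (hρ k (hu hk)).2.1) (fun k hk => (hyu k hk).1) (fun k hk => (hyu k hk).2)
    (fun k hk => by
      have h1 := Real.log_le_log (lt_of_lt_of_le one_pos (hy1 k (hu hk))) (hρ k (hu hk)).2.2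
      linarith)
    (fun q hq => by
      refine sum_arc_balancedFourier_sq_le hN0 hA hR hνR hAN hℓ hℓN hH16 (mem_Icc.1 hq).2
        (hinc q (mem_Icc.1 hq).1) _ ((filter_subset _ _).trans huN) ρ
        (fun k hk => (mem_filter.1 hk).2) (fun k hk => ?_)
      exact_mod_cast (hρ k (hu (mem_filter.1 hk).1)).2.2)
    (by linarith)
  have hpow := sum_balancedFourier_pow_le hN0 hA u
    (fun k => ‖squareSum H ((k : ℕ) / (2 * N : ℕ))‖) (fun k => norm_nonneg _) (2 * m - 1)
  rw [Nat.sub_add_cancel (by omega : 1 ≤ 2 * m)] at hpow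
  set J := Nat.log 2 (2 ^ 18 * R ^ 4) + 1 with hJ
  have hJ0 : (0 : ℝ) < J := by positivity
  have hbound := density_le_of_moment_le (N := N) (H := H) (J := J) (a := #A) (Λ := 6 * Real.log R)
    (ν := ν) (E := (1 + 2 * m * Real.log ((2 ^ 8 * R ^ 2 : ℕ) : ℝ)) ^ 2 ^ (2 * m)) hm hNR hHpos hJ0
    hAR (by
      refine (pow_le_pow_left₀ (by positivity) hsum (2 * m)).trans (hpow.trans ?_)
      refine mul_le_mul_of_nonneg_left (hmoment.trans (le_of_eq ?_)) (by positivity)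
      push_cast
      rfl)
  have hlogQ0 : 0 ≤ Real.log ((2 ^ 8 * R ^ 2 : ℕ) : ℝ) := Real.log_natCast_nonneg _
  have hfinal : (#A / N : ℝ) ≤ (4 * m + 1) * (2 ^ 28 * Real.log R ^ 3 * ν) ^ m *
      (1 + 6 * m * Real.log R) ^ 2 ^ (2 * m) := by
    refine hbound.trans ?_
    have h1 : 2 ^ 19 * (J : ℝ) ^ 2 * (6 * Real.log R) * ν ≤ 2 ^ 28 * Real.log R ^ 3 * ν := by
      refine mul_le_mul_of_nonneg_right ?_ hν0.le
      calc 2 ^ 19 * (J : ℝ) ^ 2 * (6 * Real.log R)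
          ≤ 2 ^ 19 * (8 * Real.log R) ^ 2 * (6 * Real.log R) := by gcongr
        _ = 201326592 * Real.log R ^ 3 := by ring
        _ ≤ 2 ^ 28 * Real.log R ^ 3 := by gcongr; norm_num
    have h2 : 1 + 2 * m * Real.log ((2 ^ 8 * R ^ 2 : ℕ) : ℝ) ≤ 1 + 6 * m * Real.log R := by
      have : (0 : ℝ) ≤ m := Nat.cast_nonneg m
      nlinarith
    gcongr
  have h1 : (1 : ℝ) ≤ R * (#A / N) := by
    rw [div_le_iff₀ hR0] at hα
    linarith
  exact absurd (h1.trans (mul_le_mul_of_nonneg_left hfinal hR0.le)) (not_le.2 hsmall)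

theorem pow_mul_card_le {R m : ℕ} {ν : ℝ} (hR : 2 ^ 41 ≤ R) (hν0 : 0 < ν)
    (hν : ν ≤ 1 / 2) (hνR : 1 ≤ ν * R) (hm : 1 ≤ m) (hmR : m ≤ R)
    (hsmall : R * ((4 * m + 1) * (2 ^ 28 * Real.log R ^ 3 * ν) ^ m *
      (1 + 6 * m * Real.log R) ^ 2 ^ (2 * m)) < 1) (s : ℕ) {N : ℕ} {A : Finset ℤ}
    (hA : A ⊆ Ico (0 : ℤ) N) (hdiff : ∀ x ∈ A, ∀ n : ℕ, 0 < n → x + n ^ 2 ∉ A)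
    (hN : R ^ (6 * m + 10) * (R ^ 9) ^ s ≤ N) (hAN : N ≤ R * #A) :
    (1 + ν) ^ s * #A ≤ N := by
  induction s generalizing N A with
  | zero =>
    have h1 := card_le_card hA
    rw [Int.card_Ico, sub_zero, Int.toNat_natCast] at h1
    rw [pow_zero, one_mul]
    exact_mod_cast h1
  | succ s ih =>
    have hRpos : 0 < R := lt_of_lt_of_le (by positivity) hR
    have hD : 0 < R ^ 9 := by positivity
    have hℓlow : R ^ (6 * m + 10) * (R ^ 9) ^ s ≤ N / R ^ 9 := by
      rw [Nat.le_div_iff_mul_le hD, mul_assoc, ← pow_succ]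
      exact hN
    have hY : 0 < R ^ (6 * m + 10) * (R ^ 9) ^ s := by positivity
    have hYN : R ^ (6 * m + 10) ≤ N :=
      le_trans (Nat.le_mul_of_pos_right _ (by positivity)) hN
    set ℓ := N / R ^ 9 with hℓ
    have hℓ0 : 0 < ℓ := lt_of_lt_of_le hY hℓlow
    have hℓN : ℓ * R ^ 9 ≤ N := Nat.div_mul_le_self N _
    obtain ⟨q, hq, y, hy⟩ := exists_density_increment hA hdiff hR hν0 hν hνR hm hmR hYN hAN
      hℓ0 hℓN hsmall
    set B := (range ℓ).filter fun t => y + ((q ^ 2 : ℕ) : ℤ) * (t : ℕ) ∈ A with hB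
    have hcard : #(B.image fun t : ℕ => (t : ℤ)) = #B :=
      card_image_of_injective _ Nat.cast_injective
    have hNR : (0 : ℝ) < N := by
      have : 0 < N := lt_of_lt_of_le (by positivity) hYN
      exact_mod_cast this
    have hℓR : (0 : ℝ) < ℓ := by exact_mod_cast hℓ0
    have hα : (ℓ : ℝ) ≤ R * (#A / N * ℓ) := by
      have h1 : (N : ℝ) ≤ R * #A := by exact_mod_cast hAN
      have h2 : (1 : ℝ) ≤ R * #A / N := (one_le_div hNR).2 h1
      calc (ℓ : ℝ) ≤ R * #A / N * ℓ := le_mul_of_one_le_left hℓR.le h2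
        _ = R * (#A / N * ℓ) := by ring
    have hstep := ih (N := ℓ) (A := B.image fun t : ℕ => (t : ℤ)) ?_ ?_ hℓlow ?_
    · rw [hcard] at hstep
      have h1 : (1 + ν) ^ s * ((1 + ν) * (#A / N) * ℓ) ≤ ℓ :=
        (mul_le_mul_of_nonneg_left hy.le (by positivity)).trans hstep
      have h2 : (1 + ν) ^ (s + 1) * #A / N * ℓ ≤ 1 * ℓ := by
        rw [one_mul, pow_succ]
        refine le_trans (le_of_eq ?_) h1
        ring
      exact (div_le_one hNR).1 (le_of_mul_le_mul_right h2 hℓR)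
    · intro x hx
      obtain ⟨t, ht, rfl⟩ := mem_image.1 hx
      have := mem_range.1 (mem_filter.1 ht).1
      exact mem_Ico.2 ⟨by omega, by omega⟩
    · intro x hx n hn hxn
      obtain ⟨t, ht, rfl⟩ := mem_image.1 hx
      obtain ⟨u, hu, hut⟩ := mem_image.1 hxn
      have h1 := hdiff _ (mem_filter.1 ht).2 (q * n) (by positivity)
      refine h1 ?_
      have h2 := (mem_filter.1 hu).2
      rw [hut] at h2
      convert h2 using 1
      push_cast
      ring
    · rw [hcard]
      have h1 : (ℓ : ℝ) ≤ R * #B := by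
        refine hα.trans (mul_le_mul_of_nonneg_left (le_trans ?_ hy.le) (Nat.cast_nonneg R))
        rw [mul_assoc]
        exact le_mul_of_one_le_left (by positivity) (by linarith)
      exact_mod_cast h1

theorem mul_card_lt_of_lt_pow {R m s : ℕ} {ν : ℝ} (hR : 2 ^ 41 ≤ R) (hν0 : 0 < ν)
    (hν : ν ≤ 1 / 2) (hνR : 1 ≤ ν * R) (hm : 1 ≤ m) (hmR : m ≤ R)
    (hsmall : R * ((4 * m + 1) * (2 ^ 28 * Real.log R ^ 3 * ν) ^ m *
      (1 + 6 * m * Real.log R) ^ 2 ^ (2 * m)) < 1) (hs : (R : ℝ) < (1 + ν) ^ s)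
    {N : ℕ} {A : Finset ℤ}
    (hA : A ⊆ Ico (0 : ℤ) N) (hdiff : ∀ x ∈ A, ∀ n : ℕ, 0 < n → x + n ^ 2 ∉ A)
    (hN : R ^ (6 * m + 10) * (R ^ 9) ^ s ≤ N) : R * #A < N := by
  by_contra! hAN
  have h1 := pow_mul_card_le hR hν0 hν hνR hm hmR hsmall s hA hdiff hN hAN
  have h2 : (N : ℝ) ≤ R * #A := by exact_mod_cast hAN
  have h3 : (0 : ℝ) < #A := by
    have h4 : 0 < R := lt_of_lt_of_le (by positivity) hR
    have h5 : 0 < N := lt_of_lt_of_le (by positivity) hN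
    have h6 : 0 < #A := Nat.pos_of_ne_zero fun h => by
      rw [h] at hAN
      omega
    exact_mod_cast h6
  nlinarith

theorem log_le_sq_of_le_exp {l : ℝ} (hl : 10 ^ 6 ≤ l) {R : ℕ} (hR1 : 1 ≤ R)
    (hR : (R : ℝ) ≤ Real.exp (l * Real.log l / 32)) :
    Real.log R ≤ l * Real.log l / 32 ∧ Real.log R ≤ l ^ 2 := by
  have h1 : Real.log R ≤ l * Real.log l / 32 := by
    rw [← Real.log_exp (l * Real.log l / 32)]
    exact Real.log_le_log (by exact_mod_cast hR1) hR
  have h2 := Real.log_le_sub_one_of_pos (by linarith : 0 < l)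
  exact ⟨h1, by nlinarith⟩

theorem mul_moment_factor_lt_one {l : ℝ} (hl : 10 ^ 6 ≤ l) {R m : ℕ} (hR1 : 1 ≤ R)
    (hR : (R : ℝ) ≤ Real.exp (l * Real.log l / 32)) (hm : (m : ℝ) ≤ Real.log l / 4)
    (hm' : Real.log l / 8 ≤ m) :
    R * ((4 * m + 1) * (2 ^ 28 * Real.log R ^ 3 * Real.exp (-l / 2)) ^ m *
      (1 + 6 * m * Real.log R) ^ 2 ^ (2 * m)) < 1 := by
  have hl0 : 0 < l := by linarith
  obtain ⟨-, hL⟩ := log_le_sq_of_le_exp hl hR1 hR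
  have hL0 : 0 ≤ Real.log R := Real.log_natCast_nonneg R
  have hlogl : Real.log l ≤ l - 1 := Real.log_le_sub_one_of_pos hl0
  have hsqrt := one_add_log_le_two_mul_sqrt (by linarith : 1 ≤ l)
  have hexp : Real.exp (Real.log l) = l := Real.exp_log hl0
  have hlog0 : 0 < Real.log l := Real.log_pos (by linarith)
  have hw : 1000 ≤ √l := Real.le_sqrt_of_sq_le (by linarith)
  have hww : √l * √l = l := Real.mul_self_sqrt hl0.le
  set v := Real.log l with hv
  have hm0 : (0 : ℝ) ≤ m := Nat.cast_nonneg m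
  have h1 : (4 * m + 1 : ℝ) ≤ Real.exp v := by
    have := Real.add_one_le_exp v
    linarith
  have h2 : 2 ^ 28 * Real.log R ^ 3 * Real.exp (-l / 2) ≤ Real.exp (28 + 6 * v - l / 2) := by
    have h3 : (2 : ℝ) ^ 28 ≤ Real.exp 28 := by
      have h4 : (2 : ℝ) ≤ Real.exp 1 := by
        have := Real.add_one_le_exp (1 : ℝ)
        linarith
      calc (2 : ℝ) ^ 28 ≤ Real.exp 1 ^ 28 := pow_le_pow_left₀ (by norm_num) h4 28
        _ = Real.exp 28 := by
          rw [← Real.exp_nat_mul]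
          norm_num
    have h5 : Real.log R ^ 3 ≤ Real.exp (6 * v) := by
      calc Real.log R ^ 3 ≤ (l ^ 2) ^ 3 := pow_le_pow_left₀ hL0 hL 3
        _ = Real.exp v ^ 6 := by rw [hexp]; ring
        _ = Real.exp (6 * v) := by
          rw [← Real.exp_nat_mul]
          norm_num
    have h6 : (28 : ℝ) + 6 * v - l / 2 = 28 + 6 * v + -l / 2 := by ring
    rw [h6, Real.exp_add, Real.exp_add]
    gcongr
  have h3 : (2 ^ 28 * Real.log R ^ 3 * Real.exp (-l / 2)) ^ m
      ≤ Real.exp (m * (28 + 6 * v - l / 2)) := by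
    rw [Real.exp_nat_mul]
    exact pow_le_pow_left₀ (by positivity) h2 m
  have h4 : ((2 ^ (2 * m) : ℕ) : ℝ) ≤ √l := by
    have h5 : (2 : ℝ) ≤ Real.exp 1 := by
      have := Real.add_one_le_exp (1 : ℝ)
      linarith
    calc ((2 ^ (2 * m) : ℕ) : ℝ) = 2 ^ (2 * m) := by push_cast; rfl
      _ ≤ Real.exp 1 ^ (2 * m) := pow_le_pow_left₀ (by norm_num) h5 _
      _ = Real.exp ((2 * m : ℕ) * 1) := by rw [Real.exp_nat_mul]
      _ ≤ Real.exp (v / 2) := by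
          refine Real.exp_le_exp.2 ?_
          push_cast
          linarith
      _ = √l := by
          rw [Real.exp_half, hexp]
  have h5 : (1 + 6 * m * Real.log R) ^ 2 ^ (2 * m) ≤ Real.exp (√l * (4 * v)) := by
    have h6 : 1 + 6 * m * Real.log R ≤ Real.exp (4 * v) := by
      calc 1 + 6 * m * Real.log R ≤ 1 + 6 * (v / 4) * l ^ 2 := by gcongr
        _ ≤ 1 + 6 * (l / 4) * l ^ 2 := by gcongr; linarith
        _ ≤ l ^ 4 := by
            have : 0 < l ^ 3 := by positivity
            nlinarith
        _ = Real.exp v ^ 4 := by rw [hexp]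
        _ = Real.exp (4 * v) := by
          rw [← Real.exp_nat_mul]
          norm_num
    calc (1 + 6 * m * Real.log R) ^ 2 ^ (2 * m)
        ≤ Real.exp (4 * v) ^ 2 ^ (2 * m) := pow_le_pow_left₀ (by positivity) h6 _
      _ = Real.exp ((2 ^ (2 * m) : ℕ) * (4 * v)) := by rw [Real.exp_nat_mul]
      _ ≤ Real.exp (√l * (4 * v)) :=
          Real.exp_le_exp.2 (mul_le_mul_of_nonneg_right h4 (by linarith))
  calc R * ((4 * m + 1) * (2 ^ 28 * Real.log R ^ 3 * Real.exp (-l / 2)) ^ m *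
        (1 + 6 * m * Real.log R) ^ 2 ^ (2 * m))
      ≤ Real.exp (l * v / 32) * (Real.exp v * Real.exp (m * (28 + 6 * v - l / 2)) *
        Real.exp (√l * (4 * v))) := by gcongr
    _ = Real.exp (l * v / 32 + (v + m * (28 + 6 * v - l / 2) + √l * (4 * v))) := by
        rw [Real.exp_add, Real.exp_add, Real.exp_add]
    _ < 1 := by
        rw [Real.exp_lt_one_iff]
        have h6 : (m : ℝ) * (28 + 6 * v) ≤ v / 4 * (28 + 6 * v) := by gcongr
        have h7 : v / 8 * (l / 2) ≤ m * (l / 2) := by gcongr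
        have h8 : 8 + 3 / 2 * v + 4 * √l < l / 32 := by nlinarith
        have h9 := mul_lt_mul_of_pos_left h8 hlog0
        linarith

theorem pow_mul_pow_le_of_log_le {N R a b : ℕ} (hN : 0 < N) (hR : 1 ≤ R)
    (h : (a + 9 * b) * Real.log R ≤ Real.log N) : R ^ a * (R ^ 9) ^ b ≤ N := by
  have hR0 : (0 : ℝ) < R := by exact_mod_cast hR
  have hN0 : (0 : ℝ) < N := by exact_mod_cast hN
  have h1 : ((R ^ a * (R ^ 9) ^ b : ℕ) : ℝ) ≤ N := by
    rw [← Real.log_le_log_iff (by positivity) hN0]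
    push_cast
    rw [← pow_mul, ← pow_add, Real.log_pow]
    push_cast
    exact h
  exact_mod_cast h1

theorem lt_one_add_pow {x ν : ℝ} {s : ℕ} (hx : 1 ≤ x) (hν0 : 0 < ν) (hν : ν ≤ 1 / 2)
    (hs : 2 * Real.log x / ν < s) : x < (1 + ν) ^ s := by
  have hx0 : 0 < x := by linarith
  rw [← Real.log_lt_log_iff hx0 (by positivity), Real.log_pow]
  have h1 := Real.one_sub_inv_le_log_of_pos (by linarith : 0 < 1 + ν)
  have h2 : ν / 2 ≤ 1 - (1 + ν)⁻¹ := by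
    rw [← sub_nonneg]
    have : 1 - (1 + ν)⁻¹ - ν / 2 = ν * (1 - ν) / (2 * (1 + ν)) := by
      field_simp
      ring
    rw [this]
    have : 0 ≤ 1 - ν := by linarith
    positivity
  rw [div_lt_iff₀ hν0] at hs
  have h3 : (0 : ℝ) ≤ s := Nat.cast_nonneg s
  nlinarith

theorem card_le_div_exp {N : ℕ} (hl : 10 ^ 6 ≤ Real.log (Real.log N))
    (hv : 32 ≤ Real.log (Real.log (Real.log N))) {A : Finset ℤ} (hA : A ⊆ Ico (0 : ℤ) N)
    (hdiff : ∀ x ∈ A, ∀ n : ℕ, 0 < n → x + n ^ 2 ∉ A) :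
    (#A : ℝ) ≤ N / Real.exp (Real.log (Real.log N) * Real.log (Real.log (Real.log N)) / 64) := by
  have hN : 0 < N := by
    by_contra! h
    have h0 : N = 0 := by omega
    rw [h0] at hl
    norm_num at hl
  have hlogN : 0 < Real.log N := by
    by_contra! h
    have h0 : Real.log N = 0 := le_antisymm h (Real.log_natCast_nonneg N)
    rw [h0] at hl
    norm_num at hl
  have hexp : Real.exp (Real.log (Real.log N)) = Real.log N := Real.exp_log hlogN
  set l := Real.log (Real.log N) with hldef
  set v := Real.log l with hvdef
  have hl0 : 0 < l := by linarith
  have hvl : v ≤ l - 1 := Real.log_le_sub_one_of_pos hl0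
  have hlv : 32 * 10 ^ 6 ≤ l * v := by nlinarith
  set E := Real.exp (l * v / 64) with hE
  have hE1 : l * v / 64 + 1 ≤ E := Real.add_one_le_exp _
  set R := ⌈E⌉₊ with hRdef
  have hER : E ≤ R := Nat.le_ceil E
  have hR1 : 1 ≤ R := by
    have : (1 : ℝ) ≤ R := by linarith
    exact_mod_cast this
  have hRup : (R : ℝ) ≤ Real.exp (l * v / 32) := by
    have h1 := Nat.ceil_lt_add_one (Real.exp_pos (l * v / 64)).le
    have h2 : Real.exp (l * v / 32) = E * E := by
      rw [hE, ← Real.exp_add]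
      congr 1
      ring
    rw [h2]
    rw [← hE, ← hRdef] at h1
    nlinarith
  set m := ⌊v / 4⌋₊ with hmdef
  have hmup : (m : ℝ) ≤ v / 4 := Nat.floor_le (by linarith)
  have hmlow : v / 8 ≤ m := by
    have := Nat.lt_floor_add_one (v / 4)
    linarith
  obtain ⟨hL, hL2⟩ := log_le_sq_of_le_exp hl hR1 hRup
  have hL0 : 0 ≤ Real.log R := Real.log_natCast_nonneg R
  set ν := Real.exp (-l / 2) with hν
  have hν0 : 0 < ν := Real.exp_pos _
  have hνinv : ν⁻¹ = Real.exp (l / 2) := by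
    rw [hν, ← Real.exp_neg]
    congr 1
    ring
  have hνhalf : ν ≤ 1 / 2 := by
    have h1 := Real.add_one_le_exp (l / 2)
    rw [← hνinv] at h1
    rw [← inv_inv ν, ← one_div]
    exact one_div_le_one_div_of_le (by norm_num) (by linarith)
  set s := ⌊2 * Real.log R / ν⌋₊ + 1 with hs
  have hslow : 2 * Real.log R / ν < s := by
    rw [hs]
    push_cast
    exact Nat.lt_floor_add_one _
  have hsup : (s : ℝ) ≤ 2 * Real.log R * Real.exp (l / 2) + 1 := by
    rw [hs, ← hνinv, ← div_eq_mul_inv]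
    push_cast
    gcongr
    exact Nat.floor_le (by positivity)
  have hmain : R * #A < N := by
    refine mul_card_lt_of_lt_pow (m := m) (s := s) (ν := ν) ?_ hν0 hνhalf ?_ ?_ ?_
      (mul_moment_factor_lt_one hl hR1 hRup hmup hmlow)
      (lt_one_add_pow (by exact_mod_cast hR1) hν0 hνhalf hslow) hA hdiff
      (pow_mul_pow_le_of_log_le hN hR1 ?_)
    · have h1 : (2 : ℝ) ^ 41 ≤ Real.exp 41 := by
        have h4 : (2 : ℝ) ≤ Real.exp 1 := by
          have := Real.add_one_le_exp (1 : ℝ)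
          linarith
        calc (2 : ℝ) ^ 41 ≤ Real.exp 1 ^ 41 := pow_le_pow_left₀ (by norm_num) h4 41
          _ = Real.exp 41 := by
            rw [← Real.exp_nat_mul]
            norm_num
      have h2 : (2 : ℝ) ^ 41 ≤ R :=
        h1.trans ((Real.exp_le_exp.2 (by linarith)).trans hER)
      exact_mod_cast h2
    · have h1 : Real.exp (l / 2) ≤ R := (Real.exp_le_exp.2 (by nlinarith)).trans hER
      calc (1 : ℝ) = ν * ν⁻¹ := (mul_inv_cancel₀ hν0.ne').symm
        _ ≤ ν * R := by
          rw [hνinv]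
          exact mul_le_mul_of_nonneg_left h1 hν0.le
    · have h1 : (0 : ℝ) < m := by linarith
      exact_mod_cast h1
    · have h1 : (m : ℝ) ≤ R := by nlinarith
      exact_mod_cast h1
    · have h1 := Real.pow_div_factorial_le_exp (x := l / 2) (by linarith) 5
      have h2 : l ^ 4 * 200 ≤ Real.exp (l / 2) := by
        refine le_trans ?_ h1
        have h3 : (l / 2) ^ 5 / (Nat.factorial 5 : ℝ) = l ^ 4 * (l / 3840) := by
          rw [show Nat.factorial 5 = 120 from rfl]
          push_cast
          ring
        rw [h3]
        refine mul_le_mul_of_nonneg_left ?_ (by positivity)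
        linarith
      set X := Real.exp (l / 2) with hX
      have hX2 : Real.log N = X * X := by
        rw [← hexp, hX, ← Real.exp_add]
        congr 1
        ring
      have hl4 : 1 ≤ l ^ 4 := one_le_pow₀ (by linarith)
      have hX1 : 1 ≤ X := by linarith
      have h4 : ((6 * m + 10 : ℕ) : ℝ) + 9 * s ≤ 200 * l ^ 2 * X := by
        push_cast
        have h5 : 2 * Real.log R * X ≤ 2 * l ^ 2 * X := by gcongr
        have h6 : l ≤ l ^ 2 := le_self_pow₀ (by linarith) (by norm_num)
        have h7 : l ^ 2 ≤ l ^ 2 * X := le_mul_of_one_le_right (by positivity) hX1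
        linarith
      calc (((6 * m + 10 : ℕ) : ℝ) + 9 * s) * Real.log R ≤ 200 * l ^ 2 * X * l ^ 2 := by gcongr
        _ = l ^ 4 * 200 * X := by ring
        _ ≤ X * X := by gcongr
        _ = Real.log N := hX2.symm
  have h1 : (R : ℝ) * #A ≤ N := by exact_mod_cast hmain.le
  rw [le_div_iff₀ (Real.exp_pos _), mul_comm]
  exact (mul_le_mul_of_nonneg_right hER (Nat.cast_nonneg _)).trans h1

theorem card_le_div_exp_of_noSquareDiff {N : ℕ} (hl : 10 ^ 6 ≤ Real.log (Real.log N))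
    (hv : 32 ≤ Real.log (Real.log (Real.log N))) {A : Finset ℕ} (hA : A ⊆ Finset.Icc 1 N)
    (hdiff : NoSquareDiff A) :
    (#A : ℝ) ≤ N / Real.exp (Real.log (Real.log N) * Real.log (Real.log (Real.log N)) / 64) := by
  have hinj : Function.Injective fun a : ℕ => (a : ℤ) - 1 := fun a b h => by
    have : (a : ℤ) - 1 = b - 1 := h
    omega
  rw [← card_image_of_injective A hinj]
  refine card_le_div_exp hl hv ?_ ?_
  · intro x hx
    obtain ⟨a, ha, rfl⟩ := mem_image.1 hx
    have := mem_Icc.1 (hA ha)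
    exact mem_Ico.2 ⟨by omega, by omega⟩
  · intro x hx n hn hxn
    obtain ⟨b, hb, rfl⟩ := mem_image.1 hx
    obtain ⟨a, ha, hab⟩ := mem_image.1 hxn
    refine hdiff a ha b hb n hn ?_
    have h1 : (a : ℤ) = ((b + n ^ 2 : ℕ) : ℤ) := by
      push_cast
      linarith
    exact_mod_cast h1

theorem statement_0 :
    ∃ c > (0 : ℝ), ∃ C > (0 : ℝ), ∃ N₀ : ℕ, ∀ N : ℕ, N₀ ≤ N →
      ∀ A : Finset ℕ, A ⊆ Finset.Icc 1 N → NoSquareDiff A →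
        (A.card : ℝ) ≤ C * N / (Real.log N) ^ (c * Real.log (Real.log (Real.log N))) := by
  have hlog : Filter.Tendsto (fun N : ℕ => Real.log (Real.log N)) Filter.atTop Filter.atTop :=
    Real.tendsto_log_atTop.comp (Real.tendsto_log_atTop.comp tendsto_natCast_atTop_atTop)
  obtain ⟨N₀, hN₀⟩ := Filter.eventually_atTop.1 ((hlog.eventually_ge_atTop (10 ^ 6)).and
    ((Real.tendsto_log_atTop.comp hlog).eventually_ge_atTop 32))
  refine ⟨1 / 64, by norm_num, 1, one_pos, N₀, fun N hN A hA hdiff => ?_⟩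
  obtain ⟨hl, hv⟩ := hN₀ N hN
  refine (card_le_div_exp_of_noSquareDiff hl hv hA hdiff).trans (le_of_eq ?_)
  have hpos : 0 < Real.log N := by
    refine lt_of_le_of_ne (Real.log_natCast_nonneg N) fun h => ?_
    rw [← h] at hl
    norm_num at hl
  rw [one_mul, Real.rpow_def_of_pos hpos]
  congr 2
  ring
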